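/- Let (A, 𝔪) be a two-dimensional excellent normal local domain over an algebraically closed field and let I₁, …, I_r ⊆ A be 𝔪-primary ideals such that each Rees algebra 𝓡(I_i) = A[I_i t] is a Cohen–Macaulay normal domain. Then the multi-Rees algebra 𝓡(I₁,…,I_r) = A[I₁t₁, …, I_r t_r] is a Cohen–Macaulay normal domain. -/

import Mathlib

/-! Auxiliary definitions.

Mathlib does not yet know about excellent rings; the excellence hypothesis of the paper
is used only to guarantee the existence of resolutions and of the normal Hilbert
polynomial, which we hypothesize directly where needed. -/

/-- The length `ℓ_R(M)` of a module, defined as the Krull dimension of its lattice of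
submodules (for modules of finite length this is the usual Jordan–Hölder length). -/
noncomputable def moduleLength (R M : Type*) [CommRing R] [AddCommGroup M] [Module R M] :
    WithBot ℕ∞ :=
  Order.krullDim (Submodule R M)

/-- `x` is integral over the ideal `I`: it satisfies an equation of integral dependence
`x ^ n + c 1 * x ^ (n-1) + ⋯ + c n = 0` with `c i ∈ I ^ i`. -/
def IsIntegralOverIdeal {A : Type*} [CommRing A] (I : Ideal A) (x : A) : Prop :=
  ∃ n : ℕ, 0 < n ∧ ∃ c : ℕ → A, (∀ i, 1 ≤ i → i ≤ n → c i ∈ I ^ i) ∧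
    x ^ n + ∑ i ∈ Finset.Icc 1 n, c i * x ^ (n - i) = 0

/-- The integral closure `J̄` of an ideal `J`: the set of elements integral over `J`
(this set is an ideal; we take the ideal it generates). -/
noncomputable def idealIntegralClosure {A : Type*} [CommRing A] (I : Ideal A) : Ideal A :=
  Ideal.span {x | IsIntegralOverIdeal I x}

/-- An ideal is integrally closed if it contains every element integral over it. -/
def IdealIsIntegrallyClosed {A : Type*} [CommRing A] (I : Ideal A) : Prop :=
  ∀ x, IsIntegralOverIdeal I x → x ∈ I

/-- A Noetherian local ring is Cohen–Macaulay if some regular sequence contained in the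
maximal ideal has length equal to the Krull dimension of the ring. -/
def IsCohenMacaulayLocalRing (R : Type*) [CommRing R] : Prop :=
  IsNoetherianRing R ∧ ∃ h : IsLocalRing R,
    letI := h
    ∃ rs : List R, (∀ x ∈ rs, x ∈ IsLocalRing.maximalIdeal R) ∧
      RingTheory.Sequence.IsRegular R rs ∧ (rs.length : WithBot ℕ∞) = ringKrullDim R

/-- A Noetherian ring is Cohen–Macaulay if all its localizations at primes are
Cohen–Macaulay local rings. -/
def IsCohenMacaulayRing (R : Type*) [CommRing R] : Prop :=
  IsNoetherianRing R ∧ ∀ (P : Ideal R) (hP : P.IsPrime),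
    letI := hP
    IsCohenMacaulayLocalRing (Localization.AtPrime P)

/-- A Cohen–Macaulay normal domain. -/
def IsCMNormalDomain (R : Type*) [CommRing R] : Prop :=
  IsCohenMacaulayRing R ∧ IsDomain R ∧ IsIntegrallyClosed R

/-- The multi-Rees algebra `A[I₁t₁, …, I_r t_r]`: the `A`-subalgebra of the polynomial
ring `A[t₁, …, t_r]` generated by the elements `a·tᵢ` with `a ∈ Iᵢ`. -/
noncomputable def multiReesAlgebra {A : Type*} [CommRing A] {r : ℕ} (I : Fin r → Ideal A) :
    Subalgebra A (MvPolynomial (Fin r) A) :=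
  Algebra.adjoin A (⋃ i, (fun a => MvPolynomial.C a * MvPolynomial.X i) '' ((I i : Set A)))

namespace MR
open RingTheory.Sequence CategoryTheory Abelian Limits Pointwise

/-- There is an `M`-regular sequence of length `n` in the maximal ideal. -/
def DepthGE (R : Type*) [CommRing R] [IsLocalRing R] (M : Type*) [AddCommGroup M] [Module R M]
    (n : ℕ) : Prop :=
  ∃ rs : List R, rs.length = n ∧ (∀ r ∈ rs, r ∈ IsLocalRing.maximalIdeal R) ∧ IsRegular M rs

universe u

lemma smul_top_lt {R : Type*} [CommRing R] [IsLocalRing R] {M : Type*} [AddCommGroup M] [Module R M]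
    [Module.Finite R M] [Nontrivial M] :
    (IsLocalRing.maximalIdeal R) • (⊤ : Submodule R M) < ⊤ := by
  refine lt_of_le_of_ne le_top (Ne.symm ?_)
  exact Submodule.top_ne_ideal_smul_of_le_jacobson_annihilator
    (IsLocalRing.maximalIdeal_le_jacobson _)

lemma DepthGE.quot {R : Type u} [CommRing R] [IsLocalRing R] [IsNoetherianRing R]
    {M : Type u} [AddCommGroup M] [Module R M] [Module.Finite R M] {n : ℕ}
    (h : DepthGE R M (n + 1)) {x : R} (hx : x ∈ IsLocalRing.maximalIdeal R)
    (hreg : IsSMulRegular M x) : DepthGE R (QuotSMulTop x M) n := by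
  obtain ⟨rs, hl, hm, hr⟩ := h
  have : Nontrivial M := hr.nontrivial
  have : Nontrivial (QuotSMulTop x M) :=
    nontrivial_quotSMulTop_of_mem_maximalIdeal _ hx
  have h0 : ∃ rs : List R, rs.length = n + 1 ∧ (∀ r ∈ rs, r ∈ IsLocalRing.maximalIdeal R) ∧
    IsRegular (ModuleCat.of R M) rs := ⟨rs, hl, hm, hr⟩
  have h1 := ((ModuleCat.exists_isRegular_tfae (IsLocalRing.maximalIdeal R) (n+1)
    (ModuleCat.of R M) smul_top_lt).out 3 1).mp h0
  refine ((ModuleCat.exists_isRegular_tfae (IsLocalRing.maximalIdeal R) n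
    (ModuleCat.of R (QuotSMulTop x M)) smul_top_lt).out 1 3).mp ?_
  intro i hi
  have zero1 := AddCommGrpCat.isZero_of_iff_subsingleton.mpr (h1 i (by omega))
  have zero2 := AddCommGrpCat.isZero_of_iff_subsingleton.mpr (h1 (i + 1) (by omega))
  exact AddCommGrpCat.subsingleton_of_isZero <| ShortComplex.Exact.isZero_of_both_zeros
        ((Ext.covariant_sequence_exact₃' _
          (IsSMulRegular.smulShortComplex_shortExact (M := ModuleCat.of R M) hreg)) i (i + 1) rfl)
        (zero1.eq_zero_of_src _) (zero2.eq_zero_of_tgt _)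

lemma dim_quot_lt {R : Type*} [CommRing R] {p q : Ideal R} [p.IsPrime] [q.IsPrime]
    (hpq : p ≤ q) {x : R} (hx : x ∈ q) (hx' : x ∉ p) :
    ringKrullDim (R ⧸ q) + 1 ≤ ringKrullDim (R ⧸ p) := by
  refine ringKrullDim_succ_le_of_surjective (Ideal.Quotient.factor hpq)
    (Ideal.Quotient.factor_surjective hpq) (r := Ideal.Quotient.mk p x) ?_ ?_
  · rw [mem_nonZeroDivisors_iff_ne_zero]
    rwa [Ne, Ideal.Quotient.eq_zero_iff_mem]
  · rw [Ideal.Quotient.factor_mk, Ideal.Quotient.eq_zero_iff_mem]; exact hx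

lemma length_le_dim {R : Type*} [CommRing R] [IsLocalRing R] [IsNoetherianRing R]
    {M : Type*} [AddCommGroup M] [Module R M] [Module.Finite R M] (rs : List R)
    (hm : ∀ r ∈ rs, r ∈ IsLocalRing.maximalIdeal R) (hr : IsRegular M rs)
    {p : Ideal R} (hp : IsAssociatedPrime p M) :
    (rs.length : WithBot ℕ∞) ≤ ringKrullDim (R ⧸ p) := by
  induction rs generalizing M p with
  | nil =>
    have := hp.isPrime
    simpa using ringKrullDim_nonneg_of_nontrivial
  | cons x rs ih =>
    rw [isRegular_cons_iff] at hr
    obtain ⟨hx, hr⟩ := hr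
    have := hp.isPrime
    obtain ⟨_, m0, hm0⟩ := (isAssociatedPrime_iff.mp hp)
    have hm0' : ∀ r : R, r ∈ p ↔ r • m0 = 0 := by
      intro r; rw [hm0]; simp [Submodule.mem_colon_singleton]
    have hm0ne : m0 ≠ 0 := by
      rintro rfl
      exact this.ne_top (Ideal.eq_top_of_isUnit_mem _ ((hm0' 1).2 (by simp)) isUnit_one)
    have hxp : x ∉ p := fun h => hm0ne (hx (by simpa using (hm0' x).1 h))
    let N : Submodule R M :=
      { carrier := {m | ∀ r ∈ p, r • m = 0}
        add_mem' := fun {a b} ha hb r hr => by rw [smul_add, ha r hr, hb r hr, add_zero]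
        zero_mem' := fun r _ => smul_zero r
        smul_mem' := fun c m hm r hr => by rw [smul_comm, hm r hr, smul_zero] }
    have hex : ∃ n ∈ N, n ∉ x • (⊤ : Submodule R M) := by
      by_contra! hcon
      have hN : N ≤ (IsLocalRing.maximalIdeal R) • N := by
        intro n hn
        obtain ⟨m', -, rfl⟩ := (Submodule.mem_smul_pointwise_iff_exists _ _ _).1 (hcon n hn)
        refine Submodule.smul_mem_smul (hm x (by simp)) ?_
        intro r hr'
        apply hx
        have := hn r hr'
        simp only [smul_zero]
        rw [smul_comm]; exact this
      have hfg : N.FG := IsNoetherian.noetherian N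
      have := Submodule.eq_bot_of_le_smul_of_le_jacobson_bot _ _ hfg hN
        (IsLocalRing.maximalIdeal_le_jacobson _)
      have hm0N : m0 ∈ N := fun r hr => (hm0' r).1 hr
      rw [this] at hm0N
      exact hm0ne (by simpa using hm0N)
    obtain ⟨n, hnN, hn⟩ := hex
    let nb : QuotSMulTop x M := Submodule.Quotient.mk n
    have hnb : nb ≠ 0 := by
      intro h; exact hn ((Submodule.Quotient.mk_eq_zero _).1 h)
    obtain ⟨q, hq, hle⟩ := exists_le_isAssociatedPrime_of_isNoetherianRing R nb hnb
    have := hq.isPrime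
    have hle' : ∀ r : R, r • nb = 0 → r ∈ q := by
      intro r h
      apply hle
      simpa [Submodule.mem_colon_singleton] using h
    have hpq : p ≤ q := fun r hr => hle' r (by
      change Submodule.Quotient.mk (r • n) = _
      rw [hnN r hr]; rfl)
    have hxq : x ∈ q := hle' x (by
      change Submodule.Quotient.mk (x • n) = _
      rw [Submodule.Quotient.mk_eq_zero]
      exact Submodule.smul_mem_pointwise_smul _ _ _ trivial)
    have h1 := ih (fun r hr => hm r (by simp [hr])) hr hq
    have h2 := dim_quot_lt hpq hxq hxp
    push_cast [List.length_cons]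
    refine le_trans ?_ h2
    gcongr

lemma DepthGE.le_dim {R : Type*} [CommRing R] [IsLocalRing R] [IsNoetherianRing R]
    {M : Type*} [AddCommGroup M] [Module R M] [Module.Finite R M] {n : ℕ} (h : DepthGE R M n)
    {p : Ideal R} (hp : IsAssociatedPrime p M) :
    (n : WithBot ℕ∞) ≤ ringKrullDim (R ⧸ p) := by
  obtain ⟨rs, rfl, hm, hr⟩ := h
  exact length_le_dim rs hm hr hp

end MR

namespace MR
open RingTheory.Sequence Pointwise

universe u

lemma dim_le_length {S : Type*} [CommRing S] [IsLocalRing S] [IsNoetherianRing S] (rs : List S)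
    (hm : ∀ r ∈ rs, r ∈ IsLocalRing.maximalIdeal S)
    (h : ∀ p : Ideal S, p.IsPrime → (∀ r ∈ rs, r ∈ p) → p = IsLocalRing.maximalIdeal S) :
    ringKrullDim S ≤ rs.length := by
  classical
  rw [← IsLocalRing.maximalIdeal_height_eq_ringKrullDim]
  have hmin : IsLocalRing.maximalIdeal S ∈ (Ideal.span (rs.toFinset : Set S)).minimalPrimes := by
      refine ⟨⟨inferInstance, ?_⟩, ?_⟩
      · rw [Ideal.span_le]
        intro r hr
        exact hm r (by simpa using hr)
      · rintro q ⟨hq, hle⟩ _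
        rw [h q hq (fun r hr => hle (Ideal.subset_span (by simpa using hr)))]
  have h1 := Ideal.height_le_card_of_mem_minimalPrimes_span_finset hmin
  have h2 : (rs.toFinset.card : ℕ∞) ≤ rs.length := by exact_mod_cast rs.toFinset_card_le
  exact_mod_cast h1.trans h2

lemma maximalIdeal_quot {R : Type*} [CommRing R] [IsLocalRing R] (p : Ideal R) [Nontrivial (R ⧸ p)] :
    have : IsLocalRing (R ⧸ p) := IsLocalRing.of_surjective' _ Ideal.Quotient.mk_surjective
    ∀ x : R, Ideal.Quotient.mk p x ∈ IsLocalRing.maximalIdeal (R ⧸ p) ↔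
      x ∈ IsLocalRing.maximalIdeal R := by
  intro x
  have : IsLocalRing (R ⧸ p) := IsLocalRing.of_surjective' _ Ideal.Quotient.mk_surjective
  have : IsLocalHom (Ideal.Quotient.mk p) := .of_surjective _ Ideal.Quotient.mk_surjective
  simp [IsLocalRing.mem_maximalIdeal, mem_nonunits_iff, isUnit_map_iff]

/-- Systems of parameters are regular sequences when the depth is large enough. -/
lemma sop_regular {R : Type u} [CommRing R] [IsLocalRing R] [IsNoetherianRing R]
    {M : Type u} [AddCommGroup M] [Module R M] [Module.Finite R M] (rs : List R)
    (hm : ∀ r ∈ rs, r ∈ IsLocalRing.maximalIdeal R)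
    (hD : DepthGE R M rs.length)
    (h : ∀ p : Ideal R, p.IsPrime → Module.annihilator R M ≤ p → (∀ r ∈ rs, r ∈ p) →
      p = IsLocalRing.maximalIdeal R) :
    IsWeaklyRegular M rs := by
  induction rs generalizing M with
  | nil => simp
  | cons x rs ih =>
    have hx : IsSMulRegular M x := by
      by_contra hx
      have : x ∈ ⋃ p ∈ associatedPrimes R M, (p : Set R) := by
        rw [biUnion_associatedPrimes_eq_compl_regular]; exact hx
      simp only [Set.mem_iUnion] at this
      obtain ⟨p, hp, hxp⟩ := this
      have := hp.isPrime
      have h1 := hD.le_dim hp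
      have : IsLocalRing (R ⧸ p) := IsLocalRing.of_surjective' _ Ideal.Quotient.mk_surjective
      have hmax := maximalIdeal_quot p
      have h2 := dim_le_length (S := R ⧸ p) (rs.map (Ideal.Quotient.mk p)) (by
          intro r hr
          obtain ⟨r, hr', rfl⟩ := List.mem_map.1 hr
          exact (hmax r).2 (hm r (by simp [hr']))) (by
          intro q hq hrs
          have h3 := h (q.comap (Ideal.Quotient.mk p)) (Ideal.comap_isPrime _ q) (by
              intro z hz
              rw [Ideal.mem_comap, Ideal.Quotient.eq_zero_iff_mem.2 (hp.annihilator_le (by rwa [Submodule.annihilator_top]))]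
              exact q.zero_mem) (by
              intro r hr
              rw [List.mem_cons] at hr
              rcases hr with rfl | hr
              · rw [Ideal.mem_comap, Ideal.Quotient.eq_zero_iff_mem.2 hxp]; exact q.zero_mem
              · exact hrs _ (List.mem_map_of_mem hr))
          ext z
          obtain ⟨z, rfl⟩ := Ideal.Quotient.mk_surjective z
          rw [hmax, ← h3]; rfl)
      rw [List.length_map] at h2
      have := h1.trans h2
      rw [List.length_cons] at this
      have h5 : rs.length + 1 ≤ rs.length := by exact_mod_cast this
      omega
    refine IsWeaklyRegular.cons hx (ih (fun r hr => hm r (by simp [hr]))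
      (DepthGE.quot hD (hm x (by simp)) hx) ?_)
    intro p hp hann hrs
    refine h p hp (le_trans ?_ hann) ?_
    · intro r hr
      rw [Module.mem_annihilator] at hr ⊢
      intro m
      obtain ⟨m, rfl⟩ := Submodule.Quotient.mk_surjective _ m
      rw [← Submodule.Quotient.mk_smul, hr]; rfl
    · intro r hr
      rw [List.mem_cons] at hr
      rcases hr with rfl | hr
      · apply hann
        rw [Module.mem_annihilator]
        intro m
        obtain ⟨m, rfl⟩ := Submodule.Quotient.mk_surjective _ m
        rw [← Submodule.Quotient.mk_smul, Submodule.Quotient.mk_eq_zero]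
        exact Submodule.smul_mem_pointwise_smul _ _ _ trivial
      · exact hrs r hr

lemma exists_regular_in_prime {R : Type u} [CommRing R] [IsLocalRing R] [IsNoetherianRing R]
    {M : Type u} [AddCommGroup M] [Module R M] [Module.Finite R M] {n k : ℕ}
    (hD : DepthGE R M n) (p : Ideal R) [p.IsPrime] (hk : ringKrullDim (R ⧸ p) + k ≤ n) :
    ∃ rs : List R, rs.length = k ∧ (∀ r ∈ rs, r ∈ p) ∧ IsWeaklyRegular M rs := by
  induction k generalizing M n with
  | zero => exact ⟨[], by simp⟩
  | succ k ih =>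
    have h0 : (0 : WithBot ℕ∞) ≤ ringKrullDim (R ⧸ p) := ringKrullDim_nonneg_of_nontrivial
    obtain ⟨n, rfl⟩ : ∃ n', n = n' + 1 := by
      have : ((k + 1 : ℕ) : WithBot ℕ∞) ≤ n :=
        le_trans (by simpa using add_le_add_left h0 ((k + 1 : ℕ) : WithBot ℕ∞)) hk
      have : k + 1 ≤ n := by exact_mod_cast this
      exact ⟨n - 1, by omega⟩
    have hex : ∃ x ∈ p, IsSMulRegular M x := by
      by_contra! hcon
      have hsub : (p : Set R) ⊆ ⋃ q ∈ associatedPrimes R M, (q : Set R) := by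
        rw [biUnion_associatedPrimes_eq_compl_regular]
        intro x hx; exact hcon x hx
      rw [Ideal.subset_union_prime_finite (associatedPrimes.finite R M) ⊥ ⊥
        (fun q hq _ _ => hq.isPrime)] at hsub
      obtain ⟨q, hq, hpq⟩ := hsub
      have h1 := hD.le_dim hq
      have h2 : ringKrullDim (R ⧸ q) ≤ ringKrullDim (R ⧸ p) :=
        ringKrullDim_le_of_surjective _ (Ideal.Quotient.factor_surjective hpq)
      have h3 : ((n + 1 : ℕ) : WithBot ℕ∞) + (k + 1 : ℕ) ≤ (n + 1 : ℕ) :=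
        le_trans (by gcongr; exact h1.trans h2) hk
      have : n + 1 + (k + 1) ≤ n + 1 := by exact_mod_cast h3
      omega
    obtain ⟨x, hx, hreg⟩ := hex
    obtain ⟨rs, h1, h2, h3⟩ := ih (hD.quot (IsLocalRing.le_maximalIdeal_of_isPrime p hx) hreg) (by
      have h4 : ringKrullDim (R ⧸ p) + k + 1 ≤ (n : WithBot ℕ∞) + 1 := by
        rw [add_assoc]; exact_mod_cast hk
      exact (ENat.WithBot.add_le_add_one_right_iff).1 h4)
    exact ⟨x :: rs, by simp [h1], by simpa [hx] using h2, IsWeaklyRegular.cons hreg h3⟩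

lemma height_add_dim_le {R : Type*} [CommRing R] (p : Ideal R) [hp : p.IsPrime] :
    (p.height : WithBot ℕ∞) + ringKrullDim (R ⧸ p) ≤ ringKrullDim R := by
  let P : PrimeSpectrum R := ⟨p, hp⟩
  have : Nonempty (PrimeSpectrum R) := ⟨P⟩
  have h1 : ringKrullDim (R ⧸ p) = (Order.coheight P : WithBot ℕ∞) := by
    rw [Order.coheight_eq_krullDim_Ici, ringKrullDim_quotient]
    rfl
  have h2 : p.height = Order.height P := by
    exact PrimeSpectrum.height_eq_orderHeight P
  rw [h1, h2, ringKrullDim, Order.krullDim_eq_iSup_height_add_coheight_of_nonempty]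
  norm_cast
  exact le_iSup (fun a : PrimeSpectrum R => Order.height a + Order.coheight a) P

end MR

namespace MR
open RingTheory.Sequence Pointwise

universe u

lemma cm_of_regular {R : Type*} [CommRing R] [IsLocalRing R] [IsNoetherianRing R] (rs : List R)
    (hm : ∀ r ∈ rs, r ∈ IsLocalRing.maximalIdeal R) (hr : IsWeaklyRegular R rs)
    (hd : ringKrullDim R ≤ rs.length) : IsCohenMacaulayLocalRing R := by
  refine ⟨inferInstance, inferInstance, rs, hm, ?_, ?_⟩
  · exact IsRegular.of_isWeaklyRegular_of_mem_maximalIdeal _ hm hr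
  · have h := IsRegular.of_isWeaklyRegular_of_mem_maximalIdeal _ hm hr
    refine le_antisymm ?_ hd
    rw [← ringKrullDim_add_length_eq_ringKrullDim_of_isRegular rs h]
    have : Nontrivial (R ⧸ Ideal.ofList rs) := by
      apply Ideal.Quotient.nontrivial_iff.2
      intro h0
      have := h.2
      simp [h0] at this
    have h0 : (0 : WithBot ℕ∞) ≤ ringKrullDim (R ⧸ Ideal.ofList rs) :=
      ringKrullDim_nonneg_of_nontrivial
    calc (rs.length : WithBot ℕ∞) = 0 + rs.length := by simp
      _ ≤ _ := by gcongr

lemma cm_depth {R : Type*} [CommRing R] (h : IsCohenMacaulayLocalRing R) :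
    ∃ _ : IsLocalRing R, IsNoetherianRing R ∧ ∃ n : ℕ, DepthGE R R n ∧ ringKrullDim R = n := by
  obtain ⟨h1, h2, rs, h3, h4, h5⟩ := h
  exact ⟨h2, h1, rs.length, ⟨rs, rfl, h3, h4⟩, h5.symm⟩

lemma cm_of_ringEquiv {R S : Type*} [CommRing R] [CommRing S] (e : R ≃+* S)
    (h : IsCohenMacaulayLocalRing R) : IsCohenMacaulayLocalRing S := by
  obtain ⟨h1, h2, rs, h3, h4, h5⟩ := h
  have : Nontrivial S := e.symm.toEquiv.nontrivial
  have : IsLocalRing S := IsLocalRing.of_surjective' (f := (e : R →+* S)) e.surjective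
  have : IsNoetherianRing S := isNoetherianRing_of_ringEquiv R e
  refine cm_of_regular (rs.map e) ?_ ?_ ?_
  · intro r hr
    obtain ⟨r, hr', rfl⟩ := List.mem_map.1 hr
    have := h3 r hr'
    rw [IsLocalRing.mem_maximalIdeal, mem_nonunits_iff] at this ⊢
    simpa using this
  · have := h4.1
    refine ((e.toAddEquiv.isWeaklyRegular_congr (as := rs) (bs := rs.map e)) ?_).1 this
    rw [List.forall₂_map_right_iff, List.forall₂_same]
    intro r _ x
    simp
  · rw [List.length_map, h5, ringKrullDim_eq_of_ringEquiv e]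

lemma isLocalization_noeth {R : Type*} [CommRing R] [IsNoetherianRing R] (p : Ideal R) [p.IsPrime]
    (S : Type*) [CommRing S] [Algebra R S] [IsLocalization.AtPrime S p] : IsNoetherianRing S :=
  IsLocalization.isNoetherianRing p.primeCompl S inferInstance

lemma cm_localization {R : Type*} [CommRing R] (h : IsCohenMacaulayLocalRing R)
    (p : Ideal R) [p.IsPrime] (S : Type*) [CommRing S] [Algebra R S] [IsLocalization.AtPrime S p] :
    IsCohenMacaulayLocalRing S := by
  obtain ⟨h1, h2, n, hD, hn⟩ := cm_depth h
  have hS : IsNoetherianRing S := isLocalization_noeth p S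
  have hSl : IsLocalRing S := IsLocalization.AtPrime.isLocalRing S p
  have hle := height_add_dim_le p
  have h0 : (0 : WithBot ℕ∞) ≤ ringKrullDim (R ⧸ p) := ringKrullDim_nonneg_of_nontrivial
  have hle2 : ringKrullDim (R ⧸ p) ≤ n := by
    rw [← hn]; exact ringKrullDim_quotient_le p
  obtain ⟨d, hd⟩ : ∃ d : ℕ, ringKrullDim (R ⧸ p) = d := by
    generalize ringKrullDim (R ⧸ p) = x at h0 hle2
    induction x with
    | bot => simp at h0
    | coe x =>
      induction x with
      | top => exfalso; norm_cast at hle2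
      | coe x => exact ⟨x, rfl⟩
  have hdn : d ≤ n := by rw [hd] at hle2; exact_mod_cast hle2
  obtain ⟨rs, hl, hm, hreg⟩ := exists_regular_in_prime (k := n - d) hD p (by
    rw [hd]; norm_cast; omega)
  refine cm_of_regular (rs.map (algebraMap R S)) ?_ (hreg.of_isLocalization S p.primeCompl) ?_
  · intro r hr
    obtain ⟨r, hr', rfl⟩ := List.mem_map.1 hr
    exact (IsLocalization.AtPrime.to_map_mem_maximal_iff S p r).2 (hm r hr')
  · rw [IsLocalization.AtPrime.ringKrullDim_eq_height p S, List.length_map, hl]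
    rw [hd, hn] at hle
    have : p.height + d ≤ (n : ℕ∞) := by exact_mod_cast hle
    have h3 : p.height ≤ ((n - d : ℕ) : ℕ∞) := by
      push_cast
      exact ENat.le_sub_of_add_le_right (ENat.coe_ne_top d) this
    have h4 := WithBot.coe_le_coe.2 h3
    exact h4

end MR

namespace MR
open RingTheory.Sequence Pointwise Polynomial

universe u

lemma poly_loc {R : Type u} [CommRing R] (p : Ideal R[X]) [p.IsPrime] :
    ∃ (pS : Ideal (Localization.AtPrime (p.comap C))[X]) (_ : pS.IsPrime),
      pS = p.map (mapRingHom (algebraMap R (Localization.AtPrime (p.comap C)))) ∧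
      pS.comap C = IsLocalRing.maximalIdeal _ ∧
      Nonempty (Localization.AtPrime pS ≃+* Localization.AtPrime p) := by
  let q := p.comap C
  let S := (Localization.AtPrime q)[X]
  let pc := Submonoid.map Polynomial.C.toMonoidHom q.primeCompl
  let : Algebra R[X] S := algebra R (Localization.AtPrime q)
  have : IsLocalization pc S := Polynomial.isLocalization _ _
  let pS := p.map (algebraMap R[X] S)
  have disj : Disjoint (pc : Set R[X]) (p : Set R[X]) := by
    simpa [pc, q] using! Set.disjoint_image_left.mpr
      (Set.disjoint_compl_left_iff_subset.mpr (fun _ a ↦ a))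
  have hpSp : pS.IsPrime := IsLocalization.isPrime_of_isPrime_disjoint pc _ _ ‹_› disj
  have : IsLocalization.AtPrime (Localization.AtPrime pS) p := by
    convert IsLocalization.isLocalization_isLocalization_atPrime_isLocalization pc
      (Localization.AtPrime pS) pS
    exact (IsLocalization.under_map_of_isPrime_disjoint pc _ ‹_› disj).symm
  have eq : Ideal.comap C pS = IsLocalRing.maximalIdeal (Localization.AtPrime q) := by
    rw [← IsLocalization.map_under q.primeCompl _ (Ideal.comap C pS),
      ← IsLocalization.map_under q.primeCompl _ (IsLocalRing.maximalIdeal (Localization.AtPrime q))]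
    simp only [Ideal.comap_comap, S, pS]
    rw [← Polynomial.algebraMap_eq (R := Localization.AtPrime q),
      ← IsScalarTower.algebraMap_eq R (Localization.AtPrime q) (Localization.AtPrime q)[X],
      IsScalarTower.algebraMap_eq R R[X] (Localization.AtPrime q)[X], ← Ideal.comap_comap,
      ← Ideal.under_def R[X], IsLocalization.under_map_of_isPrime_disjoint pc _ ‹_› disj]
    simp [q, IsLocalization.AtPrime.under_maximalIdeal (Localization.AtPrime q) q]
  exact ⟨pS, hpSp, rfl, eq, ⟨(IsLocalization.algEquiv p.primeCompl
    (Localization.AtPrime pS) (Localization.AtPrime p)).toRingEquiv⟩⟩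

lemma isSMulRegular_quot_iff {R : Type*} [CommRing R] (J : Ideal R) (x : R) :
    IsSMulRegular (R ⧸ (J • ⊤ : Submodule R R)) x ↔ ∀ y, x * y ∈ J → y ∈ J := by
  rw [isSMulRegular_iff_right_eq_zero_of_smul]
  have hJ : (J • ⊤ : Submodule R R) = J := by simp
  constructor
  · intro h y hy
    have := h (Submodule.Quotient.mk y) (by
      rw [← Submodule.Quotient.mk_smul, Submodule.Quotient.mk_eq_zero, hJ]; exact hy)
    rwa [Submodule.Quotient.mk_eq_zero, hJ] at this
  · intro h y hy
    obtain ⟨y, rfl⟩ := Submodule.Quotient.mk_surjective _ y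
    rw [← Submodule.Quotient.mk_smul, Submodule.Quotient.mk_eq_zero, hJ] at hy
    rw [Submodule.Quotient.mk_eq_zero, hJ]; exact h y hy

lemma cm_poly_local {B : Type u} [CommRing B] [IsLocalRing B] (h : IsCohenMacaulayLocalRing B)
    (Q : Ideal B[X]) [Q.IsPrime] (hQ : Q.comap C = IsLocalRing.maximalIdeal B) :
    IsCohenMacaulayLocalRing (Localization.AtPrime Q) := by
  obtain ⟨h1, h2, rs, hm, hreg, hlen⟩ := h
  have : IsNoetherianRing (Localization.AtPrime Q) := isLocalization_noeth Q _
  have hC : ∀ r ∈ rs.map (C : B →+* B[X]), r ∈ Q := by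
    intro r hr
    obtain ⟨r, hr', rfl⟩ := List.mem_map.1 hr
    have := hm r hr'
    have h3 : r ∈ Q.comap C := by rw [hQ]; exact this
    exact h3
  have hregC : IsWeaklyRegular B[X] (rs.map (C : B →+* B[X])) :=
    hreg.1.of_flat (S := B[X])
  have hmapLe : (IsLocalRing.maximalIdeal B).map C ≤ Q := by
    rw [Ideal.map_le_iff_le_comap, hQ]
  by_cases hle : Q ≤ (IsLocalRing.maximalIdeal B).map C
  · have hQeq := le_antisymm hle hmapLe
    refine cm_of_regular ((rs.map (C : B →+* B[X])).map (algebraMap _ (Localization.AtPrime Q)))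
      ?_ (hregC.of_isLocalization _ Q.primeCompl) ?_
    · intro r hr
      obtain ⟨r, hr', rfl⟩ := List.mem_map.1 hr
      exact (IsLocalization.AtPrime.to_map_mem_maximal_iff _ Q r).2 (hC r hr')
    · have hh : Q.height = (IsLocalRing.maximalIdeal B).height :=
        (congrArg Ideal.height hQeq).trans (Polynomial.height_map_C _)
      rw [IsLocalization.AtPrime.ringKrullDim_eq_height Q, hh,
        IsLocalRing.maximalIdeal_height_eq_ringKrullDim]
      rw [← hlen]; simp
  · obtain ⟨f, hfQ, hf⟩ := SetLike.not_le_iff_exists.1 hle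
    have hreg2 : IsWeaklyRegular B[X] (rs.map (C : B →+* B[X]) ++ [f]) := by
      rw [isWeaklyRegular_append_iff]
      refine ⟨hregC, ?_⟩
      rw [isWeaklyRegular_singleton_iff, isSMulRegular_quot_iff]
      intro y hy
      rw [← Ideal.map_ofList] at hy ⊢
      set J := Ideal.ofList rs
      have hfz : f.map (Ideal.Quotient.mk J) ∈ nonZeroDivisors (B ⧸ J)[X] := by
        rw [Polynomial.mem_nonZeroDivisors_iff]
        intro a ha
        rw [Ideal.mem_map_C_iff] at hf
        push Not at hf
        obtain ⟨n, hn⟩ := hf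
        have hu : IsUnit (f.coeff n) := by
          by_contra h; exact hn ((IsLocalRing.mem_maximalIdeal _).2 h)
        have := congrArg (fun g => Polynomial.coeff g n) ha
        simp only [coeff_smul, coeff_map, coeff_zero, smul_eq_mul] at this
        exact ((hu.map (Ideal.Quotient.mk J)).mul_left_eq_zero).1 this
      have hk : ∀ g : B[X], g ∈ J.map C ↔ g.map (Ideal.Quotient.mk J) = 0 := by
        intro g
        rw [Ideal.mem_map_C_iff, Polynomial.ext_iff]
        simp [Ideal.Quotient.eq_zero_iff_mem]
      rw [hk] at hy ⊢
      rw [Polynomial.map_mul, mul_comm] at hy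
      exact (mem_nonZeroDivisors_iff_right.1 hfz) _ hy
    refine cm_of_regular ((rs.map (C : B →+* B[X]) ++ [f]).map
      (algebraMap _ (Localization.AtPrime Q)))
      ?_ (hreg2.of_isLocalization _ Q.primeCompl) ?_
    · intro r hr
      obtain ⟨r, hr', rfl⟩ := List.mem_map.1 hr
      refine (IsLocalization.AtPrime.to_map_mem_maximal_iff _ Q r).2 ?_
      rw [List.mem_append, List.mem_singleton] at hr'
      rcases hr' with h | rfl
      · exact hC r h
      · exact hfQ
    · rw [IsLocalization.AtPrime.ringKrullDim_eq_height Q]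
      refine (Ideal.height_le_ringKrullDim_of_ne_top Ideal.IsPrime.ne_top').trans ?_
      rw [Polynomial.ringKrullDim_of_isNoetherianRing, ← hlen]
      simp

lemma DepthGE.congr {R : Type*} [CommRing R] [IsLocalRing R]
    {M N : Type*} [AddCommGroup M] [Module R M] [AddCommGroup N] [Module R N] (e : M ≃ₗ[R] N) {n : ℕ}
    (h : DepthGE R M n) : DepthGE R N n := by
  obtain ⟨rs, h1, h2, h3⟩ := h
  exact ⟨rs, h1, h2, (e.isRegular_congr rs).1 h3⟩

lemma DepthGE.quotList {R : Type u} [CommRing R] [IsLocalRing R] [IsNoetherianRing R]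
    {M : Type u} [AddCommGroup M] [Module R M] [Module.Finite R M] {n : ℕ} (rs : List R)
    (h : DepthGE R M (rs.length + n)) (hm : ∀ r ∈ rs, r ∈ IsLocalRing.maximalIdeal R)
    (hreg : IsWeaklyRegular M rs) : DepthGE R (M ⧸ (Ideal.ofList rs • ⊤ : Submodule R M)) n := by
  induction rs generalizing M with
  | nil =>
    refine DepthGE.congr ?_ (by simpa using h)
    refine (Submodule.quotEquivOfEqBot _ ?_).symm
    simp
  | cons x rs ih =>
    rw [isWeaklyRegular_cons_iff] at hreg
    have h' : DepthGE R M ((rs.length + n) + 1) := by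
      convert h using 1; simp; omega
    refine DepthGE.congr (Submodule.quotOfListConsSMulTopEquivQuotSMulTopInner M x rs).symm ?_
    exact ih (h'.quot (hm x (by simp)) hreg.1) (fun r hr => hm r (by simp [hr])) hreg.2

lemma cm_descent {B E : Type u} [CommRing B] [CommRing E] [IsLocalRing B] [IsNoetherianRing B]
    [Algebra B E] [Module.Flat B E] (hE : IsCohenMacaulayLocalRing E) [IsLocalRing E]
    (hmap : (IsLocalRing.maximalIdeal B).map (algebraMap B E) = IsLocalRing.maximalIdeal E)
    (hdim : ringKrullDim B ≤ ringKrullDim E) : IsCohenMacaulayLocalRing B := by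
  obtain ⟨h1, h2, n, hD, hn⟩ := cm_depth hE
  have hmm : ∀ r ∈ IsLocalRing.maximalIdeal B, algebraMap B E r ∈ IsLocalRing.maximalIdeal E := by
    intro r hr; rw [← hmap]; exact Ideal.mem_map_of_mem _ hr
  have hloc : IsLocalHom (algebraMap B E) := by
    constructor
    intro a ha
    by_contra h
    exact (IsLocalRing.mem_maximalIdeal _).1 (hmm a ((IsLocalRing.mem_maximalIdeal _).2 h)) ha
  have : Module.FaithfullyFlat B E := Module.FaithfullyFlat.of_flat_of_isLocalHom
  have key : ∀ k ≤ n, ∃ rs : List B, rs.length = k ∧ (∀ r ∈ rs, r ∈ IsLocalRing.maximalIdeal B) ∧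
      IsWeaklyRegular B rs := by
    intro k
    induction k with
    | zero => intro _; exact ⟨[], by simp⟩
    | succ k ih =>
      intro hk
      obtain ⟨rs, hl, hm, hreg⟩ := ih (by omega)
      by_cases hex : ∃ x ∈ IsLocalRing.maximalIdeal B,
          IsSMulRegular (B ⧸ (Ideal.ofList rs • ⊤ : Submodule B B)) x
      · obtain ⟨x, hx, hxr⟩ := hex
        refine ⟨rs ++ [x], by simp [hl], ?_, ?_⟩
        · intro r hr
          rw [List.mem_append, List.mem_singleton] at hr
          rcases hr with h | rfl
          · exact hm r h
          · exact hx
        · rw [isWeaklyRegular_append_iff]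
          exact ⟨hreg, by rwa [isWeaklyRegular_singleton_iff]⟩
      · exfalso
        push Not at hex
        have hsub : (IsLocalRing.maximalIdeal B : Set B) ⊆
            ⋃ q ∈ associatedPrimes B (B ⧸ (Ideal.ofList rs • ⊤ : Submodule B B)), (q : Set B) := by
          rw [biUnion_associatedPrimes_eq_compl_regular]
          intro x hx; exact hex x hx
        rw [Ideal.subset_union_prime_finite (associatedPrimes.finite _ _) ⊥ ⊥
          (fun q hq _ _ => hq.isPrime)] at hsub
        obtain ⟨q, hq, hpq⟩ := hsub
        obtain ⟨hqp, z, hz⟩ := isAssociatedPrime_iff.mp hq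
        obtain ⟨z, rfl⟩ := Submodule.Quotient.mk_surjective _ z
        have hz' : ∀ r : B, r ∈ q ↔ r * z ∈ Ideal.ofList rs := by
          intro r
          rw [hz, Submodule.mem_colon_singleton, ← Submodule.Quotient.mk_smul, Submodule.mem_bot,
            Submodule.Quotient.mk_eq_zero]
          simp
        set JE := Ideal.ofList (rs.map (algebraMap B E)) with hJE
        have hJE' : JE = (Ideal.ofList rs).map (algebraMap B E) := by rw [Ideal.map_ofList]
        have hz1 : algebraMap B E z ∉ JE := by
          intro hmem
          rw [hJE', ← Ideal.mem_comap, Ideal.comap_map_eq_self_of_faithfullyFlat] at hmem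
          have : (1 : B) ∈ q := (hz' 1).2 (by simpa using hmem)
          exact hqp.ne_top ((Ideal.eq_top_iff_one _).2 this)
        have hz2 : ∀ e ∈ IsLocalRing.maximalIdeal E, e * algebraMap B E z ∈ JE := by
          intro e he
          rw [← hmap] at he
          refine Submodule.span_induction (p := fun e _ => e * algebraMap B E z ∈ JE)
            ?_ ?_ ?_ ?_ he
          · rintro _ ⟨r, hr, rfl⟩
            rw [← map_mul, hJE']
            exact Ideal.mem_map_of_mem _ ((hz' r).1 (hpq hr))
          · simp
          · intro x y _ _ hx hy; rw [add_mul]; exact JE.add_mem hx hy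
          · intro a x _ hx; rw [smul_eq_mul, mul_assoc]; exact JE.mul_mem_left _ hx
        have hD' : DepthGE E (E ⧸ (JE • ⊤ : Submodule E E)) (n - k) := by
          apply DepthGE.quotList
          · convert hD using 1
            rw [List.length_map]; omega
          · intro r hr
            obtain ⟨r, hr', rfl⟩ := List.mem_map.1 hr
            exact hmm r (hm r hr')
          · exact hreg.of_flat
        have hass : IsAssociatedPrime (IsLocalRing.maximalIdeal E)
            (E ⧸ (JE • ⊤ : Submodule E E)) := by
          rw [isAssociatedPrime_iff]
          refine ⟨inferInstance, Submodule.Quotient.mk (algebraMap B E z), ?_⟩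
          have hne : Submodule.colon (⊥ : Submodule E (E ⧸ (JE • ⊤ : Submodule E E))) {(Submodule.Quotient.mk (algebraMap B E z) :
            (E ⧸ (JE • ⊤ : Submodule E E)))} ≠ ⊤ := by
            intro h
            have : (1 : E) ∈ (⊤ : Ideal E) := trivial
            rw [← h, Submodule.mem_colon_singleton, one_smul, Submodule.mem_bot,
              Submodule.Quotient.mk_eq_zero] at this
            exact hz1 (by simpa using this)
          refine le_antisymm ?_ (IsLocalRing.le_maximalIdeal hne)
          intro e he
          rw [Submodule.mem_colon_singleton, ← Submodule.Quotient.mk_smul, Submodule.mem_bot,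
            Submodule.Quotient.mk_eq_zero]
          simpa using hz2 e he
        have h5 := hD'.le_dim hass
        have h6 : ringKrullDim (E ⧸ IsLocalRing.maximalIdeal E) = 0 :=
          ringKrullDim_eq_zero_of_isField ((Ideal.Quotient.maximal_ideal_iff_isField_quotient _).1
            inferInstance)
        rw [h6] at h5
        have : n - k ≤ 0 := by exact_mod_cast h5
        omega
  obtain ⟨rs, hl, hm, hreg⟩ := key n le_rfl
  exact cm_of_regular rs hm hreg (by rw [hl, ← hn]; exact hdim)

lemma cm_of_poly_aux {R : Type u} [CommRing R] [IsNoetherianRing R] (Q : Ideal R[X]) [Q.IsPrime]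
    (hQ : Q ≤ (Q.comap C).map C)
    (h : IsCohenMacaulayLocalRing (Localization.AtPrime Q)) :
    IsCohenMacaulayLocalRing (Localization.AtPrime (Q.comap C)) := by
  obtain ⟨pS, hpS, h1, h2, ⟨e⟩⟩ := poly_loc Q
  set B := Localization.AtPrime (Q.comap C) with hB
  have hN : IsNoetherianRing B := isLocalization_noeth (Q.comap C) _
  have hpS' : pS = (IsLocalRing.maximalIdeal B).map C := by
    apply le_antisymm
    · rw [h1]
      refine (Ideal.map_mono hQ).trans ?_
      rw [Ideal.map_map, Ideal.map_le_iff_le_comap]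
      intro x hx
      rw [Ideal.mem_comap, RingHom.comp_apply, coe_mapRingHom, map_C]
      refine Ideal.mem_map_of_mem _ ?_
      exact (IsLocalization.AtPrime.to_map_mem_maximal_iff _ (Q.comap C) x).2 hx
    · rw [Ideal.map_le_iff_le_comap, h2]
  let E := Localization.AtPrime pS
  have hE : IsCohenMacaulayLocalRing E := cm_of_ringEquiv e.symm h
  have hflat : Module.Flat B E := Module.Flat.trans B B[X] E
  refine cm_descent (B := B) (E := E) hE ?_ ?_
  · have : algebraMap B E = (algebraMap B[X] E).comp C := by
      rw [IsScalarTower.algebraMap_eq B B[X] E, Polynomial.algebraMap_eq]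
    rw [this, ← Ideal.map_map, ← hpS']
    exact Localization.AtPrime.map_eq_maximalIdeal
  · have hh : pS.height = (IsLocalRing.maximalIdeal B).height :=
        (congrArg Ideal.height hpS').trans (Polynomial.height_map_C _)
    rw [IsLocalization.AtPrime.ringKrullDim_eq_height pS E, hh,
      IsLocalRing.maximalIdeal_height_eq_ringKrullDim]

lemma cm_of_poly {R : Type u} [CommRing R] [IsNoetherianRing R] (P : Ideal R) [P.IsPrime]
    [hPC : (P.map (C : R →+* R[X])).IsPrime]
    (h : IsCohenMacaulayLocalRing (Localization.AtPrime (P.map (C : R →+* R[X])))) :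
    IsCohenMacaulayLocalRing (Localization.AtPrime P) := by
  have hP : (P.map (C : R →+* R[X])).comap C = P := by
    ext x
    rw [Ideal.mem_comap, Ideal.mem_map_C_iff]
    constructor
    · intro h; simpa using h 0
    · intro h n
      rw [coeff_C]; split_ifs
      · exact h
      · exact P.zero_mem
  have h1 := cm_of_poly_aux _ (by rw [hP]) h
  have : ∀ (P' : Ideal R) [P'.IsPrime], P' = P →
      IsCohenMacaulayLocalRing (Localization.AtPrime P') →
      IsCohenMacaulayLocalRing (Localization.AtPrime P) := by
    rintro P' _ rfl h; exact h
  exact this _ hP h1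

lemma cm_poly {R : Type u} [CommRing R] (Q : Ideal R[X]) [Q.IsPrime]
    (h : IsCohenMacaulayLocalRing (Localization.AtPrime (Q.comap C))) :
    IsCohenMacaulayLocalRing (Localization.AtPrime Q) := by
  obtain ⟨pS, hpS, h1, h2, ⟨e⟩⟩ := poly_loc Q
  exact cm_of_ringEquiv e (cm_poly_local h pS h2)

end MR

namespace MR
open Polynomial

universe u

section laurent
variable {R : Type u} [CommRing R] (ρ : R →+* R[X])

noncomputable def tunit (R : Type u) [CommRing R] : (LaurentPolynomial R)ˣ where
  val := LaurentPolynomial.T 1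
  inv := LaurentPolynomial.T (-1)
  val_inv := by rw [← LaurentPolynomial.T_add]; simp
  inv_val := by rw [← LaurentPolynomial.T_add]; simp

noncomputable def tw : LaurentPolynomial R →+* LaurentPolynomial R :=
  LaurentPolynomial.eval₂ ((Polynomial.toLaurent).comp ρ) (tunit R)

noncomputable def tw' : LaurentPolynomial R →+* LaurentPolynomial R :=
  LaurentPolynomial.eval₂ ((LaurentPolynomial.invert (R := R)).toRingEquiv.toRingHom.comp
    ((Polynomial.toLaurent).comp ρ)) (tunit R)

lemma laurent_hom_ext {S : Type*} [CommRing S] {f g : LaurentPolynomial R →+* S}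
    (h1 : ∀ r, f (LaurentPolynomial.C r) = g (LaurentPolynomial.C r))
    (h2 : f (LaurentPolynomial.T 1) = g (LaurentPolynomial.T 1)) : f = g := by
  have : f.comp (algebraMap R[X] _) = g.comp (algebraMap R[X] _) := by
    apply Polynomial.ringHom_ext
    · intro a; simpa [LaurentPolynomial.algebraMap_eq_toLaurent] using h1 a
    · simpa [LaurentPolynomial.algebraMap_eq_toLaurent] using h2
  exact IsLocalization.ringHom_ext (Submonoid.powers (X : R[X])) this

lemma tw_C (r : R) : tw ρ (LaurentPolynomial.C r) = toLaurent (ρ r) := by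
  simp [tw]

lemma tw'_C (r : R) :
    tw' ρ (LaurentPolynomial.C r) = LaurentPolynomial.invert (toLaurent (ρ r)) := by
  simp [tw']

lemma tw_T (n : ℤ) : tw ρ (LaurentPolynomial.T n) = LaurentPolynomial.T n := by
  simp only [tw, LaurentPolynomial.eval₂_T]
  have : ∀ n : ℤ, ((tunit R ^ n : (LaurentPolynomial R)ˣ) : LaurentPolynomial R) =
      LaurentPolynomial.T n := by
    intro n
    induction n using Int.induction_on with
    | zero => simp
    | succ i ih => rw [zpow_add_one, Units.val_mul, ih, LaurentPolynomial.T_add]; rfl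
    | pred i ih => rw [zpow_sub_one, Units.val_mul, ih, sub_eq_add_neg, LaurentPolynomial.T_add]; rfl
  exact this n

lemma tw'_T (n : ℤ) : tw' ρ (LaurentPolynomial.T n) = LaurentPolynomial.T n := by
  refine Eq.trans ?_ (tw_T ρ n)
  simp only [tw', tw, LaurentPolynomial.eval₂_T]


lemma tw'_tw (h1 : ∀ f, (ρ f).eval 1 = f)
    (h2 : ∀ f n, ρ ((ρ f).coeff n) = monomial n ((ρ f).coeff n)) (f) : tw' ρ (tw ρ f) = f := by
  suffices (tw' ρ).comp (tw ρ) = RingHom.id _ from congrArg (fun g => g f) this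
  apply laurent_hom_ext
  · intro r
    rw [RingHom.comp_apply, tw_C, RingHom.id_apply]
    conv_lhs => rw [(ρ r).as_sum_range_C_mul_X_pow]
    conv_rhs => rw [← h1 r, eval_eq_sum_range]
    simp only [map_sum, map_mul, toLaurent_C, tw'_C, h2, map_pow, toLaurent_X]
    refine Finset.sum_congr rfl fun n hn => ?_
    rw [← C_mul_X_pow_eq_monomial]
    simp only [map_mul, toLaurent_C, map_pow, toLaurent_X, LaurentPolynomial.invert_C,
      LaurentPolynomial.invert_T, tw'_T, mul_assoc, ← mul_pow, ← LaurentPolynomial.T_add]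
    simp
  · simp [tw_T, tw'_T]

lemma tw_tw' (h1 : ∀ f, (ρ f).eval 1 = f)
    (h2 : ∀ f n, ρ ((ρ f).coeff n) = monomial n ((ρ f).coeff n)) (f) : tw ρ (tw' ρ f) = f := by
  suffices (tw ρ).comp (tw' ρ) = RingHom.id _ from congrArg (fun g => g f) this
  apply laurent_hom_ext
  · intro r
    rw [RingHom.comp_apply, tw'_C, RingHom.id_apply]
    conv_lhs => rw [(ρ r).as_sum_range_C_mul_X_pow]
    conv_rhs => rw [← h1 r, eval_eq_sum_range]
    simp only [map_sum, map_mul, toLaurent_C, map_pow, toLaurent_X, LaurentPolynomial.invert_C,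
      LaurentPolynomial.invert_T]
    refine Finset.sum_congr rfl fun n hn => ?_
    rw [tw_C, h2, ← C_mul_X_pow_eq_monomial]
    simp only [map_mul, toLaurent_C, map_pow, toLaurent_X, tw_T, mul_assoc, ← mul_pow,
      ← LaurentPolynomial.T_add]
    simp
  · simp [tw_T, tw'_T]

noncomputable def twEquiv (h1 : ∀ f, (ρ f).eval 1 = f)
    (h2 : ∀ f n, ρ ((ρ f).coeff n) = monomial n ((ρ f).coeff n)) : LaurentPolynomial R ≃+* LaurentPolynomial R where
  toFun := tw ρ
  invFun := tw' ρ
  left_inv := tw'_tw ρ h1 h2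
  right_inv := tw_tw' ρ h1 h2
  map_mul' := map_mul _
  map_add' := map_add _

theorem cm_graded (h1 : ∀ f, (ρ f).eval 1 = f)
    (h2 : ∀ f n, ρ ((ρ f).coeff n) = monomial n ((ρ f).coeff n)) [IsNoetherianRing R] (P p : Ideal R) [P.IsPrime] [hpp : p.IsPrime]
    (hp : ∀ f, f ∈ p ↔ ∀ n, (ρ f).coeff n ∈ P)
    (h : IsCohenMacaulayLocalRing (Localization.AtPrime p)) :
    IsCohenMacaulayLocalRing (Localization.AtPrime P) := by
  have hPX : (P.map (C : R →+* R[X])).IsPrime := Ideal.isPrime_map_C_of_isPrime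
  refine cm_of_poly P ?_
  set PX := P.map (C : R →+* R[X]) with hPXdef
  have hdisj : Disjoint ((Submonoid.powers (X : R[X]) : Submonoid R[X]) : Set R[X]) (PX : Set R[X]) := by
    rw [Set.disjoint_left]
    rintro _ ⟨n, rfl⟩ hx
    have : (X : R[X]) ^ n ∈ PX := hx
    rw [Ideal.mem_map_C_iff] at this
    have := this n
    simp only [coeff_X_pow, if_true] at this
    exact Ideal.IsPrime.ne_top' ((Ideal.eq_top_iff_one P).2 this)
  set PL := PX.map (algebraMap R[X] (LaurentPolynomial R))
  have hPL : PL.IsPrime := IsLocalization.isPrime_of_isPrime_disjoint (Submonoid.powers (X : R[X])) _ _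
    hPX hdisj
  have hPLu : PL.comap (algebraMap R[X] (LaurentPolynomial R)) = PX :=
    IsLocalization.under_map_of_isPrime_disjoint (Submonoid.powers (X : R[X])) _ hPX hdisj
  let θ := twEquiv ρ h1 h2
  let QL := PL.comap (θ : LaurentPolynomial R →+* LaurentPolynomial R)
  have hQL : QL.IsPrime := inferInstance
  have e1 : Localization.AtPrime QL ≃+* Localization.AtPrime PL :=
    Localization.localRingEquiv QL PL θ rfl
  have gen : ∀ (Q : Ideal (LaurentPolynomial R)) [Q.IsPrime] (q : Ideal R[X]) [q.IsPrime],
      Q.comap (algebraMap R[X] (LaurentPolynomial R)) = q →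
      Nonempty (Localization.AtPrime Q ≃+* Localization.AtPrime q) := by
    rintro Q _ q _ rfl
    have := IsLocalization.isLocalization_isLocalization_atPrime_isLocalization
      (Submonoid.powers (X : R[X])) (Localization.AtPrime Q) Q
    exact ⟨(IsLocalization.algEquiv (Q.comap (algebraMap R[X] (LaurentPolynomial R))).primeCompl
      (Localization.AtPrime Q) _).toRingEquiv⟩
  obtain ⟨e2⟩ := gen PL PX hPLu
  obtain ⟨e3⟩ := gen QL _ rfl
  set Q' := QL.comap (algebraMap R[X] (LaurentPolynomial R))
  have hQ' : Q'.comap C = p := by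
    ext f
    rw [hp, ← Ideal.mem_map_C_iff, ← hPXdef, ← hPLu]
    simp only [Q', QL, Ideal.mem_comap, LaurentPolynomial.algebraMap_eq_toLaurent, toLaurent_C]
    change tw ρ _ ∈ _ ↔ _
    rw [tw_C]
  have : ∀ (P' : Ideal R) [P'.IsPrime], p = P' →
      IsCohenMacaulayLocalRing (Localization.AtPrime P') := by
    rintro P' _ rfl; exact h
  exact cm_of_ringEquiv ((e3.symm.trans e1).trans e2) (cm_poly Q' (this _ hQ'.symm))

end laurent
end MR

namespace MR

universe u

section basics
variable {A : Type u} [CommRing A] {r : ℕ} (I : Fin r → Ideal A)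

open MvPolynomial in
lemma mem_mr (f : MvPolynomial (Fin r) A) :
    f ∈ multiReesAlgebra I ↔ ∀ n, coeff n f ∈ ∏ i, I i ^ n i := by
  classical
  constructor
  · intro hf
    refine Algebra.adjoin_induction (p := fun f _ => ∀ n, coeff n f ∈ ∏ i, I i ^ n i)
      ?_ ?_ ?_ ?_ hf
    · intro x hx n
      obtain ⟨i, hi⟩ := Set.mem_iUnion.1 hx
      obtain ⟨a, ha, rfl⟩ := hi
      rw [coeff_C_mul, coeff_X']
      split_ifs with h
      · subst h
        rw [mul_one, Finset.prod_eq_single i]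
        · simpa using ha
        · intro j _ hj; simp [Finsupp.single_apply, Ne.symm hj]
        · simp
      · simp
    · intro a n
      rw [algebraMap_eq, coeff_C]
      split_ifs with h
      · subst h; simp only [Finsupp.coe_zero, Pi.zero_apply, pow_zero, Finset.prod_const_one]; rw [Ideal.one_eq_top]; trivial
      · simp
    · intro x y _ _ hx hy n
      rw [coeff_add]; exact Ideal.add_mem _ (hx n) (hy n)
    · intro x y _ _ hx hy n
      rw [coeff_mul]
      refine Ideal.sum_mem _ fun p hp => ?_
      have := Finset.HasAntidiagonal.mem_antidiagonal.1 hp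
      rw [← this]
      have h2 : ∏ i, I i ^ (p.1 + p.2) i = (∏ i, I i ^ p.1 i) * ∏ i, I i ^ p.2 i := by
        rw [← Finset.prod_mul_distrib]
        exact Finset.prod_congr rfl fun i _ => by simp [pow_add]
      rw [h2]
      exact Ideal.mul_mem_mul (hx _) (hy _)
  · intro h
    let N : (Fin r →₀ ℕ) → Submodule A A := fun n =>
      (Subalgebra.toSubmodule (multiReesAlgebra I)).comap (monomial n)
    have hN : ∀ n m, N n * N m ≤ N (n + m) := by
      intro n m
      rw [Submodule.mul_le]
      intro a ha b hb
      have : monomial n a * monomial m b ∈ multiReesAlgebra I := mul_mem ha hb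
      rw [monomial_mul] at this
      exact this
    have hN0 : ⊤ ≤ N 0 := by
      intro a _
      exact (multiReesAlgebra I).algebraMap_mem a
    have hN1 : ∀ i k, (I i ^ k : Submodule A A) ≤ N (Finsupp.single i k) := by
      intro i k
      induction k with
      | zero => simpa using hN0
      | succ k ih =>
        rw [pow_succ, Finsupp.single_add]
        refine (Ideal.mul_mono ih ?_).trans (hN _ _)
        intro a ha
        have : C a * X i ∈ multiReesAlgebra I :=
          Algebra.subset_adjoin (Set.mem_iUnion.2 ⟨i, a, ha, rfl⟩)
        rw [C_mul_X_eq_monomial] at this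
        exact this
    have hNs : ∀ (n : Fin r →₀ ℕ) (s : Finset (Fin r)),
        ((∏ i ∈ s, I i ^ n i : Ideal A) : Submodule A A) ≤ N (∑ i ∈ s, Finsupp.single i (n i)) := by
      intro n s
      induction s using Finset.induction_on with
      | empty => simpa using hN0
      | insert i s hi ih =>
        rw [Finset.prod_insert hi, Finset.sum_insert hi]
        exact (Ideal.mul_mono (hN1 _ _) ih).trans (hN _ _)
    rw [f.as_sum]
    refine Subalgebra.sum_mem _ fun n _ => ?_
    have := hNs n Finset.univ (h n)
    rw [Finsupp.univ_sum_single] at this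
    exact this

instance mr_noeth [IsNoetherianRing A] : IsNoetherianRing (multiReesAlgebra I) := by
  classical
  refine isNoetherianRing_of_fg ?_
  choose G hG using fun i => (isNoetherianRing_iff_ideal_fg A).1 inferInstance (I i)
  refine ⟨Finset.univ.biUnion fun i => (G i).image fun a => MvPolynomial.C a * MvPolynomial.X i, ?_⟩
  apply le_antisymm
  · apply Algebra.adjoin_mono
    intro x hx
    simp only [Finset.coe_biUnion, Set.mem_iUnion, Finset.coe_image] at hx
    obtain ⟨i, _, a, ha, rfl⟩ := hx
    refine Set.mem_iUnion.2 ⟨i, a, ?_, rfl⟩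
    rw [← hG]; exact Ideal.subset_span ha
  · apply Algebra.adjoin_le
    intro x hx
    obtain ⟨i, a, ha, rfl⟩ := Set.mem_iUnion.1 hx
    rw [← hG i] at ha
    refine Submodule.span_induction (p := fun a _ => MvPolynomial.C a * MvPolynomial.X i ∈
      Algebra.adjoin A _) ?_ ?_ ?_ ?_ ha
    · intro a ha
      apply Algebra.subset_adjoin
      simp only [Finset.coe_biUnion, Set.mem_iUnion, Finset.coe_image]
      exact ⟨i, by simp, a, ha, rfl⟩
    · simp
    · intro x y _ _ hx hy
      rw [map_add, add_mul]; exact add_mem hx hy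
    · intro c x _ hx
      rw [smul_eq_mul, map_mul, mul_assoc]
      exact mul_mem (Subalgebra.algebraMap_mem _ c) hx

/-- The augmentation. -/
noncomputable def aug : multiReesAlgebra I →+* A :=
  MvPolynomial.constantCoeff.comp (multiReesAlgebra I).val.toRingHom

lemma aug_apply (f : multiReesAlgebra I) : aug I f = MvPolynomial.constantCoeff (f : MvPolynomial (Fin r) A) := rfl

/-- The irrelevant maximal ideal. -/
noncomputable def Mid [IsLocalRing A] : Ideal (multiReesAlgebra I) :=
  (IsLocalRing.maximalIdeal A).comap (aug I)

instance [IsLocalRing A] : (Mid I).IsPrime := by unfold Mid; infer_instance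

lemma mem_Mid [IsLocalRing A] (f : multiReesAlgebra I) :
  f ∈ Mid I ↔ MvPolynomial.constantCoeff (f : MvPolynomial (Fin r) A) ∈ IsLocalRing.maximalIdeal A := Iff.rfl

/-- Homogenization. -/
noncomputable def sig (r : ℕ) (A : Type u) [CommRing A] :
    MvPolynomial (Fin r) A →ₐ[A] Polynomial (MvPolynomial (Fin r) A) :=
  MvPolynomial.aeval fun i => Polynomial.C (MvPolynomial.X i) * Polynomial.X

lemma sig_monomial (d : Fin r →₀ ℕ) (a : A) :
    sig r A (MvPolynomial.monomial d a) =
      Polynomial.monomial d.degree (MvPolynomial.monomial d a) := by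
  rw [sig, MvPolynomial.aeval_monomial, Finsupp.prod]
  simp only [mul_pow, Finset.prod_mul_distrib]
  rw [Finset.prod_pow_eq_pow_sum, ← Polynomial.C_mul_X_pow_eq_monomial, MvPolynomial.monomial_eq,
    map_mul, Finsupp.prod, map_prod, ← mul_assoc]
  congr 2
  simp

lemma sig_coeff (f : MvPolynomial (Fin r) A) (n : ℕ) :
    (sig r A f).coeff n = MvPolynomial.homogeneousComponent n f := by
  classical
  induction f using MvPolynomial.monomial_add_induction_on with
  | C a => 
    rw [← MvPolynomial.monomial_zero', sig_monomial, Polynomial.coeff_monomial, 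
      MvPolynomial.homogeneousComponent_of_mem (n := 0)]
    · simp [eq_comm]
    · rw [MvPolynomial.mem_homogeneousSubmodule]
      exact MvPolynomial.isHomogeneous_monomial _ (by simp)
  | monomial_add d a f _ _ ih =>
    rw [map_add, map_add, Polynomial.coeff_add, ih, sig_monomial, Polynomial.coeff_monomial,
      MvPolynomial.homogeneousComponent_of_mem (m := n) (n := d.degree) (p := MvPolynomial.monomial d a)]
    · simp [eq_comm]
    · rw [MvPolynomial.mem_homogeneousSubmodule]
      exact MvPolynomial.isHomogeneous_monomial _ rfl

lemma hc_mem {f : MvPolynomial (Fin r) A} (hf : f ∈ multiReesAlgebra I) (n : ℕ) :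
    MvPolynomial.homogeneousComponent n f ∈ multiReesAlgebra I := by
  rw [mem_mr] at hf ⊢
  intro d
  rw [MvPolynomial.coeff_homogeneousComponent]
  split_ifs
  · exact hf d
  · simp

lemma cm_of_le {R : Type u} [CommRing R] (p M : Ideal R) [hp : p.IsPrime] [M.IsPrime] (hpM : p ≤ M)
    (h : IsCohenMacaulayLocalRing (Localization.AtPrime M)) :
    IsCohenMacaulayLocalRing (Localization.AtPrime p) := by
  let q := p.map (algebraMap R (Localization.AtPrime M))
  have hdisj : Disjoint (M.primeCompl : Set R) (p : Set R) := by
    rw [Set.disjoint_left]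
    intro x hx hx'
    exact hx (hpM hx')
  have hq : q.IsPrime := IsLocalization.isPrime_of_isPrime_disjoint M.primeCompl _ _ hp hdisj
  have hqu : q.comap (algebraMap R (Localization.AtPrime M)) = p :=
    IsLocalization.under_map_of_isPrime_disjoint M.primeCompl _ hp hdisj
  have h1 := cm_localization h q (Localization.AtPrime q)
  have h2 := IsLocalization.isLocalization_isLocalization_atPrime_isLocalization
    M.primeCompl (Localization.AtPrime q) q
  have gen : ∀ (q' : Ideal R) [q'.IsPrime], q' = p →
    IsCohenMacaulayLocalRing (Localization.AtPrime q') → 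
    IsCohenMacaulayLocalRing (Localization.AtPrime p) := by
    rintro q' _ rfl h; exact h
  exact gen (q.comap (algebraMap R (Localization.AtPrime M))) hqu (cm_of_ringEquiv (IsLocalization.algEquiv (q.comap
    (algebraMap R (Localization.AtPrime M))).primeCompl
    (Localization.AtPrime q) _).toRingEquiv h1)

lemma exists_rho : ∃ ρ : multiReesAlgebra I →+* Polynomial (multiReesAlgebra I),
    ∀ f, (ρ f).map (multiReesAlgebra I).val.toRingHom = sig r A (f : MvPolynomial (Fin r) A) := by
  have hinj : Function.Injective (Polynomial.map (multiReesAlgebra I).val.toRingHom) :=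
    Polynomial.map_injective _ Subtype.val_injective
  have hmem : ∀ f : (multiReesAlgebra I), ∃ g : Polynomial (multiReesAlgebra I),
      g.map (multiReesAlgebra I).val.toRingHom = sig r A (f : MvPolynomial (Fin r) A) := by
    intro f
    rw [← Polynomial.mem_lifts, Polynomial.lifts_iff_coeff_lifts]
    intro n
    rw [sig_coeff]
    exact ⟨⟨_, hc_mem I f.2 n⟩, rfl⟩
  choose g hg using hmem
  refine ⟨⟨⟨⟨g, ?_⟩, ?_⟩, ?_, ?_⟩, hg⟩
  · apply hinj; rw [hg]; simp
  · intro x y; apply hinj; simp only [Polynomial.map_mul, hg, Subalgebra.coe_mul, map_mul]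
  · apply hinj
    change Polynomial.map _ (g 0) = Polynomial.map _ 0
    rw [hg, Polynomial.map_zero, ZeroMemClass.coe_zero, map_zero]
  · intro x y; apply hinj
    change Polynomial.map _ (g (x + y)) = Polynomial.map _ (g x + g y)
    simp only [Polynomial.map_add, hg, Subalgebra.coe_add, map_add]

theorem mr_cm [IsNoetherianRing A] [IsLocalRing A]
    (h : IsCohenMacaulayLocalRing (Localization.AtPrime (Mid I)))
    (P : Ideal (multiReesAlgebra I)) [P.IsPrime] :
    IsCohenMacaulayLocalRing (Localization.AtPrime P) := by
  classical
  obtain ⟨ρ, hρ⟩ := exists_rho I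
  have hc : ∀ f n, (((ρ f).coeff n : (multiReesAlgebra I)) : MvPolynomial (Fin r) A) =
      MvPolynomial.homogeneousComponent n (f : MvPolynomial (Fin r) A) := by
    intro f n
    rw [← sig_coeff, ← hρ, Polynomial.coeff_map]; rfl
  have hPX : (P.map (Polynomial.C : (multiReesAlgebra I) →+* Polynomial (multiReesAlgebra I))).IsPrime := Ideal.isPrime_map_C_of_isPrime
  let p := (P.map (Polynomial.C : (multiReesAlgebra I) →+* Polynomial (multiReesAlgebra I))).comap ρ
  have hp : p.IsPrime := inferInstance
  have hp' : ∀ f, f ∈ p ↔ ∀ n, (ρ f).coeff n ∈ P := by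
    intro f
    rw [← Ideal.mem_map_C_iff]; rfl
  have hpM : p ≤ Mid I := by
    intro f hf
    have h0 := (hp' f).1 hf 0
    rw [mem_Mid]
    by_contra hu
    rw [IsLocalRing.notMem_maximalIdeal] at hu
    refine (inferInstance : P.IsPrime).ne_top (Ideal.eq_top_of_isUnit_mem _ h0 ?_)
    have : (ρ f).coeff 0 = algebraMap A (multiReesAlgebra I) (MvPolynomial.constantCoeff (f : MvPolynomial (Fin r) A)) := by
      apply Subtype.ext
      rw [hc, MvPolynomial.homogeneousComponent_zero]
      rfl
    rw [this]
    exact hu.map _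
  have hCM : IsCohenMacaulayLocalRing (Localization.AtPrime p) := cm_of_le p (Mid I) hpM h
  refine cm_graded ρ ?_ ?_ P p hp' hCM
  · intro f
    apply Subtype.ext
    have h1 : (((ρ f).eval 1 : (multiReesAlgebra I)) : MvPolynomial (Fin r) A) =
        ((ρ f).map (multiReesAlgebra I).val.toRingHom).eval 1 := by
      rw [Polynomial.eval_one_map]; rfl
    rw [h1, hρ]
    have : ((Polynomial.evalRingHom (1 : MvPolynomial (Fin r) A)).comp (sig r A).toRingHom) =
        RingHom.id _ := by
      apply MvPolynomial.ringHom_ext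
      · intro a; simp [sig]
      · intro i; simp [sig]
    exact congrArg (fun g => g (f : MvPolynomial (Fin r) A)) this
  · intro f n
    apply Polynomial.map_injective (multiReesAlgebra I).val.toRingHom Subtype.val_injective
    rw [hρ, Polynomial.map_monomial]
    ext1 m
    rw [sig_coeff, Polynomial.coeff_monomial, hc]
    change _ = if n = m then ((((ρ f).coeff n : (multiReesAlgebra I)) : MvPolynomial (Fin r) A)) else 0
    rw [hc, MvPolynomial.homogeneousComponent_of_mem
      (MvPolynomial.homogeneousComponent_mem n (f : MvPolynomial (Fin r) A))]
    simp [eq_comm]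

end basics
end MR

namespace MR

universe u

section val
variable {A K : Type u} [CommRing A] [Field K] [Algebra A K]

/-- `V` contains `A`. -/
def Over (A : Type u) {K : Type u} [CommRing A] [Field K] [Algebra A K] (V : ValuationSubring K) :
    Prop := ∀ a : A, algebraMap A K a ∈ V

/-- `a` generates `I V`. -/
def Dom (V : ValuationSubring K) (I : Ideal A) (a : A) : Prop :=
  a ∈ I ∧ ∀ y ∈ I, V.valuation (algebraMap A K y) ≤ V.valuation (algebraMap A K a)

/-- `x ∈ J V`. -/
def InV (V : ValuationSubring K) (J : Ideal A) (x : K) : Prop :=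
  ∃ y ∈ J, V.valuation x ≤ V.valuation (algebraMap A K y)

/-- `J` is valuatively complete. -/
def VC (K : Type u) [Field K] [Algebra A K] (J : Ideal A) : Prop :=
  ∀ x : K, (∀ V : ValuationSubring K, Over A V → InV V J x) → ∃ y ∈ J, algebraMap A K y = x

lemma exists_dom [IsNoetherianRing A] {V : ValuationSubring K} (hV : Over A V) (I : Ideal A) :
    ∃ a, Dom V I a := by
  classical
  obtain ⟨s, hs⟩ := (isNoetherianRing_iff_ideal_fg A).1 inferInstance I
  obtain ⟨a, ha, hmax⟩ := (insert 0 s).exists_max_image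
    (fun a => V.valuation (algebraMap A K a)) ⟨0, by simp⟩
  refine ⟨a, ?_, ?_⟩
  · rw [← hs]
    rcases Finset.mem_insert.1 ha with rfl | h
    · simp
    · exact Ideal.subset_span h
  · intro y hy
    rw [← hs] at hy
    refine Submodule.span_induction (p := fun y _ => V.valuation (algebraMap A K y) ≤
      V.valuation (algebraMap A K a)) ?_ ?_ ?_ ?_ hy
    · intro x hx; exact hmax x (by simp only [Finset.mem_insert]; right; exact hx)
    · simp
    · intro x y _ _ hx hy
      rw [map_add]
      exact (V.valuation.map_add _ _).trans (max_le hx hy)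
    · intro c x _ hx
      rw [smul_eq_mul, map_mul, map_mul]
      have := (V.valuation_le_one_iff _).2 (hV c)
      calc _ ≤ 1 * V.valuation (algebraMap A K x) := by gcongr
        _ ≤ _ := by rwa [one_mul]

lemma InV.le_dom {V : ValuationSubring K} {J : Ideal A} {x : K} (h : InV V J x) {b : A}
    (hb : Dom V J b) : V.valuation x ≤ V.valuation (algebraMap A K b) := by
  obtain ⟨y, hy, h⟩ := h
  exact h.trans (hb.2 y hy)

lemma Dom.mul {V : ValuationSubring K} {I J : Ideal A} {a b : A} (ha : Dom V I a) (hb : Dom V J b) :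
    Dom V (I * J) (a * b) := by
  refine ⟨Ideal.mul_mem_mul ha.1 hb.1, ?_⟩
  intro y hy
  refine Submodule.mul_induction_on hy ?_ ?_
  · intro m hm n hn
    rw [map_mul, map_mul, map_mul, map_mul]
    exact mul_le_mul' (ha.2 m hm) (hb.2 n hn)
  · intro x y hx hy
    rw [map_add]
    exact (V.valuation.map_add _ _).trans (max_le hx hy)

lemma dom_top {V : ValuationSubring K} (hV : Over A V) : Dom V (⊤ : Ideal A) 1 := by
  refine ⟨trivial, fun y _ => ?_⟩
  simpa using (V.valuation_le_one_iff _).2 (hV y)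

lemma Dom.pow {V : ValuationSubring K} (hV : Over A V) {I : Ideal A} {a : A} (ha : Dom V I a)
    (n : ℕ) : Dom V (I ^ n) (a ^ n) := by
  induction n with
  | zero => simpa using dom_top hV
  | succ n ih => rw [pow_succ, pow_succ]; exact ih.mul ha

lemma Dom.prod {V : ValuationSubring K} (hV : Over A V) {ι : Type*} (s : Finset ι)
    {I : ι → Ideal A} {a : ι → A} (ha : ∀ i ∈ s, Dom V (I i) (a i)) :
    Dom V (∏ i ∈ s, I i) (∏ i ∈ s, a i) := by
  classical
  induction s using Finset.induction_on with
  | empty => simpa using dom_top hV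
  | insert i s hi ih =>
    rw [Finset.prod_insert hi, Finset.prod_insert hi]
    exact (ha i (by simp)).mul (ih fun j hj => ha j (by simp [hj]))

lemma integral_of_val {R F : Type*} [CommRing R] [Field F] [Algebra R F] (z : F)
    (h : ∀ V : ValuationSubring F, (∀ a : R, algebraMap R F a ∈ V) → z ∈ V) : IsIntegral R z := by
  have h1 : z ∈ ⨅ V : {V : ValuationSubring F // (Set.range (algebraMap R F)) ⊆ V.toSubring},
      V.1.toSubring := by
    rw [Subring.mem_iInf]
    intro V
    exact h V.1 (fun a => V.2 ⟨a, rfl⟩)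
  rw [iInf_valuationSubring_superset] at h1
  have h2 : IsIntegral (Subring.closure (Set.range (algebraMap R F))) z := h1
  have h3 : Subring.closure (Set.range (algebraMap R F)) = (algebraMap R F).range := by
    rw [← RingHom.coe_range, Subring.closure_eq]
  have h4 : (algebraMap R F).range.subtype.IsIntegralElem z := by
    rw [h3] at h2; exact h2
  obtain ⟨p, hp, hz⟩ := h4
  obtain ⟨q, hq1, hq2, hq3⟩ := Polynomial.lifts_and_natDegree_eq_and_monic
    (f := (algebraMap R F).rangeRestrict) (p := p) (by
      rw [Polynomial.lifts_iff_coeff_lifts]; intro n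
      exact (algebraMap R F).rangeRestrict_surjective _) hp
  refine ⟨q, hq3, ?_⟩
  rw [← hq1, Polynomial.eval₂_map] at hz
  exact hz

lemma val_root {F : Type*} [Field F] (V : ValuationSubring F) (w s : F) (p : Polynomial F)
    (hp : p.Monic) (hs : V.valuation s ≤ 1) (hc : ∀ j, V.valuation (s * p.coeff j) ≤ 1)
    (hw : p.eval w = 0) : V.valuation (s * w) ≤ 1 := by
  by_contra hlt
  push Not at hlt
  have hw1 : 1 < V.valuation w := by
    refine hlt.trans_le ?_
    rw [map_mul]
    calc _ ≤ 1 * V.valuation w := by gcongr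
      _ = _ := one_mul _
  have hw0 : 0 < V.valuation w := zero_lt_one.trans hw1
  have hs0 : 0 < V.valuation s := by
    rw [map_mul] at hlt
    by_contra h
    simp only [not_lt, le_zero_iff] at h
    rw [h, zero_mul] at hlt
    exact absurd hlt (by simp)
  rw [Polynomial.eval_eq_sum_range, Finset.sum_range_succ, hp.coeff_natDegree, one_mul] at hw
  have h1 : w ^ p.natDegree = - ∑ j ∈ Finset.range p.natDegree, p.coeff j * w ^ j := by
    linear_combination hw
  have h2 : V.valuation (w ^ p.natDegree) < V.valuation (w ^ p.natDegree) := by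
    conv_lhs => rw [h1, Valuation.map_neg]
    apply Valuation.map_sum_lt
    · rw [map_pow]; exact (pow_pos hw0 _).ne'
    · intro j hj
      have hj := Finset.mem_range.1 hj
      rw [map_pow, ← mul_lt_mul_iff_right₀ hs0, ← map_mul, ← mul_assoc, map_mul, map_pow]
      obtain ⟨e, he⟩ : ∃ e, p.natDegree = e + 1 := ⟨p.natDegree - 1, by omega⟩
      calc V.valuation (s * p.coeff j) * V.valuation w ^ j ≤ 1 * V.valuation w ^ e := by
            gcongr
            · exact hc j
            · exact hw1.le
            · omega
        _ < V.valuation (s * w) * V.valuation w ^ e := by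
            have : 0 < V.valuation w ^ e := pow_pos hw0 _
            gcongr
        _ = _ := by rw [he, map_mul, pow_succ, mul_assoc, mul_comm (V.valuation w)]
  exact lt_irrefl _ h2

end val
end MR

namespace MR

universe u

section lemL
variable {A K : Type u} [CommRing A] [Field K] [Algebra A K]

/-- The affine chart `A[I/c]`. -/
def Tsub (K : Type u) [Field K] [Algebra A K] (I : Ideal A) (c : A) (hc : c ∈ I) : Subring K where
  carrier := {w | ∃ n, ∃ i ∈ I ^ n, algebraMap A K c ^ n * w = algebraMap A K i}
  zero_mem' := ⟨0, 0, by simp, by simp⟩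
  one_mem' := ⟨0, 1, by simp, by simp⟩
  mul_mem' := by
    rintro x y ⟨n, i, hi, h⟩ ⟨m, j, hj, h'⟩
    refine ⟨n + m, i * j, by rw [pow_add]; exact Ideal.mul_mem_mul hi hj, ?_⟩
    rw [map_mul, ← h, ← h']; ring
  add_mem' := by
    rintro x y ⟨n, i, hi, h⟩ ⟨m, j, hj, h'⟩
    refine ⟨n + m, i * c ^ m + c ^ n * j, ?_, ?_⟩
    · rw [pow_add]
      exact Ideal.add_mem _ (Ideal.mul_mem_mul hi (Ideal.pow_mem_pow hc _))
        (Ideal.mul_mem_mul (Ideal.pow_mem_pow hc _) hj)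
    · simp only [map_mul, map_add, map_pow, ← h, ← h']; ring
  neg_mem' := by
    rintro x ⟨n, i, hi, h⟩
    exact ⟨n, -i, neg_mem hi, by rw [map_neg, ← h]; ring⟩

lemma mem_Tsub {I : Ideal A} {c : A} {hc : c ∈ I} {w : K} : w ∈ Tsub K I c hc ↔
  ∃ n, ∃ i ∈ I ^ n, algebraMap A K c ^ n * w = algebraMap A K i := Iff.rfl

lemma algebraMap_mem_Tsub {I : Ideal A} {c : A} {hc : c ∈ I} (a : A) :
    algebraMap A K a ∈ Tsub K I c hc := ⟨0, a, by simp, by simp⟩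

lemma div_mem_Tsub {I : Ideal A} {c : A} {hc : c ∈ I} (hc0 : algebraMap A K c ≠ 0) {a : A}
    (ha : a ∈ I) : algebraMap A K a / algebraMap A K c ∈ Tsub K I c hc :=
  ⟨1, a, by simpa, by rw [pow_one]; field_simp⟩

lemma Tsub_le {I : Ideal A} {c : A} {hc : c ∈ I} (hc0 : algebraMap A K c ≠ 0)
    {V : ValuationSubring K} (hV : Over A V) (hd : Dom V I c) : Tsub K I c hc ≤ V.toSubring := by
  rintro w ⟨n, i, hi, h⟩
  have h1 := (hd.pow hV n).2 i hi
  rw [← h, map_mul, map_pow, map_pow, map_pow] at h1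
  have h0 : V.valuation (algebraMap A K c) ^ n ≠ 0 := pow_ne_zero _ (by simpa using hc0)
  rw [mul_le_iff_le_one_right (zero_lt_iff.2 h0)] at h1
  exact (V.valuation_le_one_iff _).1 h1

/-- Raising the exponent. -/
lemma Tsub_raise {I : Ideal A} {c : A} (hc : c ∈ I) {w : K} {n N : ℕ} (hnN : n ≤ N)
    (h : ∃ i ∈ I ^ n, algebraMap A K c ^ n * w = algebraMap A K i) :
    ∃ i ∈ I ^ N, algebraMap A K c ^ N * w = algebraMap A K i := by
  obtain ⟨i, hi, h⟩ := h
  obtain ⟨k, rfl⟩ := Nat.exists_eq_add_of_le hnN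
  refine ⟨i * c ^ k, by rw [pow_add]; exact Ideal.mul_mem_mul hi (Ideal.pow_mem_pow hc _), ?_⟩
  rw [map_mul, map_pow, ← h]; ring

lemma Tsub_integral [IsNoetherianRing A] {I : Ideal A} {c : A} (hc : c ∈ I)
    (hc0 : algebraMap A K c ≠ 0)
    (hVC : ∀ n, VC K (I ^ n)) {w : K} (hw : IsIntegral (Tsub K I c hc) w) :
    w ∈ Tsub K I c hc := by
  obtain ⟨p, hp, hpw⟩ := hw
  have h1 : ∀ j, ∃ n, ∃ i ∈ I ^ n, algebraMap A K c ^ n * (p.coeff j : K) = algebraMap A K i :=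
    fun j => (p.coeff j).2
  choose n hn using h1
  let N := (Finset.range (p.natDegree + 1)).sup n
  have h2 : ∀ j, ∃ i ∈ I ^ N, algebraMap A K c ^ N * (p.coeff j : K) = algebraMap A K i := by
    intro j
    by_cases hj : j ≤ p.natDegree
    · exact Tsub_raise hc (Finset.le_sup (f := n) (Finset.mem_range.2 (by omega))) (hn j)
    · rw [Polynomial.coeff_eq_zero_of_natDegree_lt (by omega)]
      exact ⟨0, zero_mem _, by simp⟩
  refine ⟨N, ?_⟩
  obtain ⟨y, hy, h⟩ := hVC N (algebraMap A K c ^ N * w) (by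
    intro V hV
    obtain ⟨x, hx⟩ := exists_dom hV I
    refine ⟨x ^ N, Ideal.pow_mem_pow hx.1 _, ?_⟩
    have hx0 : V.valuation (algebraMap A K x ^ N) ≠ 0 := by
      have h3 := hx.2 c hc
      rw [map_pow]
      apply pow_ne_zero
      intro h4
      rw [h4, le_zero_iff] at h3
      exact hc0 (by simpa using h3)
    have hx0' : algebraMap A K x ^ N ≠ 0 := fun h => hx0 (by rw [h, map_zero])
    have h5 : ∀ i ∈ I ^ N, V.valuation (algebraMap A K i / algebraMap A K x ^ N) ≤ 1 := by
      intro i hi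
      rw [map_div₀]
      refine div_le_one_of_le₀ ?_ zero_le
      have := (hx.pow hV N).2 i hi
      rwa [map_pow] at this
    have h6 := val_root V w (algebraMap A K c ^ N / algebraMap A K x ^ N)
      (p.map (Tsub K I c hc).subtype) (hp.map _) (by
        have := h5 (c ^ N) (Ideal.pow_mem_pow hc _)
        rwa [map_pow] at this) (by
        intro j
        obtain ⟨i, hi, h⟩ := h2 j
        rw [Polynomial.coeff_map]
        have : algebraMap A K c ^ N / algebraMap A K x ^ N * (Tsub K I c hc).subtype (p.coeff j)
          = algebraMap A K i / algebraMap A K x ^ N := by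
          rw [← h]; simp only [Subring.subtype_apply]; ring
        rw [this]
        exact h5 i hi) (by
        rw [Polynomial.eval_map]; exact hpw)
    have h7 : algebraMap A K c ^ N * w = algebraMap A K x ^ N *
        (algebraMap A K c ^ N / algebraMap A K x ^ N * w) := by field_simp
    rw [h7, map_mul, map_pow (algebraMap A K)]
    exact mul_le_of_le_one_right' h6)
  exact ⟨y, hy, h.symm⟩

lemma pow_le_of_sq {I : Ideal A} {a c : A} (hc : c ∈ I) (ha : a ∈ I)
    (h : I ^ 2 ≤ Ideal.span {a} * I ⊔ Ideal.span {c} * I) (n : ℕ) :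
    I ^ (n + 1) ≤ Ideal.span {c ^ n} * I ⊔ Ideal.span {a} * I ^ n := by
  induction n with
  | zero => simp
  | succ n ih =>
    rw [pow_succ]
    refine (Ideal.mul_mono_left ih).trans ?_
    rw [Ideal.sup_mul, mul_assoc, mul_assoc, ← pow_succ, ← pow_two]
    refine sup_le ?_ le_sup_right
    refine (Ideal.mul_mono_right h).trans ?_
    rw [Ideal.mul_sup]
    refine sup_le ?_ ?_
    · refine le_trans ?_ le_sup_right
      rw [← mul_assoc, mul_comm (Ideal.span {c ^ n}), mul_assoc, pow_succ]
      refine Ideal.mul_mono_right (Ideal.mul_mono_left ?_)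
      rw [Ideal.span_singleton_le_iff_mem]; exact Ideal.pow_mem_pow hc _
    · rw [← mul_assoc, Ideal.span_singleton_mul_span_singleton, ← pow_succ]
      exact le_sup_left

theorem lemL [IsNoetherianRing A] (I J : Ideal A) (a c b : A) (ha : a ∈ I) (hc : c ∈ I)
    (hb : b ∈ J) (ha0 : algebraMap A K a ≠ 0) (hc0 : algebraMap A K c ≠ 0)
    (hb0 : algebraMap A K b ≠ 0)
    (hI2 : I ^ 2 ≤ Ideal.span {a} * I ⊔ Ideal.span {c} * I) (hVI : ∀ n, VC K (I ^ n))
    (hVJ : VC K J)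
    (hcov : ∀ V : ValuationSubring K, Over A V → Dom V I a ∨ (Dom V J b ∧ Dom V I c))
    (f : K) (hf : ∀ V : ValuationSubring K, Over A V → InV V (I * J) f) :
    ∃ x ∈ J, ∃ d ∈ I, f = algebraMap A K (a * x + b * d) := by
  by_cases hf0 : f = 0
  · exact ⟨0, zero_mem _, 0, zero_mem _, by simp [hf0]⟩
  set ι := algebraMap A K
  set T := Tsub K I c hc with hT
  set z : K := f / (ι c * ι b) with hz
  have hz0 : z ≠ 0 := div_ne_zero hf0 (mul_ne_zero hc0 hb0)
  have hzV : ∀ V : ValuationSubring K, Over A V → Dom V J b → Dom V I c → z ∈ V := by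
    intro V hV h1 h2
    rw [← V.valuation_le_one_iff, hz, map_div₀]
    refine div_le_one_of_le₀ ?_ zero_le
    have := (hf V hV).le_dom (h2.mul h1)
    rwa [map_mul] at this
  -- the polynomial
  obtain ⟨q0, hq0T, hh⟩ : ∃ q0 ∈ T, (1 - ι a / ι c * q0) * z ∈ T := by
    let α : T := ⟨ι a / ι c, div_mem_Tsub hc0 ha⟩
    by_cases htop : Ideal.span {α} = ⊤
    · rw [Ideal.span_singleton_eq_top] at htop
      obtain ⟨β, hβ⟩ := isUnit_iff_exists_inv.1 htop
      refine ⟨β, β.2, ?_⟩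
      have : ι a / ι c * (β : K) = 1 := congrArg Subtype.val hβ
      rw [this]; simp
    · let zi : K := z⁻¹
      letI : Invertible zi := invertibleOfNonzero (inv_ne_zero hz0)
      have hinv : ⅟zi = z := by simp [zi, invOf_eq_inv]
      obtain ⟨p, hp1, hp2⟩ := Algebra.exists_aeval_invOf_eq_zero_of_idealMap_adjoin_sup_span_eq_top zi
        (Ideal.span {α}) htop (by
        by_contra hne
        obtain ⟨V, hV1, hV2⟩ := Ideal.image_subset_nonunits_valuationSubring
          (A := (Algebra.adjoin T {zi}).toSubring) _ hne
        have hTV : T ≤ V.toSubring := fun t ht => hV1 ((Algebra.adjoin T {zi}).algebraMap_mem ⟨t, ht⟩)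
        have hVA : Over A V := fun x => hTV (algebraMap_mem_Tsub x)
        have h1 : zi ∈ V.nonunits := hV2 ⟨⟨zi, Algebra.subset_adjoin rfl⟩,
          Ideal.mem_sup_right (Ideal.subset_span rfl), rfl⟩
        have h2 : ι a / ι c ∈ V.nonunits := hV2 ⟨algebraMap T (Algebra.adjoin T {zi}) α,
          Ideal.mem_sup_left (Ideal.mem_map_of_mem _ (Ideal.subset_span rfl)), rfl⟩
        have h1' := (V.inv_mem_nonunits_iff.1 h1).resolve_left hz0
        rcases hcov V hVA with h | ⟨h, h'⟩
        · rw [V.mem_nonunits_iff, map_div₀, div_lt_one₀ (by simpa [zero_lt_iff] using hc0)] at h2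
          exact absurd (h.2 c hc) (not_le.2 h2)
        · exact h1' (hzV V hVA h h'))
      rw [hinv] at hp2
      obtain ⟨q, hq⟩ := Ideal.mem_span_singleton'.1 hp1
      refine ⟨-q, neg_mem q.2, ?_⟩
      have hlc : ((p.leadingCoeff : T) : K) = 1 - ι a / ι c * (-q : K) := by
        have : ((q * α : T) : K) = ((p.leadingCoeff - 1 : T) : K) := congrArg Subtype.val hq
        rw [Subring.coe_mul, AddSubgroupClass.coe_sub, Subring.coe_one] at this
        have h3 : (α : K) = ι a / ι c := rfl
        rw [h3] at this
        linear_combination -this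
      rw [← hlc]
      have := isIntegral_leadingCoeff_smul p z hp2
      exact Tsub_integral hc hc0 hVI this
  -- c T ⊆ I + a T
  obtain ⟨d, hd, τ, hτ, hdτ⟩ : ∃ d ∈ I, ∃ τ ∈ T, ι c * ((1 - ι a / ι c * q0) * z) = ι d + ι a * τ := by
    obtain ⟨n, i, hi, h⟩ := hh
    obtain ⟨i, hi, h⟩ := Tsub_raise hc (Nat.le_succ n) ⟨i, hi, h⟩
    obtain ⟨u, hu, v, hv, huv⟩ := Submodule.mem_sup.1 (pow_le_of_sq hc ha hI2 n hi)
    obtain ⟨d, hd, rfl⟩ := Ideal.mem_span_singleton_mul.1 hu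
    obtain ⟨j, hj, rfl⟩ := Ideal.mem_span_singleton_mul.1 hv
    refine ⟨d, hd, ι j / ι c ^ n, ⟨n, j, hj, by field_simp; rfl⟩, ?_⟩
    rw [← huv, map_add, map_mul, map_mul, map_pow] at h
    have hcn : ι c ^ n ≠ 0 := pow_ne_zero _ hc0
    apply mul_left_cancel₀ hcn
    rw [← mul_assoc, ← pow_succ, h]
    field_simp
    ring
  have hfz : f = z * (ι c * ι b) := by rw [hz]; field_simp
  have hkey : f - ι b * ι d = ι a * (ι b * (τ + q0 * z)) := by
    have h1 : ι c * ((1 - ι a / ι c * q0) * z) = ι c * z - ι a * q0 * z := by field_simp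
    rw [h1] at hdτ
    rw [hfz]
    linear_combination ι b * hdτ
  obtain ⟨x, hx, hxe⟩ := hVJ (ι b * (τ + q0 * z)) (by
    intro V hV
    rcases hcov V hV with h | ⟨h, h'⟩
    · obtain ⟨y, hy⟩ := exists_dom hV J
      refine ⟨y, hy.1, ?_⟩
      have h1 : V.valuation (f - ι b * ι d) ≤ V.valuation (ι a) * V.valuation (ι y) := by
        refine (V.valuation.map_sub _ _).trans (max_le ?_ ?_)
        · have := (hf V hV).le_dom (h.mul hy)
          rwa [map_mul, map_mul] at this
        · rw [map_mul, mul_comm]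
          exact mul_le_mul' (h.2 d hd) (hy.2 b hb)
      rw [hkey, map_mul] at h1
      have : 0 < V.valuation (ι a) := by simpa [zero_lt_iff] using ha0
      exact (mul_le_mul_iff_right₀ this).1 h1
    · refine ⟨b, hb, ?_⟩
      rw [map_mul]
      refine mul_le_of_le_one_right' ?_
      rw [V.valuation_le_one_iff]
      have hTV := Tsub_le (hc := hc) hc0 hV h'
      exact V.add_mem _ _ (hTV hτ) (V.mul_mem _ _ (hTV hq0T) (hzV V hV h h')))
  refine ⟨x, hx, d, hd, ?_⟩
  rw [map_add, map_mul, map_mul]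
  change _ = ι a * ι x + _
  rw [show ι x = _ from hxe]
  linear_combination hkey

end lemL
end MR

namespace MR

universe u

section vcrees
variable {A K : Type u} [CommRing A] [IsDomain A] [Field K] [Algebra A K] [IsFractionRing A K]

theorem vc_of_rees (I : Ideal A) (hI : I ≠ ⊥) (hR : IsIntegrallyClosed (reesAlgebra I)) (n : ℕ) :
    VC K (I ^ n) := by
  intro x hx
  obtain ⟨c, hc, hc0⟩ := Submodule.exists_mem_ne_zero_of_ne_bot hI
  let F := FractionRing (reesAlgebra I)
  let ι : reesAlgebra I →+* F := algebraMap _ _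
  have hι : Function.Injective ι := IsFractionRing.injective _ _
  let ε : A →+* reesAlgebra I := algebraMap _ _
  have hε : Function.Injective ε := by
    intro a b h
    have h1 : (Polynomial.C a : Polynomial A) = Polynomial.C b := congrArg Subtype.val h
    exact Polynomial.C_injective h1
  have hg : Function.Injective (ι.comp ε) := hι.comp hε
  let j : K →+* F := IsFractionRing.lift hg
  have hj : ∀ a, j (algebraMap A K a) = ι (ε a) := fun a => IsFractionRing.lift_algebraMap hg a
  let mo : ∀ (n : ℕ) (y : A), y ∈ I ^ n → reesAlgebra I := fun n y hy =>
    ⟨Polynomial.monomial n y, reesAlgebra.monomial_mem.2 hy⟩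
  have hc1 : ι (ε c) ≠ 0 := fun h => hc0 (hg (by simpa using h))
  let T : F := ι (mo 1 c (by simpa using hc)) / ι (ε c)
  have hmo : ∀ n y (hy : y ∈ I ^ n), ι (ε y) * T ^ n = ι (mo n y hy) := by
    intro n y hy
    have h1 : ε c ^ n * mo n y hy = ε y * mo 1 c (by simpa using hc) ^ n := by
      apply Subtype.ext
      change (Polynomial.C c) ^ n * Polynomial.monomial n y =
        Polynomial.C y * (Polynomial.monomial 1 c) ^ n
      simp only [← Polynomial.C_mul_X_pow_eq_monomial]
      ring
    have h2 := congrArg ι h1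
    simp only [map_mul, map_pow] at h2
    simp only [T, div_pow]
    rw [mul_div_assoc', div_eq_iff (pow_ne_zero n hc1), ← h2, mul_comm]
  have hhInt : IsIntegral (reesAlgebra I) (j x * T ^ n) := by
    apply integral_of_val
    intro V' hV'
    have hV : Over A (V'.comap j) := by
      intro a
      rw [ValuationSubring.mem_comap, hj]
      exact hV' _
    obtain ⟨y, hy, hxy⟩ := hx _ hV
    by_cases hy0 : algebraMap A K y = 0
    · rw [hy0, map_zero, le_zero_iff] at hxy
      have : x = 0 := by simpa using hxy
      rw [this]; simp
    have h1 : x / algebraMap A K y ∈ V'.comap j := by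
      rw [← ValuationSubring.valuation_le_one_iff, map_div₀]
      exact div_le_one_of_le₀ hxy zero_le
    rw [ValuationSubring.mem_comap] at h1
    have h2 : j x * T ^ n = j (x / algebraMap A K y) * ι (mo n y hy) := by
      rw [← hmo n y hy, ← hj, ← mul_assoc, ← map_mul, div_mul_cancel₀ _ hy0]
    rw [h2]
    exact V'.mul_mem _ _ h1 (hV' _)
  obtain ⟨f, hf⟩ := (isIntegrallyClosed_iff F).1 hR hhInt
  obtain ⟨p, q, hq, rfl⟩ := IsFractionRing.div_surjective (A := A) x
  have hq0 : q ≠ 0 := nonZeroDivisors.ne_zero hq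
  have hq1 : ι (ε q) ≠ 0 := fun h => hq0 (hg (by simpa using h))
  rw [map_div₀, hj, hj] at hf
  have h3 : ε q * (ε c ^ n * f) = ε p * mo 1 c (by simpa using hc) ^ n := by
    apply hι
    simp only [map_mul, map_pow]
    change ι f = _ at hf
    rw [hf]
    have hT : ι (ε c) * T = ι (mo 1 c (by simpa using hc)) := mul_div_cancel₀ _ hc1
    rw [← hT, mul_pow, mul_left_comm, ← mul_assoc (ι (ε q)), mul_div_cancel₀ _ hq1,
      mul_left_comm]
  have h4 := congrArg (fun g : reesAlgebra I => (g : Polynomial A).coeff n) h3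
  have h5 : q * (c ^ n * (f : Polynomial A).coeff n) = p * c ^ n := by
    change (Polynomial.C q * (Polynomial.C c ^ n * (f : Polynomial A))).coeff n =
      (Polynomial.C p * (Polynomial.monomial 1 c) ^ n).coeff n at h4
    rw [← map_pow, Polynomial.coeff_C_mul, Polynomial.coeff_C_mul, Polynomial.coeff_C_mul,
      Polynomial.monomial_pow, one_mul, Polynomial.coeff_monomial, if_pos rfl] at h4
    exact h4
  have h6 : q * (f : Polynomial A).coeff n = p :=
    mul_left_cancel₀ (pow_ne_zero n hc0) (by linear_combination h5)
  refine ⟨(f : Polynomial A).coeff n, (mem_reesAlgebra_iff I _).1 f.2 n, ?_⟩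
  rw [← h6, map_mul, mul_div_cancel_left₀]
  intro h
  exact hq0 (IsFractionRing.injective A K (by simpa using h))

end vcrees
end MR

namespace MR

universe u

section good
variable {A K : Type u} [CommRing A] [Field K] [Algebra A K]

/-- Reduction data for a family of ideals. -/
structure Good (K : Type u) [Field K] [Algebra A K] {ι : Type} (I : ι → Ideal A) (a b : ι → A) :
    Prop where
  ha : ∀ i, a i ∈ I i
  hb : ∀ i, b i ∈ I i
  ha0 : ∀ i, algebraMap A K (a i) ≠ 0
  hb0 : ∀ i, algebraMap A K (b i) ≠ 0
  sq : ∀ i, I i ^ 2 ≤ Ideal.span {a i} * I i ⊔ Ideal.span {b i} * I i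
  vc0 : VC K (⊤ : Ideal A)
  vc : ∀ i n, VC K (I i ^ n)
  cov : ∀ V : ValuationSubring K, Over A V → (∀ i, Dom V (I i) (a i)) ∨ (∀ i, Dom V (I i) (b i))

lemma Good.symm {ι : Type} {I : ι → Ideal A} {a b : ι → A} (h : Good K I a b) : Good K I b a :=
  ⟨h.hb, h.ha, h.hb0, h.ha0, fun i => (h.sq i).trans (by rw [sup_comm]), h.vc0, h.vc,
    fun V hV => (h.cov V hV).symm⟩

lemma Good.reindex {ι κ : Type} {I : ι → Ideal A} {a b : ι → A} (h : Good K I a b) (g : κ → ι) :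
    Good K (fun i => I (g i)) (fun i => a (g i)) (fun i => b (g i)) :=
  ⟨fun i => h.ha _, fun i => h.hb _, fun i => h.ha0 _, fun i => h.hb0 _, fun i => h.sq _, h.vc0,
    fun i => h.vc _, fun V hV => (h.cov V hV).imp (fun h i => h _) (fun h i => h _)⟩

theorem Good.vc_prod [IsNoetherianRing A] {ι : Type} {I : ι → Ideal A} {a b : ι → A}
    (h : Good K I a b) (s : Finset ι) (n : ι → ℕ) : VC K (∏ i ∈ s, I i ^ n i) := by
  classical
  induction s using Finset.induction_on with
  | empty => simpa using h.vc0
  | insert i s hi ih =>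
    rw [Finset.prod_insert hi]
    generalize n i = m
    induction m with
    | zero => simpa using ih
    | succ m ihm =>
      rw [pow_succ', mul_assoc]
      intro f hf
      obtain ⟨x, hx, d, hd, hfe⟩ := lemL (I i) (I i ^ m * ∏ i ∈ s, I i ^ n i) (a i) (b i)
        (b i ^ m * ∏ i ∈ s, b i ^ n i) (h.ha i) (h.hb i)
        (Ideal.mul_mem_mul (Ideal.pow_mem_pow (h.hb i) _)
          (Ideal.prod_mem_prod fun j _ => Ideal.pow_mem_pow (h.hb j) _)) (h.ha0 i) (h.hb0 i)
        (by
          rw [map_mul, map_pow, map_prod]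
          refine mul_ne_zero (pow_ne_zero _ (h.hb0 i)) (Finset.prod_ne_zero_iff.2 fun j _ => ?_)
          rw [map_pow]; exact pow_ne_zero _ (h.hb0 j)) (h.sq i) (h.vc i) ihm (by
          intro V hV
          rcases h.cov V hV with h1 | h1
          · exact Or.inl (h1 i)
          · exact Or.inr ⟨((h1 i).pow hV m).mul (Dom.prod hV s fun j _ => (h1 j).pow hV _), h1 i⟩)
        f hf
      refine ⟨_, Ideal.add_mem _ (Ideal.mul_mem_mul (h.ha i) hx) ?_, hfe.symm⟩
      rw [mul_comm _ d]
      exact Ideal.mul_mem_mul hd (Ideal.mul_mem_mul (Ideal.pow_mem_pow (h.hb i) _)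
          (Ideal.prod_mem_prod fun j _ => Ideal.pow_mem_pow (h.hb j) _))

end good
end MR

namespace MR

universe u

section normal
variable {A K : Type u} [CommRing A] [Field K] [Algebra A K] 

lemma coeff_scale {r : ℕ} (u : Fin r → K) (f : MvPolynomial (Fin r) K) (n : Fin r →₀ ℕ) :
    MvPolynomial.coeff n (MvPolynomial.aeval (fun i => MvPolynomial.C (u i) * MvPolynomial.X i) f) =
      (∏ i, u i ^ n i) * MvPolynomial.coeff n f := by
  classical
  induction f using MvPolynomial.induction_on' with
  | monomial m a =>
    rw [MvPolynomial.aeval_monomial, Finsupp.prod_fintype _ _ (by simp)]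
    have : MvPolynomial.C a * ∏ i, (MvPolynomial.C (u i) * MvPolynomial.X i) ^ m i =
        MvPolynomial.monomial m ((∏ i, u i ^ m i) * a) := by
      rw [MvPolynomial.monomial_eq, Finsupp.prod_fintype _ _ (by simp)]
      simp only [mul_pow, Finset.prod_mul_distrib, map_mul, map_prod, map_pow]
      ring
    rw [MvPolynomial.algebraMap_eq, this, MvPolynomial.coeff_monomial, MvPolynomial.coeff_monomial]
    split_ifs with h
    · rw [h]
    · simp
  | add p q hp hq => rw [map_add, MvPolynomial.coeff_add, MvPolynomial.coeff_add, hp, hq]; ring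

variable [IsDomain A] [IsNoetherianRing A] [IsFractionRing A K]

theorem mr_coeff_integral {r : ℕ} (I : Fin r → Ideal A) (hI : ∀ i, I i ≠ ⊥)
    (hvc : ∀ n : Fin r → ℕ, VC K (∏ i, I i ^ n i)) (s : MvPolynomial (Fin r) K)
    (hs : ((MvPolynomial.map (algebraMap A K)).comp (multiReesAlgebra I).val.toRingHom).IsIntegralElem s) :
    ∃ f : multiReesAlgebra I, MvPolynomial.map (algebraMap A K) (f : MvPolynomial (Fin r) A) = s := by
  have hinj := IsFractionRing.injective A K
  have key : ∀ n : Fin r →₀ ℕ, ∃ y ∈ ∏ i, I i ^ n i, algebraMap A K y = MvPolynomial.coeff n s := by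
    intro n
    apply hvc
    intro V hV
    choose x hx using fun i => exists_dom hV (I i)
    have hx0 : ∀ i, V.valuation (algebraMap A K (x i)) ≠ 0 := by
      intro i h0
      obtain ⟨c, hc, hc0⟩ := Submodule.exists_mem_ne_zero_of_ne_bot (hI i)
      have := (hx i).2 c hc
      rw [h0, le_zero_iff] at this
      simp at this
      exact hc0 this
    have hD : ∀ n : Fin r → ℕ, Dom V (∏ i, I i ^ n i) (∏ i, x i ^ n i) := fun n =>
      Dom.prod hV _ fun i _ => (hx i).pow hV _
    have hDu : ∀ n : Fin r → ℕ, V.valuation (∏ i, (algebraMap A K (x i))⁻¹ ^ n i) *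
        V.valuation (algebraMap A K (∏ i, x i ^ n i)) = 1 := by
      intro n
      rw [← map_mul, map_prod, ← Finset.prod_mul_distrib]
      rw [Finset.prod_eq_one, map_one]
      intro i _
      rw [map_pow, ← mul_pow, inv_mul_cancel₀, one_pow]
      intro h; exact hx0 i (by rw [h, map_zero])
    let u : Fin r → K := fun i => (algebraMap A K (x i))⁻¹
    let σ : MvPolynomial (Fin r) K →+* MvPolynomial (Fin r) K :=
      (MvPolynomial.aeval (fun i => MvPolynomial.C (u i) * MvPolynomial.X i) :
        MvPolynomial (Fin r) K →ₐ[K] MvPolynomial (Fin r) K).toRingHom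
    have hσ : ∀ f n, MvPolynomial.coeff n (σ f) = (∏ i, u i ^ n i) * MvPolynomial.coeff n f :=
      coeff_scale u
    let θ := (MvPolynomial.map (algebraMap A K)).comp (multiReesAlgebra I).val.toRingHom
    obtain ⟨p, hp, hps⟩ := hs
    have hps2 : Polynomial.eval₂ (σ.comp θ) (σ s) p = 0 := by
      rw [← Polynomial.hom_eval₂]
      have : Polynomial.eval₂ θ s p = 0 := hps
      rw [this, map_zero]
    letI : Algebra (MvPolynomial (Fin r) V) (MvPolynomial (Fin r) K) :=
      MvPolynomial.algebraMvPolynomial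
    obtain ⟨q, hq1, hq2, hq3⟩ := Polynomial.lifts_and_natDegree_eq_and_monic
      (f := algebraMap (MvPolynomial (Fin r) V) (MvPolynomial (Fin r) K)) (p := p.map (σ.comp θ)) (by
        rw [Polynomial.lifts_iff_coeff_lifts]
        intro j
        rw [Polynomial.coeff_map]
        change _ ∈ Set.range (MvPolynomial.map (algebraMap V K))
        rw [MvPolynomial.mem_range_map_iff_coeffs_subset]
        intro y hy
        obtain ⟨m, -, hm⟩ := MvPolynomial.mem_coeffs_iff.1 hy
        refine ⟨⟨y, ?_⟩, rfl⟩
        rw [hm, RingHom.comp_apply, hσ, ← V.valuation_le_one_iff, map_mul, ← hDu m]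
        gcongr
        change V.valuation (MvPolynomial.coeff m (MvPolynomial.map (algebraMap A K) ((p.coeff j : multiReesAlgebra I) : MvPolynomial (Fin r) A))) ≤ _
        rw [MvPolynomial.coeff_map]
        exact (hD m).2 _ ((mem_mr I _).1 (p.coeff j).2 m)) (hp.map _)
    have hhInt : IsIntegral (MvPolynomial (Fin r) V) (σ s) := by
      refine ⟨q, hq3, ?_⟩
      rw [← Polynomial.eval_map, hq1, Polynomial.eval_map]
      exact hps2
    have h1 := MvPolynomial.isIntegral_iff_isIntegral_coeff.1 hhInt n
    obtain ⟨v, hv⟩ := (isIntegrallyClosed_iff K).1 (inferInstance : IsIntegrallyClosed V) h1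
    have h2 : V.valuation (MvPolynomial.coeff n (σ s)) ≤ 1 := by
      rw [V.valuation_le_one_iff, ← hv]; exact v.2
    refine ⟨_, (hD n).1, ?_⟩
    rw [hσ, map_mul, ← hDu n] at h2
    refine (mul_le_mul_iff_right₀ ?_).1 h2
    rw [zero_lt_iff]
    exact left_ne_zero_of_mul_eq_one (hDu n)
  choose y hy hy2 using key
  obtain ⟨g, hg⟩ : s ∈ Set.range (MvPolynomial.map (algebraMap A K)) := by
    rw [MvPolynomial.mem_range_map_iff_coeffs_subset]
    intro z hz
    obtain ⟨m, -, hm⟩ := MvPolynomial.mem_coeffs_iff.1 hz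
    exact ⟨y m, by rw [hm, hy2]⟩
  refine ⟨⟨g, ?_⟩, hg⟩
  rw [mem_mr]
  intro n
  have : MvPolynomial.coeff n g = y n := by
    apply hinj
    rw [hy2, ← hg, MvPolynomial.coeff_map]
  rw [this]; exact hy n

theorem mr_normal {r : ℕ} (I : Fin r → Ideal A) (hI : ∀ i, I i ≠ ⊥)
    (hvc : ∀ n : Fin r → ℕ, VC K (∏ i, I i ^ n i)) : IsIntegrallyClosed (multiReesAlgebra I) := by
  let S := MvPolynomial (Fin r) K
  let L := FractionRing S
  let F := FractionRing (multiReesAlgebra I)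
  let θ : multiReesAlgebra I →+* S :=
    (MvPolynomial.map (algebraMap A K)).comp (multiReesAlgebra I).val.toRingHom
  have hθ : Function.Injective θ := (MvPolynomial.map_injective _ (IsFractionRing.injective A K)).comp
    Subtype.val_injective
  have hι : Function.Injective (algebraMap S L) := IsFractionRing.injective _ _
  have hg : Function.Injective ((algebraMap S L).comp θ) := hι.comp hθ
  let φ : F →+* L := IsFractionRing.lift hg
  have hφ : ∀ x, φ (algebraMap _ F x) = algebraMap S L (θ x) :=
    fun x => IsFractionRing.lift_algebraMap hg x
  rw [isIntegrallyClosed_iff F]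
  rintro z ⟨p, hp, hz⟩
  have h1 : Polynomial.eval₂ ((algebraMap S L).comp θ) (φ z) p = 0 := by
    have h2 : φ.comp (algebraMap _ F) = (algebraMap S L).comp θ := RingHom.ext hφ
    rw [← h2, ← Polynomial.hom_eval₂, hz, map_zero]
  have h2 : IsIntegral S (φ z) := ⟨p.map θ, hp.map _, by rw [Polynomial.eval₂_map, h1]⟩
  obtain ⟨s, hs⟩ := (isIntegrallyClosed_iff L).1 (inferInstance : IsIntegrallyClosed S) h2
  have h3 : θ.IsIntegralElem s := by
    refine ⟨p, hp, ?_⟩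
    apply hι
    rw [Polynomial.hom_eval₂, hs, h1, map_zero]
  obtain ⟨f, hf⟩ := mr_coeff_integral I hI hvc s h3
  refine ⟨f, φ.injective ?_⟩
  rw [hφ, ← hs]
  exact congrArg _ hf

end normal
end MR

namespace MR

universe u

section s2
variable {A : Type u} [CommRing A] [IsDomain A] [IsNoetherianRing A] [IsLocalRing A]

open IsLocalRing

theorem s2_aux (K : Type u) [Field K] [Algebra A K] [IsFractionRing A K]
    [IsIntegrallyClosed A] (hdim : ringKrullDim A = 2) {a b : A} (hb0 : b ≠ 0)
    (hab : ∀ p : Ideal A, p.IsPrime → a ∈ p → b ∈ p → p = maximalIdeal A)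
    {p q : A} (h : a * p = b * q) : b ∣ p := by
  by_contra hbp
  have hp0 : (Ideal.Quotient.mk (Ideal.span {b}) p) ≠ 0 := by
    rw [Ne, Ideal.Quotient.eq_zero_iff_mem, Ideal.mem_span_singleton]; exact hbp
  obtain ⟨P, hP, hle⟩ := exists_le_isAssociatedPrime_of_isNoetherianRing (R := A) _ hp0
  obtain ⟨hPp, w, hw⟩ := isAssociatedPrime_iff.1 hP
  obtain ⟨w, rfl⟩ := Ideal.Quotient.mk_surjective w
  have hmem : ∀ x y : A, x ∈ (⊥ : Submodule A (A ⧸ Ideal.span {b})).colon {Ideal.Quotient.mk _ y} ↔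
      b ∣ x * y := by
    intro x y
    rw [Submodule.mem_colon_singleton, Submodule.mem_bot, ← Ideal.mem_span_singleton,
      ← Ideal.Quotient.eq_zero_iff_mem, map_mul, Algebra.smul_def]
    rfl
  have hPm : P = maximalIdeal A := hab P hPp (hle ((hmem _ _).2 ⟨q, h⟩))
    (hle ((hmem _ _).2 ⟨p, rfl⟩))
  have hw1 : ∀ x ∈ maximalIdeal A, b ∣ x * w := by
    intro x hx
    rw [← hmem, ← hw, hPm]; exact hx
  have hw2 : ¬ b ∣ w := by
    intro hd
    have : (1 : A) ∈ P := by rw [hw, hmem, one_mul]; exact hd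
    exact hPp.ne_top ((Ideal.eq_top_iff_one _).2 this)
  by_cases hcase : ∃ x ∈ maximalIdeal A, ∃ u, IsUnit u ∧ x * w = b * u
  · obtain ⟨x, hx, u, hu, hxw⟩ := hcase
    have := dim_le_length (S := A) [x] (by simpa using hx) (by
      intro p hp hxp
      have hxp : x ∈ p := hxp x (by simp)
      refine le_antisymm (le_maximalIdeal hp.ne_top) ?_
      intro y hy
      obtain ⟨z, hz⟩ := hw1 y hy
      have h1 : u * y = x * z := by
        apply mul_left_cancel₀ hb0
        linear_combination x * hz - y * hxw
      have h2 : u * y ∈ p := by rw [h1]; exact Ideal.mul_mem_right _ _ hxp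
      exact (hp.mem_or_mem h2).resolve_left fun h => hp.ne_top (Ideal.eq_top_of_isUnit_mem _ h hu))
    rw [hdim] at this
    simp at this
  · push Not at hcase
    have hbK : algebraMap A K b ≠ 0 := by simpa using hb0
    have hN : (maximalIdeal A) ≠ ⊥ := by
      intro h0
      have := dim_le_length (S := A) [] (by simp) (by
        intro p hp _
        exact le_antisymm (le_maximalIdeal hp.ne_top) (by rw [h0]; exact bot_le))
      rw [hdim] at this
      simp only [List.length_nil, Nat.cast_zero] at this
      exact absurd this (by decide)
    have hhInt := isIntegral_of_smul_mem_submodule (R := A) (A := K)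
      (Submodule.map (Algebra.linearMap A K) (maximalIdeal A)) (by
        intro hk
        obtain ⟨x, hx, hx0⟩ := Submodule.exists_mem_ne_zero_of_ne_bot hN
        have : algebraMap A K x ∈ (⊥ : Submodule A K) := by rw [← hk]; exact ⟨x, hx, rfl⟩
        rw [Submodule.mem_bot] at this
        exact hx0 (by simpa using this))
      (Submodule.FG.map _ (IsNoetherian.noetherian _)) (algebraMap A K w / algebraMap A K b) (by
        rintro _ ⟨x, hx, rfl⟩
        obtain ⟨z, hz⟩ := hw1 x hx
        refine ⟨z, ?_, ?_⟩
        · by_contra hzm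
          exact hcase x hx z (by simpa using hzm) hz
        · rw [Algebra.linearMap_apply, Algebra.linearMap_apply, smul_eq_mul]
          have : algebraMap A K x * algebraMap A K w = algebraMap A K b * algebraMap A K z := by
            rw [← map_mul, hz, map_mul]
          field_simp
          linear_combination -this)
    obtain ⟨y, hy⟩ := IsIntegrallyClosed.algebraMap_eq_of_integral hhInt
    apply hw2
    refine ⟨y, ?_⟩
    apply IsFractionRing.injective A K
    rw [map_mul, hy, mul_div_cancel₀ _ hbK]

theorem s2 [IsIntegrallyClosed A] (hdim : ringKrullDim A = 2) {a b : A} (hb0 : b ≠ 0)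
    (hab : ∀ p : Ideal A, p.IsPrime → a ∈ p → b ∈ p → p = maximalIdeal A)
    {p q : A} (h : a * p = b * q) : b ∣ p := s2_aux (FractionRing A) hdim hb0 hab h

end s2
end MR

namespace MR

universe u

open RingTheory.Sequence IsLocalRing

lemma wr_snoc {R : Type*} [CommRing R] (rs : List R) (z : R) :
    IsWeaklyRegular R (rs ++ [z]) ↔ IsWeaklyRegular R rs ∧
      ∀ w, z * w ∈ Ideal.ofList rs → w ∈ Ideal.ofList rs := by
  rw [isWeaklyRegular_append_iff, isWeaklyRegular_singleton_iff, isSMulRegular_quot_iff]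

lemma exists_dominating {R F : Type*} [CommRing R] [IsDomain R] [Field F] [Algebra R F]
    (hinj : Function.Injective (algebraMap R F)) (Q : Ideal R) [Q.IsPrime] :
    ∃ V : ValuationSubring F, (∀ x, algebraMap R F x ∈ V) ∧
      ∀ x, x ∈ Q ↔ V.valuation (algebraMap R F x) < 1 := by
  have hg : ∀ y : Q.primeCompl, IsUnit (algebraMap R F y) := by
    intro y
    rw [isUnit_iff_ne_zero]
    intro h
    have : (y : R) = 0 := hinj (by rw [h, map_zero])
    exact y.2 (by rw [this]; exact zero_mem _)
  let g : Localization.AtPrime Q →+* F := IsLocalization.lift hg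
  have hgx : ∀ x, g (algebraMap R _ x) = algebraMap R F x := fun x => IsLocalization.lift_eq hg x
  obtain ⟨V, h, hloc⟩ := exists_factor_valuationRing g
  have h1 : ∀ x, algebraMap R F x ∈ V := fun x => by rw [← hgx]; exact h _
  refine ⟨V, h1, fun x => ?_⟩
  constructor
  · intro hx
    refine lt_of_le_of_ne ((V.valuation_le_one_iff _).2 (h1 x)) ?_
    intro he
    have hu : IsUnit (g.codRestrict V.toSubring h (algebraMap R _ x)) := by
      have : IsUnit (⟨algebraMap R F x, h1 x⟩ : V) := by
        exact (V.valuation_eq_one_iff _).2 he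
      have e : g.codRestrict V.toSubring h (algebraMap R _ x) =
        (⟨algebraMap R F x, h1 x⟩ : V.toSubring) := Subtype.ext (hgx x)
      rw [e]; exact this
    have hu2 := hloc.map_nonunit _ hu
    have := (IsLocalization.AtPrime.isUnit_to_map_iff (Localization.AtPrime Q) Q x).1 hu2
    exact this hx
  · intro hx
    by_contra hxQ
    have hu : IsUnit (algebraMap R (Localization.AtPrime Q) x) :=
      (IsLocalization.AtPrime.isUnit_to_map_iff (Localization.AtPrime Q) Q x).2 hxQ
    have hu2 : IsUnit (⟨algebraMap R F x, h1 x⟩ : V) := by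
      have := hu.map (g.codRestrict V.toSubring h)
      have e : g.codRestrict V.toSubring h (algebraMap R _ x) =
        (⟨algebraMap R F x, h1 x⟩ : V.toSubring) := Subtype.ext (hgx x)
      rw [e] at this; exact this
    exact hx.ne ((V.valuation_eq_one_iff _).1 hu2)

section rees
variable {A K : Type u} [CommRing A] [IsDomain A] [Field K] [Algebra A K] [IsFractionRing A K]

/-- A monomial in the Rees algebra. -/
noncomputable def mo (I : Ideal A) (n : ℕ) (y : A) (hy : y ∈ I ^ n) : reesAlgebra I :=
  ⟨Polynomial.monomial n y, reesAlgebra.monomial_mem.2 hy⟩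

lemma rees_val (I : Ideal A) (a : A) (ha : a ∈ I) (ha0 : a ≠ 0) (F : Type u) [Field F]
    [Algebra (reesAlgebra I) F] (hinj : Function.Injective (algebraMap (reesAlgebra I) F))
    (V' : ValuationSubring F) (hV' : ∀ x, algebraMap (reesAlgebra I) F x ∈ V') (j : K →+* F)
    (hj : ∀ x, j (algebraMap A K x) = algebraMap (reesAlgebra I) F (algebraMap A _ x))
    (hD : Dom (V'.comap j) I a)
    (hat : V'.valuation (algebraMap _ F (mo I 1 a (by simpa using ha))) < 1) (n : ℕ) (hn : n ≠ 0)
    (y : A) (hy : y ∈ I ^ n) : V'.valuation (algebraMap _ F (mo I n y hy)) < 1 := by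
  have hV : Over A (V'.comap j) := by
    intro a
    rw [ValuationSubring.mem_comap, hj]
    exact hV' _
  have haK : algebraMap A K a ^ n ≠ 0 := pow_ne_zero _ (by simpa using ha0)
  have h1 := (hD.pow hV n).2 y hy
  have h2 : algebraMap A K y / algebraMap A K a ^ n ∈ V'.comap j := by
    rw [← ValuationSubring.valuation_le_one_iff, map_div₀]
    rw [map_pow] at h1
    exact div_le_one_of_le₀ h1 zero_le
  rw [ValuationSubring.mem_comap] at h2
  have h3 : algebraMap _ F (mo I n y hy) = j (algebraMap A K y / algebraMap A K a ^ n) *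
      algebraMap _ F (mo I 1 a (by simpa using ha)) ^ n := by
    have h4 : algebraMap A (reesAlgebra I) a ^ n * mo I n y hy = algebraMap A (reesAlgebra I) y *
        mo I 1 a (by simpa using ha) ^ n := by
      apply Subtype.ext
      change (Polynomial.C a) ^ n * Polynomial.monomial n y =
        Polynomial.C y * (Polynomial.monomial 1 a) ^ n
      simp only [← Polynomial.C_mul_X_pow_eq_monomial]
      ring
    have h5 : j (algebraMap A K a ^ n) ≠ 0 := by simpa using haK
    rw [map_div₀, div_mul_eq_mul_div, eq_div_iff h5, map_pow, hj, hj, mul_comm]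
    have h6 := congrArg (algebraMap (reesAlgebra I) F) h4
    simp only [map_mul, map_pow] at h6
    exact h6
  rw [h3, map_mul, map_pow]
  have h7 := (V'.valuation_le_one_iff _).2 h2
  have h8 := pow_lt_one₀ zero_le hat hn
  refine lt_of_le_of_lt ?_ h8
  exact mul_le_of_le_one_left' h7

lemma rees_sum (I : Ideal A) (f : reesAlgebra I) : f = algebraMap A _ ((f : Polynomial A).coeff 0) +
    ∑ i ∈ Finset.range (f : Polynomial A).natDegree,
      mo I (i + 1) ((f : Polynomial A).coeff (i + 1)) ((mem_reesAlgebra_iff I _).1 f.2 _) := by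
  apply Subtype.ext
  conv_lhs => rw [Polynomial.as_sum_range (f : Polynomial A), Finset.sum_range_succ', add_comm]
  rw [Subalgebra.coe_add, AddSubmonoidClass.coe_finsetSum]
  rfl

lemma rees_prime [IsLocalRing A] (I : Ideal A) (a b : A) (ha : a ∈ I) (hb : b ∈ I) (ha0 : a ≠ 0)
    (hb0 : b ≠ 0)
    (hcov : ∀ V : ValuationSubring K, Over A V → Dom V I a ∨ Dom V I b)
    (hab : ∀ p : Ideal A, p.IsPrime → a ∈ p → b ∈ p → p = maximalIdeal A)
    (Q : Ideal (reesAlgebra I)) [Q.IsPrime] (h1 : mo I 1 b (by simpa using hb) ∈ Q)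
    (h2 : algebraMap A _ a ∈ Q)
    (h3 : mo I 1 a (by simpa using ha) - algebraMap A _ b ∈ Q) (f : reesAlgebra I)
    (hf : (f : Polynomial A).coeff 0 ∈ maximalIdeal A) : f ∈ Q := by
  have h4 : mo I 1 a (by simpa using ha) ∈ Q := by
    have h5 : mo I 1 a (by simpa using ha) * mo I 1 a (by simpa using ha) =
      mo I 1 a (by simpa using ha) * (mo I 1 a (by simpa using ha) - algebraMap A _ b) +
        algebraMap A _ a * mo I 1 b (by simpa using hb) := by
      apply Subtype.ext
      change Polynomial.monomial 1 a * Polynomial.monomial 1 a =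
        Polynomial.monomial 1 a * (Polynomial.monomial 1 a - Polynomial.C b) +
          Polynomial.C a * Polynomial.monomial 1 b
      simp only [← Polynomial.C_mul_X_pow_eq_monomial]
      ring
    have h6 : mo I 1 a (by simpa using ha) * mo I 1 a (by simpa using ha) ∈ Q := by
      rw [h5]
      exact Ideal.add_mem _ (Ideal.mul_mem_left _ _ h3) (Ideal.mul_mem_right _ _ h2)
    rcases ‹Q.IsPrime›.mem_or_mem h6 with h | h <;> exact h
  have h5 : algebraMap A (reesAlgebra I) b ∈ Q := by
    have := Ideal.sub_mem _ h4 h3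
    simpa using this
  have h6 := hab (Q.comap (algebraMap A (reesAlgebra I))) inferInstance h2 h5
  let F := FractionRing (reesAlgebra I)
  have hinj : Function.Injective (algebraMap (reesAlgebra I) F) := IsFractionRing.injective _ _
  have hε : Function.Injective (algebraMap A (reesAlgebra I)) := by
    intro a b h
    have h1 : (Polynomial.C a : Polynomial A) = Polynomial.C b := congrArg Subtype.val h
    exact Polynomial.C_injective h1
  have hg : Function.Injective ((algebraMap (reesAlgebra I) F).comp (algebraMap A (reesAlgebra I))) :=
    hinj.comp hε
  let j : K →+* F := IsFractionRing.lift hg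
  have hj : ∀ a, j (algebraMap A K a) = algebraMap _ F (algebraMap A (reesAlgebra I) a) :=
    fun a => IsFractionRing.lift_algebraMap hg a
  obtain ⟨V', hV', hQ⟩ := exists_dominating hinj Q
  have hV : Over A (V'.comap j) := by
    intro a
    rw [ValuationSubring.mem_comap, hj]
    exact hV' _
  have key : ∀ n (y : A) (hy : y ∈ I ^ n), n ≠ 0 → mo I n y hy ∈ Q := by
    intro n y hy hn
    rw [hQ]
    rcases hcov _ hV with h | h
    · exact rees_val I a ha ha0 F hinj V' hV' j hj h ((hQ _).1 h4) n hn y hy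
    · exact rees_val I b hb hb0 F hinj V' hV' j hj h ((hQ _).1 h1) n hn y hy
  rw [rees_sum I f]
  refine Ideal.add_mem _ ?_ (Ideal.sum_mem _ fun i _ => key _ _ _ (by omega))
  rw [← h6] at hf
  exact hf

end rees
end MR

namespace MR

universe u

open RingTheory.Sequence IsLocalRing

section rees
variable {A K : Type u} [CommRing A] [IsDomain A] [Field K] [Algebra A K] [IsFractionRing A K]
  [IsLocalRing A] [IsNoetherianRing A]

/-- The augmentation. -/
noncomputable def raug (I : Ideal A) : reesAlgebra I →+* A :=
  (Polynomial.constantCoeff).comp (reesAlgebra I).val.toRingHom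

lemma raug_apply (I : Ideal A) (f : reesAlgebra I) : raug I f = (f : Polynomial A).coeff 0 := rfl

theorem rees_half (hdim : ringKrullDim A = 2) (I : Ideal A) (hIm : I ≤ maximalIdeal A)
    (a b : A) (ha : a ∈ I) (hb : b ∈ I) (ha0 : a ≠ 0) (hb0 : b ≠ 0)
    (hcov : ∀ V : ValuationSubring K, Over A V → Dom V I a ∨ Dom V I b)
    (hab : ∀ p : Ideal A, p.IsPrime → a ∈ p → b ∈ p → p = maximalIdeal A)
    (hR : IsCohenMacaulayRing (reesAlgebra I)) (x : A) (hx : x ∈ I ^ 2) :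
    ∃ g, ∃ h ∈ I, x = b * g + a * h := by
  have hbp : b ∈ I ^ 1 := by simpa using hb
  have hap : a ∈ I ^ 1 := by simpa using ha
  have hxp : x ∈ I ^ 1 := Ideal.pow_le_pow_right (by norm_num) hx
  let M : Ideal (reesAlgebra I) := (maximalIdeal A).comap (raug I)
  have hMp : M.IsPrime := Ideal.comap_isPrime _ _
  have hMm : ∀ f, f ∈ M ↔ (f : Polynomial A).coeff 0 ∈ maximalIdeal A := fun f => Iff.rfl
  have hCM : IsCohenMacaulayLocalRing (Localization.AtPrime M) := hR.2 M hMp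
  obtain ⟨_, hN, n, hn, hSd⟩ := cm_depth hCM
  let ψ := algebraMap (reesAlgebra I) (Localization.AtPrime M)
  let e1 := mo I 1 b hbp
  let e2 := algebraMap A (reesAlgebra I) a
  let e3 := mo I 1 a hap - algebraMap A (reesAlgebra I) b
  have hmax : ∀ f, ψ f ∈ maximalIdeal (Localization.AtPrime M) ↔ f ∈ M := fun f =>
    IsLocalization.AtPrime.to_map_mem_maximal_iff (Localization.AtPrime M) M f
  have hmo0 : ∀ y hy, (mo I 1 y hy : Polynomial A).coeff 0 = 0 := by
    intro y hy
    change (Polynomial.monomial 1 y).coeff 0 = 0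
    rw [Polynomial.coeff_monomial]; simp
  have hal0 : ∀ y, ((algebraMap A (reesAlgebra I) y : reesAlgebra I) : Polynomial A).coeff 0 = y := by
    intro y
    change (Polynomial.C y).coeff 0 = y
    simp
  have hm : ∀ r ∈ [ψ e1, ψ e2, ψ e3], r ∈ maximalIdeal (Localization.AtPrime M) := by
    intro r hr
    simp only [List.mem_cons, List.not_mem_nil, or_false] at hr
    rcases hr with rfl | rfl | rfl
    · rw [hmax, hMm, hmo0]; exact zero_mem _
    · rw [hmax, hMm, hal0]; exact hIm ha
    · rw [hmax, hMm]
      change (mo I 1 a hap - algebraMap A (reesAlgebra I) b : Polynomial A).coeff 0 ∈ _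
      rw [Polynomial.coeff_sub, hmo0, hal0, zero_sub]
      exact neg_mem (hIm hb)
  have hp : ∀ p : Ideal (Localization.AtPrime M), p.IsPrime → (∀ r ∈ [ψ e1, ψ e2, ψ e3], r ∈ p) →
      p = maximalIdeal (Localization.AtPrime M) := by
    intro p hp hr
    have hle : M ≤ p.comap ψ := by
      intro f hf
      have : (p.comap ψ).IsPrime := Ideal.comap_isPrime _ _
      exact rees_prime (K := K) I a b ha hb ha0 hb0 hcov hab (p.comap ψ) (hr (ψ e1) (by simp))
        (hr (ψ e2) (by simp)) (hr (ψ e3) (by simp)) f hf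
    refine le_antisymm (le_maximalIdeal hp.ne_top) ?_
    rw [← Localization.AtPrime.map_eq_maximalIdeal, Ideal.map_le_iff_le_comap]
    exact hle
  have hlow : (3 : WithBot ℕ∞) ≤ ringKrullDim (Localization.AtPrime M) := by
    have hg : ∀ y : M.primeCompl, IsUnit (raug I y) := by
      intro y
      have := y.2
      by_contra h
      exact this h
    have : IsDomain (Localization.AtPrime M) :=
      IsLocalization.isDomain_localization M.primeCompl_le_nonZeroDivisors
    have h1 := ringKrullDim_succ_le_of_surjective
      (IsLocalization.lift hg : Localization.AtPrime M →+* A) (by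
        intro y
        refine ⟨ψ (algebraMap A _ y), ?_⟩
        rw [IsLocalization.lift_eq, raug_apply, hal0]) (r := ψ e1) (by
        rw [mem_nonZeroDivisors_iff_ne_zero]
        intro h
        have h2 : e1 = 0 := IsLocalization.injective (Localization.AtPrime M)
          M.primeCompl_le_nonZeroDivisors (by rw [map_zero]; exact h)
        have h3 : (Polynomial.monomial 1 b : Polynomial A) = 0 := congrArg Subtype.val h2
        exact hb0 (by simpa using h3)) (by
        rw [IsLocalization.lift_eq, raug_apply, hmo0])
    rw [hdim] at h1
    exact h1
  have hup := dim_le_length [ψ e1, ψ e2, ψ e3] hm hp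
  have hn3 : n = 3 := by
    rw [hSd] at hup hlow
    have h1 : n ≤ 3 := by exact_mod_cast hup
    have h2 : 3 ≤ n := by exact_mod_cast hlow
    omega
  subst hn3
  have hreg : IsWeaklyRegular (Localization.AtPrime M) ([ψ e1, ψ e2] ++ [ψ e3]) :=
    sop_regular [ψ e1, ψ e2, ψ e3] hm hn (fun p hp' _ => hp p hp')
  rw [wr_snoc] at hreg
  have hlist : Ideal.ofList [ψ e1, ψ e2] = (Ideal.span {e1, e2}).map ψ := by
    rw [Ideal.map_span, Ideal.ofList]
    congr 1
    ext z
    simp [Set.image_pair]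
  have h1 := hreg.2 (ψ (mo I 1 x hxp)) (by
    rw [hlist, ← map_mul]
    apply Ideal.mem_map_of_mem
    rw [Ideal.mem_span_pair]
    refine ⟨- algebraMap A _ x, mo I 2 x hx, ?_⟩
    apply Subtype.ext
    change - Polynomial.C x * Polynomial.monomial 1 b + Polynomial.monomial 2 x * Polynomial.C a =
      (Polynomial.monomial 1 a - Polynomial.C b) * Polynomial.monomial 1 x
    simp only [← Polynomial.C_mul_X_pow_eq_monomial]
    ring)
  rw [hlist, IsLocalization.algebraMap_mem_map_algebraMap_iff M.primeCompl] at h1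
  obtain ⟨s, hs, hsx⟩ := h1
  obtain ⟨g, h, hgh⟩ := Ideal.mem_span_pair.1 hsx
  have h2 := congrArg (fun f : reesAlgebra I => (f : Polynomial A).coeff 1) hgh
  have h3 : (g : Polynomial A).coeff 0 * b + (h : Polynomial A).coeff 1 * a =
      (s : Polynomial A).coeff 0 * x := by
    change ((g : Polynomial A) * Polynomial.monomial 1 b + (h : Polynomial A) * Polynomial.C a).coeff 1
      = ((s : Polynomial A) * Polynomial.monomial 1 x).coeff 1 at h2
    simpa [← Polynomial.C_mul_X_pow_eq_monomial, ← mul_assoc, Polynomial.coeff_mul_X,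
      Polynomial.coeff_mul_C] using h2
  have hu : IsUnit ((s : Polynomial A).coeff 0) := by
    by_contra hu
    exact hs hu
  obtain ⟨v, hv⟩ := isUnit_iff_exists_inv.1 hu
  refine ⟨v * (g : Polynomial A).coeff 0, v * (h : Polynomial A).coeff 1,
    Ideal.mul_mem_left _ _ ?_, ?_⟩
  · simpa using (mem_reesAlgebra_iff I _).1 h.2 1
  · linear_combination (-x) * hv - v * h3

theorem rees_sq [IsIntegrallyClosed A] (hdim : ringKrullDim A = 2) (I : Ideal A)
    (hIm : I ≤ maximalIdeal A)
    (a b : A) (ha : a ∈ I) (hb : b ∈ I) (ha0 : a ≠ 0) (hb0 : b ≠ 0)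
    (hcov : ∀ V : ValuationSubring K, Over A V → Dom V I a ∨ Dom V I b)
    (hab : ∀ p : Ideal A, p.IsPrime → a ∈ p → b ∈ p → p = maximalIdeal A)
    (hR : IsCohenMacaulayRing (reesAlgebra I)) :
    I ^ 2 ≤ Ideal.span {a} * I ⊔ Ideal.span {b} * I := by
  intro x hx
  obtain ⟨g, h, hh, h1⟩ := rees_half hdim I hIm a b ha hb ha0 hb0 hcov hab hR x hx
  obtain ⟨g', h', hh', h2⟩ := rees_half hdim I hIm b a hb ha hb0 ha0 (fun V hV => (hcov V hV).symm)
    (fun p hp h1 h2 => hab p hp h2 h1) hR x hx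
  obtain ⟨c, hc⟩ := s2 hdim hb0 hab (p := h - g') (q := h' - g) (by linear_combination h2 - h1)
  have hx : x = a * (h - b * c) + b * h' := by linear_combination h2 - a * hc
  rw [hx]
  exact Ideal.add_mem _ (Ideal.mem_sup_left (Ideal.mul_mem_mul (Ideal.mem_span_singleton_self _)
    (sub_mem hh (Ideal.mul_mem_right _ _ hb))))
    (Ideal.mem_sup_right (Ideal.mul_mem_mul (Ideal.mem_span_singleton_self _) hh'))

end rees
end MR

namespace MR

universe u

section dim
variable {C D : Type*} [CommRing C] [IsNoetherianRing C] [CommRing D] [IsDomain D] [Algebra C D]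

lemma dim_adjoin_step (E : Subalgebra C D) [IsNoetherianRing E] (y : D) (p q : C)
    (hq : algebraMap C D q ≠ 0) (h : algebraMap C D q * y = algebraMap C D p) (E' : Subalgebra C D)
    (hE' : E' = ((Polynomial.aeval y : Polynomial E →ₐ[E] D).restrictScalars C).range) :
    ringKrullDim E' ≤ ringKrullDim E := by
  subst hE'
  set f := (Polynomial.aeval y : Polynomial E →ₐ[E] D).restrictScalars C
  have h1 := ringKrullDim_succ_le_of_surjective f.rangeRestrict.toRingHom f.rangeRestrict_surjective
    (r := Polynomial.C (algebraMap C E q) * Polynomial.X - Polynomial.C (algebraMap C E p)) (by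
      rw [mem_nonZeroDivisors_iff_ne_zero]
      intro h0
      have h1 := congrArg (fun g => Polynomial.coeff g 1) h0
      simp only [Polynomial.coeff_sub, Polynomial.coeff_C_mul, Polynomial.coeff_X_one, mul_one,
        Polynomial.coeff_C_succ, sub_zero, Polynomial.coeff_zero] at h1
      exact hq (congrArg Subtype.val h1)) (by
      apply Subtype.ext
      change Polynomial.aeval y (Polynomial.C (algebraMap C E q) * Polynomial.X -
        Polynomial.C (algebraMap C E p)) = 0
      rw [map_sub, map_mul, Polynomial.aeval_X, Polynomial.aeval_C, Polynomial.aeval_C]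
      change algebraMap C D q * y - algebraMap C D p = 0
      rw [h, sub_self])
  rw [Polynomial.ringKrullDim_of_isNoetherianRing] at h1
  exact (ENat.WithBot.add_le_add_one_right_iff).1 h1

lemma dim_adjoin (hinj : Function.Injective (algebraMap C D)) (s : Finset D)
    (hs : ∀ y ∈ s, ∃ p q : C, algebraMap C D q ≠ 0 ∧ algebraMap C D q * y = algebraMap C D p) :
    ringKrullDim (Algebra.adjoin C (s : Set D)) ≤ ringKrullDim C := by
  classical
  induction s using Finset.induction_on with
  | empty =>
    rw [Finset.coe_empty, Algebra.adjoin_empty]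
    refine ringKrullDim_le_of_surjective (algebraMap C (⊥ : Subalgebra C D)) ?_
    rintro ⟨_, ⟨c, rfl⟩⟩
    exact ⟨c, rfl⟩
  | insert y s hy ih =>
    refine le_trans ?_ (ih fun z hz => hs z (by simp [hz]))
    obtain ⟨p, q, hq, h⟩ := hs y (by simp)
    have : IsNoetherianRing (Algebra.adjoin C (s : Set D)) :=
      isNoetherianRing_of_fg (Subalgebra.fg_adjoin_finset s)
    refine dim_adjoin_step _ y p q hq h _ ?_
    apply le_antisymm
    · apply Algebra.adjoin_le
      intro z hz
      rw [Finset.coe_insert, Set.mem_insert_iff] at hz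
      rcases hz with rfl | hz
      · exact ⟨Polynomial.X, Polynomial.aeval_X _⟩
      · exact ⟨Polynomial.C ⟨z, Algebra.subset_adjoin hz⟩, Polynomial.aeval_C _ _⟩
    · rintro _ ⟨g, rfl⟩
      change Polynomial.aeval y g ∈ _
      rw [Polynomial.aeval_eq_sum_range]
      refine Subalgebra.sum_mem _ fun i _ => ?_
      rw [Algebra.smul_def]
      refine Subalgebra.mul_mem _ ?_ (Subalgebra.pow_mem _ (Algebra.subset_adjoin (by simp)) _)
      exact Algebra.adjoin_mono (by simp) (g.coeff i).2

end dim
end MR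

namespace MR

universe u

lemma avoid_one (k : Type*) [Field k] [Infinite k] {A : Type u} [CommRing A] [Algebra k A]
    (I : Ideal A) (S : Set (Ideal A)) (hS : S.Finite) (h : ∀ W ∈ S, ¬ I ≤ W) :
    ∃ a ∈ I, ∀ W ∈ S, a ∉ W := by
  classical
  by_contra hcon
  push Not at hcon
  have : Finite S := hS
  obtain ⟨W, hW⟩ := Subspace.exists_eq_top_of_iUnion_eq_univ (k := k) (E := I.restrictScalars k)
    (p := fun W : S => (W.1.restrictScalars k).comap (I.restrictScalars k).subtype) (by
      ext ⟨a, ha⟩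
      simp only [Set.mem_iUnion, Set.mem_univ, iff_true]
      obtain ⟨W, hW, haW⟩ := hcon a ha
      exact ⟨⟨W, hW⟩, haW⟩)
  refine h W.1 W.2 fun a ha => ?_
  have : (⟨a, ha⟩ : I.restrictScalars k) ∈
    (W.1.restrictScalars k).comap (I.restrictScalars k).subtype := by rw [hW]; trivial
  exact this

lemma avoid_prod (k : Type*) [Field k] [Infinite k] {A : Type u} [CommRing A] [Algebra k A]
    {ι : Type} (I : ι → Ideal A) (s : Finset ι) : ∀ (S : Set (Ideal A)) (_ : S.Finite)
    (_ : ∀ W ∈ S, ¬ ∏ i ∈ s, I i ≤ W),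
    ∃ a : ι → A, (∀ i ∈ s, a i ∈ I i) ∧ ∀ W ∈ S, ∏ i ∈ s, a i ∉ W := by
  classical
  induction s using Finset.induction_on with
  | empty =>
    intro S hS h
    refine ⟨fun _ => 0, by simp, fun W hW h1 => h W hW ?_⟩
    rw [Finset.prod_empty] at h1
    rw [(Ideal.eq_top_iff_one W).2 h1]
    exact le_top
  | insert i s hi ih =>
    intro S hS h
    obtain ⟨x, hx, hxW⟩ := avoid_one k (I i)
      ((fun W : Ideal A => W.colon ((∏ i ∈ s, I i : Ideal A) : Set A)) '' S) (hS.image _) (by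
        rintro _ ⟨W, hW, rfl⟩ hle
        apply h W hW
        rw [Finset.prod_insert hi, Ideal.mul_le]
        intro r hr t ht
        exact Submodule.mem_colon.1 (hle hr) t ht)
    obtain ⟨a, ha, haW⟩ := ih ((fun W : Ideal A => W.colon {x}) '' S) (hS.image _) (by
        rintro _ ⟨W, hW, rfl⟩ hle
        apply hxW _ ⟨W, hW, rfl⟩
        rw [Submodule.mem_colon]
        intro t ht
        have := Submodule.mem_colon_singleton.1 (hle ht)
        rw [smul_eq_mul] at this ⊢
        rwa [mul_comm])
    refine ⟨Function.update a i x, ?_, ?_⟩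
    · intro j hj
      by_cases hji : j = i
      · subst hji; simpa using hx
      · rw [Function.update_of_ne hji]
        exact ha j ((Finset.mem_insert.1 hj).resolve_left hji)
    · intro W hW hcon
      refine haW _ ⟨W, hW, rfl⟩ ?_
      rw [Submodule.mem_colon_singleton, smul_eq_mul, mul_comm]
      rw [Finset.prod_insert hi, Function.update_self] at hcon
      convert hcon using 2
      refine Finset.prod_congr rfl fun j hj => ?_
      rw [Function.update_of_ne]
      rintro rfl; exact hi hj

section center
variable {A K : Type u} [CommRing A] [Field K] [Algebra A K]

/-- The center of a valuation. -/
def center (V : ValuationSubring K) (hV : Over A V) : Ideal A :=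
  (IsLocalRing.maximalIdeal V).comap ((algebraMap A K).codRestrict V.toSubring hV)

instance (V : ValuationSubring K) (hV : Over A V) : (center V hV).IsPrime := by
  unfold center; infer_instance

lemma mem_center (V : ValuationSubring K) (hV : Over A V) (c : A) :
    c ∈ center V hV ↔ V.valuation (algebraMap A K c) < 1 := by
  unfold center
  exact ValuationSubring.valuation_lt_one_iff V _

end center

lemma no_chain {B : Type*} [CommRing B] [IsDomain B] (hd : ringKrullDim B ≤ 2) (P Q1 Q2 : Ideal B)
    [P.IsPrime] [Q1.IsPrime] [Q2.IsPrime] (h0 : Q1 ≠ ⊥) (h1 : Q1 < Q2) (h2 : Q2 < P) : False := by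
  let p0 : PrimeSpectrum B := ⟨⊥, Ideal.isPrime_bot⟩
  let p1 : PrimeSpectrum B := ⟨Q1, inferInstance⟩
  let p2 : PrimeSpectrum B := ⟨Q2, inferInstance⟩
  let p3 : PrimeSpectrum B := ⟨P, inferInstance⟩
  have h01 : p0 < p1 := (bot_lt_iff_ne_bot.2 h0 : (⊥ : Ideal B) < Q1)
  have h12 : p1 < p2 := h1
  have h23 : p2 < p3 := h2
  have e1 := Order.height_add_one_le h01
  have e2 := Order.height_add_one_le h12
  have e3 := Order.height_add_one_le h23
  have e4 : (Order.height p3 : WithBot ℕ∞) ≤ 2 := (Order.height_le_krullDim p3).trans hd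
  have e5 : Order.height p3 ≤ 2 := WithBot.coe_le_coe.1 e4
  have e6 : (3 : ℕ∞) ≤ Order.height p3 := by
    calc (3 : ℕ∞) = 0 + 1 + 1 + 1 := by norm_num
      _ ≤ Order.height p0 + 1 + 1 + 1 := by gcongr; exact zero_le
      _ ≤ Order.height p1 + 1 + 1 := by gcongr
      _ ≤ Order.height p2 + 1 := by gcongr
      _ ≤ _ := e3
  have := e6.trans e5
  revert this
  decide

lemma chart_top {B : Type*} [CommRing B] [IsDomain B] (hd : ringKrullDim B ≤ 2) (M : Ideal B)
    (hM : M ≠ ⊥) (α β : B) (hα : ∀ P ∈ M.minimalPrimes, α ∉ P)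
    (hβ : ∀ P ∈ (M ⊔ Ideal.span {α}).minimalPrimes, β ∉ P) (P : Ideal B) [P.IsPrime] (h0 : M ≤ P)
    (h1 : α ∈ P) (h2 : β ∈ P) : False := by
  obtain ⟨Q2, hQ2, hQ2P⟩ := Ideal.exists_minimalPrimes_le (I := M ⊔ Ideal.span {α}) (J := P)
    (sup_le h0 ((Ideal.span_singleton_le_iff_mem P).2 h1))
  have := hQ2.1.1
  obtain ⟨Q1, hQ1, hQ1Q2⟩ := Ideal.exists_minimalPrimes_le (I := M) (J := Q2)
    (le_sup_left.trans hQ2.1.2)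
  have := hQ1.1.1
  have hα2 : α ∈ Q2 := hQ2.1.2 (Ideal.mem_sup_right (Ideal.mem_span_singleton_self α))
  refine no_chain hd P Q1 Q2 ?_ (lt_of_le_of_ne hQ1Q2 ?_) (lt_of_le_of_ne hQ2P ?_)
  · rintro rfl
    exact hM (le_bot_iff.1 hQ1.1.2)
  · rintro rfl
    exact hα _ hQ1 hα2
  · rintro rfl
    exact hβ _ hQ2 h2

end MR

namespace MR

universe u

section chart
variable {A K : Type u} [CommRing A] [Field K] [Algebra A K]

open Classical in
/-- Blow-up chart. -/
noncomputable def Chart (K : Type u) [Field K] [Algebra A K] (G : Finset A) (x : A) : Subalgebra A K :=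
  Algebra.adjoin A ((G.image fun g => algebraMap A K g / algebraMap A K x : Finset K) : Set K)

instance [IsNoetherianRing A] (G : Finset A) (x : A) : IsNoetherianRing (Chart K G x) :=
  isNoetherianRing_of_fg (Subalgebra.fg_adjoin_finset _)

lemma chart_dim [IsNoetherianRing A] (hinj : Function.Injective (algebraMap A K)) (G : Finset A)
    (x : A) (hx : x ≠ 0) : ringKrullDim (Chart K G x) ≤ ringKrullDim A := by
  classical
  have hx' : algebraMap A K x ≠ 0 := by rwa [ne_eq, map_eq_zero_iff _ hinj]
  refine dim_adjoin hinj _ fun y hy => ?_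
  obtain ⟨g, _, rfl⟩ := Finset.mem_image.1 hy
  refine ⟨g, x, hx', ?_⟩
  field_simp

lemma chart_ext (hinj : Function.Injective (algebraMap A K)) (G : Finset A)
    (x : A) (hx : x ≠ 0) (c : A) (hc : c ∈ Ideal.span (G : Set A)) :
    ∃ w : Chart K G x, algebraMap A K c = algebraMap A K x * w := by
  classical
  have hx' : algebraMap A K x ≠ 0 := by rwa [ne_eq, map_eq_zero_iff _ hinj]
  refine Submodule.span_induction (p := fun c _ => ∃ w : Chart K G x, algebraMap A K c = algebraMap A K x * w)
    ?_ ?_ ?_ ?_ hc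
  · intro g hg
    refine ⟨⟨algebraMap A K g / algebraMap A K x, Algebra.subset_adjoin ?_⟩, ?_⟩
    · exact Finset.mem_coe.2 (Finset.mem_image.2 ⟨g, hg, rfl⟩)
    · change _ = _ * (algebraMap A K g / algebraMap A K x)
      field_simp
  · exact ⟨0, by simp⟩
  · rintro y z _ _ ⟨w, hw⟩ ⟨w', hw'⟩
    exact ⟨w + w', by rw [map_add, hw, hw']; push_cast; ring⟩
  · rintro t y _ ⟨w, hw⟩
    refine ⟨algebraMap A _ t * w, ?_⟩
    rw [smul_eq_mul, map_mul, hw]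
    change _ = _ * (algebraMap A K t * (w : K))
    ring

lemma chart_over (G : Finset A) (x : A) (V : ValuationSubring K) (hV : Over A V)
    (hx : Dom V (Ideal.span (G : Set A)) x) (hx' : algebraMap A K x ≠ 0) :
    Over (Chart K G x) V := by
  classical
  let T : Subalgebra A K := { V.toSubring with algebraMap_mem' := hV }
  have : Chart K G x ≤ T := by
    apply Algebra.adjoin_le
    intro y hy
    obtain ⟨g, hg, rfl⟩ := Finset.mem_image.1 (Finset.mem_coe.1 hy)
    change algebraMap A K g / algebraMap A K x ∈ V
    rw [← ValuationSubring.valuation_le_one_iff, map_div₀]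
    exact div_le_one_of_le₀ (hx.2 g (Ideal.subset_span hg)) zero_le
  intro w
  exact this w.2

/-- Bad ideal. -/
def Wid (B : Subalgebra A K) (x : A) (P : Ideal B) : Ideal A where
  carrier := {c | ∃ w ∈ P, algebraMap A K c = algebraMap A K x * (w : B)}
  zero_mem' := ⟨0, P.zero_mem, by simp⟩
  add_mem' := by
    rintro y z ⟨w, hwP, hw⟩ ⟨w', hwP', hw'⟩
    exact ⟨w + w', P.add_mem hwP hwP', by rw [map_add, hw, hw']; push_cast; ring⟩
  smul_mem' := by
    rintro t y ⟨w, hwP, hw⟩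
    refine ⟨algebraMap A _ t * w, P.mul_mem_left _ hwP, ?_⟩
    rw [smul_eq_mul, map_mul, hw]
    change _ = _ * (algebraMap A K t * (w : K))
    ring

lemma notMem_Wid (B : Subalgebra A K) (x : A) (hx' : algebraMap A K x ≠ 0) (P : Ideal B)
    [hP : P.IsPrime] : x ∉ Wid B x P := by
  rintro ⟨w, hw, h⟩
  have : w = 1 := by
    apply Subtype.ext
    have : (algebraMap A K x) * 1 = algebraMap A K x * (w : K) := by rw [mul_one]; exact h
    exact (mul_left_cancel₀ hx' this).symm
  exact hP.ne_top ((Ideal.eq_top_iff_one P).2 (this ▸ hw))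

end chart

lemma pow_le_prod {A : Type u} [CommRing A] {ι : Type} (s : Finset ι) (m : Ideal A)
    (I : ι → Ideal A) (h : ∀ i, ∃ n, m ^ n ≤ I i) : ∃ n, m ^ n ≤ ∏ i ∈ s, I i := by
  classical
  induction s using Finset.induction_on with
  | empty => exact ⟨0, by simp⟩
  | insert i s hi ih =>
    obtain ⟨n, hn⟩ := ih
    obtain ⟨n', hn'⟩ := h i
    refine ⟨n' + n, ?_⟩
    rw [Finset.prod_insert hi, pow_add]
    exact Ideal.mul_mono hn' hn

lemma dom_of_prod {A K : Type u} [CommRing A] [Field K] [Algebra A K] {ι : Type} [Fintype ι]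
    {V : ValuationSubring K} (I : ι → Ideal A) (a : ι → A) (ha : ∀ i, a i ∈ I i)
    (h0 : algebraMap A K (∏ i, a i) ≠ 0)
    (h : Dom V (∏ i, I i) (∏ i, a i)) (i : ι) : Dom V (I i) (a i) := by
  classical
  refine ⟨ha i, fun y hy => ?_⟩
  have h1 := h.2 (y * ∏ j ∈ Finset.univ.erase i, a j) (by
    rw [← Finset.mul_prod_erase Finset.univ I (Finset.mem_univ i)]
    exact Ideal.mul_mem_mul hy (Ideal.prod_mem_prod fun j _ => ha j))
  rw [← Finset.mul_prod_erase Finset.univ a (Finset.mem_univ i)] at h1 h0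
  rw [map_mul, map_mul, map_mul, map_mul] at h1
  rw [map_mul] at h0
  refine (mul_le_mul_iff_left₀ ?_).1 h1
  rw [zero_lt_iff, ne_eq, map_eq_zero]
  exact right_ne_zero_of_mul h0

theorem gen_elems (k : Type*) [Field k] [Infinite k] {A K : Type u} [CommRing A] [IsDomain A]
    [IsNoetherianRing A] [IsLocalRing A] [Algebra k A] [Field K] [Algebra A K] [IsFractionRing A K]
    (hdim : ringKrullDim A = 2) {ι : Type} [Fintype ι] (I : ι → Ideal A)
    (hprim : ∀ i, ∃ n, IsLocalRing.maximalIdeal A ^ n ≤ I i) :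
    ∃ a b : ι → A, (∀ i, a i ∈ I i) ∧ (∀ i, b i ∈ I i) ∧ ∏ i, a i ≠ 0 ∧ ∏ i, b i ≠ 0 ∧
      (∀ V : ValuationSubring K, Over A V → (∀ i, Dom V (I i) (a i)) ∨ (∀ i, Dom V (I i) (b i))) ∧
      ∀ p : Ideal A, p.IsPrime → ∏ i, a i ∈ p → ∏ i, b i ∈ p → p = IsLocalRing.maximalIdeal A := by
  classical
  have hinj : Function.Injective (algebraMap A K) := IsFractionRing.injective A K
  have hne : ∀ {x : A}, x ≠ 0 → algebraMap A K x ≠ 0 := by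
    intro x hx; rwa [ne_eq, map_eq_zero_iff _ hinj]
  set m := IsLocalRing.maximalIdeal A with hm
  have hht : m.height = 2 := by
    have := IsLocalRing.maximalIdeal_height_eq_ringKrullDim (R := A)
    rw [hdim] at this
    exact WithBot.coe_injective this
  have hm0 : m ≠ ⊥ := by
    intro h
    rw [h, Ideal.height_bot] at hht
    exact absurd hht (by decide)
  obtain ⟨N, hN⟩ := pow_le_prod Finset.univ m I hprim
  set J := ∏ i, I i with hJ
  have hJ0 : J ≠ ⊥ := by
    intro h
    rw [h, le_bot_iff] at hN
    exact hm0 (eq_zero_of_pow_eq_zero (n := N) hN)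
  obtain ⟨G, hG⟩ := (isNoetherianRing_iff_ideal_fg A).1 inferInstance J
  replace hG : Ideal.span (G : Set A) = J := hG
  have hGJ : ∀ x ∈ G, x ∈ J := fun x hx => hG ▸ Ideal.subset_span hx
  let mB : ∀ x : A, Ideal (Chart K G x) := fun x => m.map (algebraMap A _)
  have hmB : ∀ x, mB x ≠ ⊥ := by
    intro x h
    obtain ⟨c, hc, hc0⟩ := Submodule.exists_mem_ne_zero_of_ne_bot hm0
    have h1 : algebraMap A (Chart K G x) c ∈ mB x := Ideal.mem_map_of_mem _ hc
    rw [h, Ideal.mem_bot] at h1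
    exact hne hc0 (congrArg Subtype.val h1)
  -- choose a
  obtain ⟨a, ha, haW⟩ := avoid_prod k I Finset.univ
    ({⊥} ∪ ⋃ x ∈ (G.erase 0 : Finset A), (Wid (Chart K G x) x) '' (mB x).minimalPrimes)
    ((Set.finite_singleton _).union (Set.Finite.biUnion (Finset.finite_toSet _) fun x _ =>
      (Ideal.finite_minimalPrimes_of_isNoetherianRing _ _).image _)) (by
      rintro W (rfl | hW) hle
      · exact hJ0 (le_bot_iff.1 hle)
      · simp only [Set.mem_iUnion] at hW
        obtain ⟨x, hx, P, hP, rfl⟩ := hW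
        have := hP.1.1
        rw [Finset.mem_erase] at hx
        exact notMem_Wid _ x (hne hx.1) P (hle (hGJ x hx.2)))
  have hPa0 : ∏ i, a i ≠ 0 := fun h => haW ⊥ (Or.inl rfl) (by rw [h]; exact zero_mem _)
  have hPaJ : ∏ i, a i ∈ J := Ideal.prod_mem_prod fun i _ => ha i (Finset.mem_univ i)
  have hext : ∀ x, ∃ w : Chart K G x, x ≠ 0 → algebraMap A K (∏ i, a i) = algebraMap A K x * w := by
    intro x
    by_cases hx : x = 0
    · exact ⟨0, fun h => absurd hx h⟩
    · obtain ⟨w, hw⟩ := chart_ext hinj G x hx _ (hG.symm ▸ hPaJ)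
      exact ⟨w, fun _ => hw⟩
  choose α hα using hext
  -- choose b
  obtain ⟨b, hb, hbW⟩ := avoid_prod k I Finset.univ
    (({⊥} ∪ (Ideal.span {∏ i, a i}).minimalPrimes) ∪ ⋃ x ∈ (G.erase 0 : Finset A),
      (Wid (Chart K G x) x) '' (mB x ⊔ Ideal.span {α x}).minimalPrimes)
    (((Set.finite_singleton _).union (Ideal.finite_minimalPrimes_of_isNoetherianRing _ _)).union
      (Set.Finite.biUnion (Finset.finite_toSet _) fun x _ =>
      (Ideal.finite_minimalPrimes_of_isNoetherianRing _ _).image _)) (by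
      rintro W ((rfl | hW) | hW) hle
      · exact hJ0 (le_bot_iff.1 hle)
      · have := hW.1.1
        have h1 : m ≤ W := Ideal.IsPrime.le_of_pow_le (hN.trans hle)
        have h2 : W = m := ((IsLocalRing.maximalIdeal.isMaximal A).eq_of_le this.ne_top h1).symm
        have h3 := Ideal.height_le_one_of_isPrincipal_of_mem_minimalPrimes _ W hW
        rw [h2, hht] at h3
        exact absurd h3 (by decide)
      · simp only [Set.mem_iUnion] at hW
        obtain ⟨x, hx, P, hP, rfl⟩ := hW
        have := hP.1.1
        rw [Finset.mem_erase] at hx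
        exact notMem_Wid _ x (hne hx.1) P (hle (hGJ x hx.2)))
  have hPb0 : ∏ i, b i ≠ 0 := fun h => hbW ⊥ (Or.inl (Or.inl rfl)) (by rw [h]; exact zero_mem _)
  have hPbJ : ∏ i, b i ∈ J := Ideal.prod_mem_prod fun i _ => hb i (Finset.mem_univ i)
  have hpm : ∀ p : Ideal A, p.IsPrime → ∏ i, a i ∈ p → ∏ i, b i ∈ p → p = m := by
    intro p hp hap hbp
    by_contra hpm
    obtain ⟨q, hq, hqp⟩ := Ideal.exists_minimalPrimes_le (I := Ideal.span {∏ i, a i}) (J := p)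
      ((Ideal.span_singleton_le_iff_mem p).2 hap)
    have := hq.1.1
    refine no_chain hdim.le m q p ?_ (lt_of_le_of_ne hqp ?_)
      (lt_of_le_of_ne (IsLocalRing.le_maximalIdeal hp.ne_top) hpm)
    · rintro rfl
      exact hPa0 (hq.1.2 (Ideal.mem_span_singleton_self _))
    · rintro rfl
      exact hbW q (Or.inl (Or.inr hq)) hbp
  refine ⟨a, b, fun i => ha i (Finset.mem_univ i), fun i => hb i (Finset.mem_univ i), hPa0, hPb0,
    ?_, hpm⟩
  intro V hV
  have key : Dom V J (∏ i, a i) ∨ Dom V J (∏ i, b i) := by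
    by_cases hc : center V hV = m
    · obtain ⟨x, hxG, hxmax⟩ := G.exists_max_image (fun a => V.valuation (algebraMap A K a)) (by
        rw [Finset.nonempty_iff_ne_empty]
        rintro rfl
        exact hJ0 (by rw [← hG]; simp))
      have hxD : Dom V J x := by
        obtain ⟨d, hd⟩ := exists_dom (K := K) hV J
        refine ⟨hGJ x hxG, fun y hy => ?_⟩
        rw [← hG] at hy
        refine Submodule.span_induction
          (p := fun y _ => V.valuation (algebraMap A K y) ≤ V.valuation (algebraMap A K x))
          (fun g hg => hxmax g hg) (by simp) ?_ ?_ hy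
        · intro y z _ _ h1 h2
          rw [map_add]
          exact (V.valuation.map_add _ _).trans (max_le h1 h2)
        · intro t y _ h1
          rw [smul_eq_mul, map_mul, map_mul]
          exact mul_le_of_le_one_of_le ((V.valuation_le_one_iff _).2 (hV t)) h1
      have hx0 : x ≠ 0 := by
        rintro rfl
        obtain ⟨c, hcJ, hc0⟩ := Submodule.exists_mem_ne_zero_of_ne_bot hJ0
        have := hxD.2 c hcJ
        rw [map_zero, map_zero, le_zero_iff, map_eq_zero] at this
        exact hne hc0 this
      have hVx := chart_over G x V hV (hG.symm ▸ hxD) (hne hx0)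
      obtain ⟨β, hβ⟩ := chart_ext hinj G x hx0 _ (hG.symm ▸ hPbJ)
      have hxE : x ∈ G.erase 0 := Finset.mem_erase.2 ⟨hx0, hxG⟩
      by_contra hcon
      push Not at hcon
      have aux : ∀ c : A, c ∈ J → ¬ Dom V J c → ∀ w : Chart K G x,
          algebraMap A K c = algebraMap A K x * w → w ∈ center V hVx := by
        intro c hcJ hnd w hw
        rw [mem_center]
        by_contra hlt
        push Not at hlt
        refine hnd ⟨hcJ, fun y hy => (hxD.2 y hy).trans ?_⟩
        rw [hw, map_mul]
        exact le_mul_of_one_le_right zero_le hlt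
      refine chart_top ((chart_dim hinj G x hx0).trans hdim.le) (mB x) (hmB x) (α x) β ?_ ?_
        (center V hVx) ?_ (aux _ hPaJ hcon.1 _ (hα x hx0)) (aux _ hPbJ hcon.2 _ hβ)
      · intro P hP hαP
        refine haW (Wid (Chart K G x) x P) (Or.inr ?_) ⟨α x, hαP, hα x hx0⟩
        simp only [Set.mem_iUnion]
        exact ⟨x, hxE, P, hP, rfl⟩
      · intro P hP hβP
        refine hbW (Wid (Chart K G x) x P) (Or.inr ?_) ⟨β, hβP, hβ⟩
        simp only [Set.mem_iUnion]
        exact ⟨x, hxE, P, hP, rfl⟩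
      · refine Ideal.map_le_iff_le_comap.2 fun c hcm => ?_
        rw [Ideal.mem_comap, mem_center]
        rw [← hc, mem_center] at hcm
        exact hcm
    · have aux : ∀ c ∈ J, c ∉ center V hV → Dom V J c := by
        intro c hcJ hcV
        rw [mem_center] at hcV
        push Not at hcV
        exact ⟨hcJ, fun y _ => ((V.valuation_le_one_iff _).2 (hV y)).trans hcV⟩
      by_cases h1 : ∏ i, a i ∈ center V hV
      · right
        exact aux _ hPbJ fun h2 => hc (hpm _ inferInstance h1 h2)
      · left
        exact aux _ hPaJ h1
  exact key.imp
    (fun h i => dom_of_prod I a (fun i => ha i (Finset.mem_univ i)) (hne hPa0) h i)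
    (fun h i => dom_of_prod I b (fun i => hb i (Finset.mem_univ i)) (hne hPb0) h i)

end MR

namespace MR

universe u
open IsLocalRing

theorem good_exists (k : Type*) [Field k] [Infinite k] {A K : Type u} [CommRing A] [IsDomain A]
    [IsNoetherianRing A] [IsLocalRing A] [Algebra k A] [IsIntegrallyClosed A]
    [Field K] [Algebra A K] [IsFractionRing A K]
    (hdim : ringKrullDim A = 2) {ι : Type} [Fintype ι] (I : ι → Ideal A)
    (hprim : ∀ i, ∃ n, maximalIdeal A ^ n ≤ I i) (hI : ∀ i, I i ≠ ⊥)
    (hrees : ∀ i, IsCMNormalDomain (reesAlgebra (I i))) :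
    ∃ a b : ι → A, Good K I a b ∧
      ∀ p : Ideal A, p.IsPrime → ∏ i, a i ∈ p → ∏ i, b i ∈ p → p = maximalIdeal A := by
  obtain ⟨a, b, ha, hb, hPa, hPb, hcov, hp⟩ := gen_elems k (K := K) hdim I hprim
  have hinj : Function.Injective (algebraMap A K) := IsFractionRing.injective A K
  have hne : ∀ {x : A}, x ≠ 0 → algebraMap A K x ≠ 0 := by
    intro x hx; rwa [ne_eq, map_eq_zero_iff _ hinj]
  have ha0 : ∀ i, a i ≠ 0 := fun i => Finset.prod_ne_zero_iff.1 hPa i (Finset.mem_univ i)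
  have hb0 : ∀ i, b i ≠ 0 := fun i => Finset.prod_ne_zero_iff.1 hPb i (Finset.mem_univ i)
  refine ⟨a, b, ⟨ha, hb, fun i => hne (ha0 i), fun i => hne (hb0 i), ?_, ?_,
    fun i n => vc_of_rees (I i) (hI i) (hrees i).2.2 n, hcov⟩, hp⟩
  · intro i
    by_cases hit : I i = ⊤
    · obtain ⟨V, hV, hVm⟩ := exists_dominating hinj (maximalIdeal A)
      have aux : ∀ c : A, Dom V (I i) c → IsUnit c := by
        intro c hc
        by_contra hcu
        have h1 : c ∈ maximalIdeal A := (mem_maximalIdeal c).2 hcu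
        rw [hVm] at h1
        have h2 := hc.2 1 (by rw [hit]; trivial)
        rw [map_one, map_one] at h2
        exact absurd h1 (not_lt.2 h2)
      have aux2 : ∀ c : A, IsUnit c → I i ^ 2 ≤ Ideal.span {c} * I i := by
        intro c hc
        rw [hit, Ideal.span_singleton_eq_top.2 hc]
        simp
      rcases hcov V hV with h | h
      · exact (aux2 _ (aux _ (h i))).trans le_sup_left
      · exact (aux2 _ (aux _ (h i))).trans le_sup_right
    · refine rees_sq (K := K) hdim (I i) (le_maximalIdeal hit) (a i) (b i) (ha i) (hb i) (ha0 i)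
        (hb0 i) (fun V hV => (hcov V hV).imp (fun h => h i) (fun h => h i)) ?_ (hrees i).1
      intro p hpp h1 h2
      exact hp p hpp (p.mem_of_dvd (Finset.dvd_prod_of_mem a (Finset.mem_univ i)) h1)
        (p.mem_of_dvd (Finset.dvd_prod_of_mem b (Finset.mem_univ i)) h2)
  · intro z hz
    have h1 : IsIntegral A z := by
      refine integral_of_val z fun V hV => ?_
      obtain ⟨y, _, hy⟩ := hz V hV
      rw [← V.valuation_le_one_iff]
      exact hy.trans ((V.valuation_le_one_iff _).2 (hV y))
    obtain ⟨y, hy⟩ := IsIntegrallyClosed.isIntegral_iff.1 h1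
    exact ⟨y, trivial, hy⟩

end MR

namespace MR

universe u
open IsLocalRing RingTheory.Sequence

lemma mem_ofList_map {R S : Type*} [CommRing R] [CommRing S] (f : R →+* S)
    (hf : Function.Surjective f) (rs : List R) (w : R) :
    f w ∈ Ideal.ofList (rs.map f) ↔ w ∈ Ideal.ofList rs ⊔ RingHom.ker f := by
  rw [← Ideal.map_ofList, ← Ideal.mem_comap, Ideal.comap_map_of_surjective' f hf]

/-- Lifting a weakly regular sequence along a quotient by a regular element. -/
lemma wr_lift {R S : Type*} [CommRing R] [CommRing S] (f : R →+* S)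
    (hf : Function.Surjective f) (x : R) (hx : ∀ w, x * w = 0 → w = 0)
    (hk : RingHom.ker f = Ideal.span {x}) (rs : List R) (h : IsWeaklyRegular S (rs.map f)) :
    IsWeaklyRegular R (x :: rs) := by
  induction rs using List.reverseRecOn with
  | nil =>
    have := (wr_snoc ([] : List R) x).2 ⟨IsWeaklyRegular.nil _ _, fun w hw => by
      simpa using hx w (by simpa using hw)⟩
    simpa using this
  | append_singleton rs z ih =>
    rw [List.map_append, List.map_singleton, wr_snoc] at h
    have := (wr_snoc (x :: rs) z).2 ⟨ih h.1, fun w hw => by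
      have e : Ideal.ofList (x :: rs) = Ideal.ofList rs ⊔ RingHom.ker f := by
        rw [Ideal.ofList_cons, hk, sup_comm]
      rw [e, ← mem_ofList_map f hf] at hw ⊢
      rw [map_mul] at hw
      exact h.2 _ hw⟩
    simpa using this

lemma wr_equiv {R S : Type*} [CommRing R] [CommRing S] (f : R →+* S)
    (hf : Function.Bijective f) (rs : List R) (h : IsWeaklyRegular S (rs.map f)) :
    IsWeaklyRegular R rs := by
  induction rs using List.reverseRecOn with
  | nil => exact IsWeaklyRegular.nil _ _
  | append_singleton rs z ih =>
    rw [List.map_append, List.map_singleton, wr_snoc] at h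
    refine (wr_snoc rs z).2 ⟨ih h.1, fun w hw => ?_⟩
    have e : Ideal.ofList rs = Ideal.ofList rs ⊔ RingHom.ker f := by
      rw [(RingHom.injective_iff_ker_eq_bot f).1 hf.1, sup_bot_eq]
    rw [e, ← mem_ofList_map f hf.2] at hw ⊢
    rw [map_mul] at hw
    exact h.2 _ hw

section merge
variable {A K : Type u} [CommRing A] [Field K] [Algebra A K] {r : ℕ}

/-- Merge the first two entries. -/
def mrg {α : Type*} [Mul α] (f : Fin (r + 2) → α) : Fin (r + 1) → α :=
  Fin.cons (f 0 * f 1) (fun i => f i.succ.succ)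

@[simp] lemma mrg_zero {α : Type*} [Mul α] (f : Fin (r + 2) → α) : mrg f 0 = f 0 * f 1 := rfl
@[simp] lemma mrg_succ {α : Type*} [Mul α] (f : Fin (r + 2) → α) (i : Fin r) :
    mrg f i.succ = f i.succ.succ := rfl

lemma mrg_prod {α : Type*} [CommMonoid α] (f : Fin (r + 2) → α) : ∏ i, mrg f i = ∏ i, f i := by
  rw [Fin.prod_univ_succ, Fin.prod_univ_succ (f := f), Fin.prod_univ_succ (f := fun i => f i.succ)]
  simp [mul_assoc]

lemma inV_of_mem {V : ValuationSubring K} {J : Ideal A} {y : A} (h : y ∈ J) :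
    InV V J (algebraMap A K y) := ⟨y, h, le_rfl⟩

theorem Good.merge [IsNoetherianRing A] (hinj : Function.Injective (algebraMap A K))
    {I : Fin (r + 2) → Ideal A} {a b : Fin (r + 2) → A}
    (h : Good K I a b) : Good K (mrg I) (mrg a) (mrg b) := by
  have hvc2 : ∀ m n, VC K (I 0 ^ m * I 1 ^ n) := by
    intro m n
    have := h.vc_prod {0, 1} (Function.update (fun _ => n) 0 m)
    rw [Finset.prod_pair (by simp)] at this
    simpa using this
  refine ⟨?_, ?_, ?_, ?_, ?_, h.vc0, ?_, ?_⟩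
  · exact Fin.cases (Ideal.mul_mem_mul (h.ha 0) (h.ha 1)) fun i => h.ha _
  · exact Fin.cases (Ideal.mul_mem_mul (h.hb 0) (h.hb 1)) fun i => h.hb _
  · refine Fin.cases ?_ fun i => h.ha0 _
    rw [mrg_zero, map_mul]; exact mul_ne_zero (h.ha0 0) (h.ha0 1)
  · refine Fin.cases ?_ fun i => h.hb0 _
    rw [mrg_zero, map_mul]; exact mul_ne_zero (h.hb0 0) (h.hb0 1)
  · refine Fin.cases ?_ fun i => h.sq _
    simp only [mrg_zero]
    intro y hy
    obtain ⟨x, hx, d, hd, he⟩ := lemL (K := K) (I 0) (I 0 * I 1 ^ 2) (a 0) (b 0) (b 0 * b 1 ^ 2)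
      (h.ha 0) (h.hb 0) (Ideal.mul_mem_mul (h.hb 0) (Ideal.pow_mem_pow (h.hb 1) 2)) (h.ha0 0)
      (h.hb0 0) (by rw [map_mul, map_pow]; exact mul_ne_zero (h.hb0 0) (pow_ne_zero _ (h.hb0 1)))
      (h.sq 0) (h.vc 0) (by simpa using hvc2 1 2) (fun V hV => (h.cov V hV).imp (fun h => h 0)
        (fun h => ⟨(h 0).mul ((h 1).pow hV 2), h 0⟩)) (algebraMap A K y)
      (fun V hV => inV_of_mem (by
        have : I 0 * (I 0 * I 1 ^ 2) = (I 0 * I 1) ^ 2 := by ring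
        rwa [this]))
    obtain ⟨x', hx', d', hd', he'⟩ := lemL (K := K) (I 1) (I 0 * I 1) (a 1) (b 1) (b 0 * b 1)
      (h.ha 1) (h.hb 1) (Ideal.mul_mem_mul (h.hb 0) (h.hb 1)) (h.ha0 1)
      (h.hb0 1) (by rw [map_mul]; exact mul_ne_zero (h.hb0 0) (h.hb0 1))
      (h.sq 1) (h.vc 1) (by simpa using hvc2 1 1) (fun V hV => (h.cov V hV).imp (fun h => h 1)
        (fun h => ⟨(h 0).mul (h 1), h 1⟩)) (algebraMap A K x)
      (fun V hV => inV_of_mem (by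
        have : I 1 * (I 0 * I 1) = I 0 * I 1 ^ 2 := by ring
        rwa [this]))
    have e := hinj he
    have e' := hinj he'
    have : y = (a 0 * a 1) * x' + (b 0 * b 1) * (a 0 * d' + d * b 1) := by
      rw [e, e']; ring
    rw [this]
    exact Ideal.add_mem _ (Ideal.mem_sup_left (Ideal.mul_mem_mul (Ideal.mem_span_singleton_self _) hx'))
      (Ideal.mem_sup_right (Ideal.mul_mem_mul (Ideal.mem_span_singleton_self _) (Ideal.add_mem _
        (Ideal.mul_mem_mul (h.ha 0) hd') (Ideal.mul_mem_mul hd (h.hb 1)))))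
  · refine Fin.cases (fun n => ?_) fun i => h.vc _
    rw [mrg_zero, mul_pow]
    exact hvc2 n n
  · intro V hV
    exact (h.cov V hV).imp (fun h => Fin.cases ((h 0).mul (h 1)) fun i => h _)
      (fun h => Fin.cases ((h 0).mul (h 1)) fun i => h _)

end merge
end MR

namespace MR

universe u
open IsLocalRing RingTheory.Sequence

section coef
variable {A K : Type u} [CommRing A] [Field K] [Algebra A K] {s : ℕ}

lemma prod_pow_single {M : Type*} [CommMonoid M] (e : Fin s → M) (n : Fin s →₀ ℕ) (i : Fin s) :
    ∏ l, e l ^ (n + Finsupp.single i 1 : Fin s →₀ ℕ) l = e i * ∏ l, e l ^ n l := by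
  classical
  simp only [Finsupp.add_apply, pow_add, Finset.prod_mul_distrib]
  rw [mul_comm]
  congr 1
  rw [Finset.prod_eq_single i]
  · simp
  · intro j _ hj
    rw [Finsupp.single_eq_of_ne hj, pow_zero]
  · simp

lemma coef_bound (V : ValuationSubring K) (hV : Over A V) (I : Fin s → Ideal A) (e : Fin s → A)
    (he : ∀ i, Dom V (I i) (e i)) (i j : Fin s) (hij : i ≠ j)
    (he0 : algebraMap A K (e i) ≠ 0) (d : A) (hd : d ∈ I j)
    (f g : MvPolynomial (Fin s) K)
    (hfg : f = (MvPolynomial.C (algebraMap A K (e i)) * MvPolynomial.X i -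
      MvPolynomial.C (algebraMap A K d) * MvPolynomial.X j) * g)
    (hf : ∀ n, InV V (∏ l, I l ^ n l) (MvPolynomial.coeff n f)) (n : Fin s →₀ ℕ) :
    InV V (∏ l, I l ^ n l) (MvPolynomial.coeff n g) := by
  classical
  have hD : ∀ n : Fin s →₀ ℕ, Dom V (∏ l, I l ^ n l) (∏ l, e l ^ n l) :=
    fun n => Dom.prod hV _ fun l _ => (he l).pow hV _
  suffices H : ∀ N, ∀ n : Fin s →₀ ℕ, n j = N → V.valuation (MvPolynomial.coeff n g) ≤
      V.valuation (algebraMap A K (∏ l, e l ^ n l)) from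
    ⟨_, (hD n).1, H _ n rfl⟩
  have hpos : 0 < V.valuation (algebraMap A K (e i)) := by
    rw [zero_lt_iff, ne_eq, map_eq_zero]; exact he0
  intro N
  induction N with
  | zero =>
    intro n hn
    have h1 := (hf (n + Finsupp.single i 1)).le_dom (hD _)
    rw [hfg, sub_mul, MvPolynomial.coeff_sub, mul_assoc, mul_assoc, MvPolynomial.coeff_C_mul,
      MvPolynomial.coeff_C_mul, mul_comm (MvPolynomial.X i), mul_comm (MvPolynomial.X j),
      MvPolynomial.coeff_mul_X, MvPolynomial.coeff_mul_X', if_neg, mul_zero, sub_zero,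
      prod_pow_single, map_mul, map_mul, map_mul] at h1
    · exact (mul_le_mul_iff_right₀ hpos).1 h1
    · rw [Finsupp.notMem_support_iff, Finsupp.add_apply, hn, Finsupp.single_eq_of_ne hij.symm, add_zero]
  | succ N ih =>
    intro n hn
    have h1 := (hf (n + Finsupp.single i 1)).le_dom (hD _)
    obtain ⟨n', rfl⟩ : ∃ n', n = n' + Finsupp.single j 1 :=
      ⟨n - Finsupp.single j 1, by
        rw [tsub_add_cancel_of_le]
        rw [Finsupp.single_le_iff]; omega⟩
    have h2 := ih (n' + Finsupp.single i 1) (by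
      rw [Finsupp.add_apply, Finsupp.single_eq_same] at hn
      rw [Finsupp.add_apply, Finsupp.single_eq_of_ne hij.symm]; omega)
    rw [hfg, sub_mul, MvPolynomial.coeff_sub, mul_assoc, mul_assoc, MvPolynomial.coeff_C_mul,
      MvPolynomial.coeff_C_mul, mul_comm (MvPolynomial.X i), mul_comm (MvPolynomial.X j),
      MvPolynomial.coeff_mul_X, add_right_comm, MvPolynomial.coeff_mul_X] at h1
    have h3 : V.valuation (algebraMap A K d * MvPolynomial.coeff (n' + Finsupp.single i 1) g) ≤
        V.valuation (algebraMap A K (∏ l, e l ^ (n' + Finsupp.single i 1 + Finsupp.single j 1 : Fin s →₀ ℕ) l)) := by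
      rw [prod_pow_single, map_mul, map_mul, map_mul]
      exact mul_le_mul' ((he j).2 d hd) h2
    have h4 := (V.valuation.map_add _ _).trans (max_le h1 h3)
    rw [sub_add_cancel, add_right_comm, prod_pow_single, map_mul, map_mul, map_mul] at h4
    exact (mul_le_mul_iff_right₀ hpos).1 h4

end coef

section phi
variable {A K : Type u} [CommRing A] [Field K] [Algebra A K] {r : ℕ}

/-- The merging substitution. -/
noncomputable def phi {A : Type*} [CommRing A] (r : ℕ) (a b : A) :
    MvPolynomial (Fin (r + 2)) A →ₐ[A] MvPolynomial (Fin (r + 1)) A :=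
  MvPolynomial.aeval (Fin.cons (MvPolynomial.C b * MvPolynomial.X 0)
    (Fin.cons (MvPolynomial.C a * MvPolynomial.X 0) fun i => MvPolynomial.X i.succ))

lemma phi_X0 {A : Type*} [CommRing A] (r : ℕ) (a b : A) :
    phi r a b (MvPolynomial.X 0) = MvPolynomial.C b * MvPolynomial.X 0 := by
  rw [phi, MvPolynomial.aeval_X]; rfl

lemma phi_X1 {A : Type*} [CommRing A] (r : ℕ) (a b : A) :
    phi r a b (MvPolynomial.X 1) = MvPolynomial.C a * MvPolynomial.X 0 := by
  rw [phi, MvPolynomial.aeval_X]; rfl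

lemma phi_X2 {A : Type*} [CommRing A] (r : ℕ) (a b : A) (i : Fin r) :
    phi r a b (MvPolynomial.X i.succ.succ) = MvPolynomial.X i.succ := by
  rw [phi, MvPolynomial.aeval_X]; rfl

lemma phi_C {A : Type*} [CommRing A] (r : ℕ) (a b c : A) :
    phi r a b (MvPolynomial.C c) = MvPolynomial.C c := (phi r a b).commutes c

lemma phi_const {A : Type*} [CommRing A] (r : ℕ) (a b : A) (f) :
    MvPolynomial.constantCoeff (phi r a b f) = MvPolynomial.constantCoeff f := by
  have : (MvPolynomial.constantCoeff).comp (phi r a b).toRingHom = MvPolynomial.constantCoeff := by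
    apply MvPolynomial.ringHom_ext
    · intro c; simp
    · refine Fin.cases ?_ (Fin.cases ?_ fun i => ?_)
      · simp [phi_X0]
      · have := phi_X1 r a b
        simp_all
      · simp [phi_X2]
  exact congrArg (fun h => h f) this

lemma phi_map (a b : A) (f : MvPolynomial (Fin (r + 2)) A) :
    MvPolynomial.map (algebraMap A K) (phi r a b f) =
      phi r (algebraMap A K a) (algebraMap A K b) (MvPolynomial.map (algebraMap A K) f) := by
  have : (MvPolynomial.map (algebraMap A K)).comp (phi r a b).toRingHom =
    (phi r (algebraMap A K a) (algebraMap A K b)).toRingHom.comp (MvPolynomial.map (algebraMap A K)) := by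
    apply MvPolynomial.ringHom_ext
    · intro c; simp [phi_C]
    · refine Fin.cases ?_ (Fin.cases ?_ fun i => ?_)
      · simp [phi_X0]
      · have := phi_X1 r a b
        have := phi_X1 r (algebraMap A K a) (algebraMap A K b)
        simp_all
      · simp [phi_X2]
  exact congrArg (fun h => h f) this

lemma phi_ker {K : Type*} [Field K] (a b : K) (ha : a ≠ 0) (f : MvPolynomial (Fin (r + 2)) K)
    (hf : phi r a b f = 0) : ∃ g, f =
      (MvPolynomial.C a * MvPolynomial.X 0 - MvPolynomial.C b * MvPolynomial.X 1) * g := by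
  set x : MvPolynomial (Fin (r + 2)) K :=
    MvPolynomial.C a * MvPolynomial.X 0 - MvPolynomial.C b * MvPolynomial.X 1 with hx
  let ψ : MvPolynomial (Fin (r + 1)) K →ₐ[K] MvPolynomial (Fin (r + 2)) K :=
    MvPolynomial.aeval (Fin.cons (MvPolynomial.C a⁻¹ * MvPolynomial.X 1)
      fun i => MvPolynomial.X i.succ.succ)
  have hψ0 : ψ (MvPolynomial.X 0) = MvPolynomial.C a⁻¹ * MvPolynomial.X 1 := by
    simp only [ψ]; rw [MvPolynomial.aeval_X]; rfl
  have hψ2 : ∀ i : Fin r, ψ (MvPolynomial.X i.succ) = MvPolynomial.X i.succ.succ := by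
    intro i; simp only [ψ]; rw [MvPolynomial.aeval_X]; rfl
  have hψC : ∀ c, ψ (MvPolynomial.C c) = MvPolynomial.C c := fun c => ψ.commutes c
  have haa : (MvPolynomial.C a : MvPolynomial (Fin (r + 2)) K) * MvPolynomial.C a⁻¹ = 1 := by
    rw [← map_mul, mul_inv_cancel₀ ha, map_one]
  let q := Ideal.Quotient.mkₐ K (Ideal.span {x})
  have key : q = q.comp (ψ.comp (phi r a b)) := by
    apply MvPolynomial.algHom_ext
    have aux : ∀ u v, u - v ∈ Ideal.span {x} → q u = q v := fun u v h => Ideal.Quotient.eq.2 h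
    refine Fin.cases ?_ (Fin.cases ?_ fun i => ?_)
    · apply aux
      change MvPolynomial.X 0 - ψ (phi r a b (MvPolynomial.X 0)) ∈ _
      rw [phi_X0, map_mul, hψ0, hψC]
      refine Ideal.mem_span_singleton.2 ⟨MvPolynomial.C a⁻¹, ?_⟩
      rw [hx]
      linear_combination (-MvPolynomial.X 0) * haa
    · apply aux
      change MvPolynomial.X 1 - ψ (phi r a b (MvPolynomial.X 1)) ∈ _
      rw [phi_X1, map_mul, hψ0, hψC, ← mul_assoc, haa, one_mul, sub_self]
      exact zero_mem _
    · rw [AlgHom.comp_apply, AlgHom.comp_apply, phi_X2, hψ2]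
  have h1 : q f = 0 := by
    rw [key, AlgHom.comp_apply, AlgHom.comp_apply, hf, map_zero, map_zero]
  obtain ⟨g, hg⟩ := Ideal.mem_span_singleton.1 (Ideal.Quotient.eq_zero_iff_mem.1 h1)
  exact ⟨g, hg⟩

end phi
end MR

namespace MR

universe u
open IsLocalRing RingTheory.Sequence

section step
variable {A K : Type u} [CommRing A] [IsDomain A] [IsNoetherianRing A] [Field K] [Algebra A K]
  {r : ℕ}

lemma phi_image (hinj : Function.Injective (algebraMap A K))
    {I : Fin (r + 2) → Ideal A} {a b : Fin (r + 2) → A} (h : Good K I a b) :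
    (multiReesAlgebra I).map (phi r (a 0) (b 1)) = multiReesAlgebra (mrg I) := by
  have hgen : ∀ {s : ℕ} (J : Fin s → Ideal A) (i : Fin s) (y : A), y ∈ J i →
      MvPolynomial.C y * MvPolynomial.X i ∈ multiReesAlgebra J :=
    fun J i y hy => Algebra.subset_adjoin (Set.mem_iUnion.2 ⟨i, y, hy, rfl⟩)
  apply le_antisymm
  · rw [Subalgebra.map_le]
    refine Algebra.adjoin_le fun z hz => ?_
    obtain ⟨i, y, hy, rfl⟩ := Set.mem_iUnion.1 hz
    change phi r (a 0) (b 1) (MvPolynomial.C y * MvPolynomial.X i) ∈ multiReesAlgebra (mrg I)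
    rw [map_mul, phi_C]
    revert hy
    refine Fin.cases ?_ (Fin.cases ?_ fun i => ?_) i
    · intro hy
      rw [phi_X0, ← mul_assoc, ← map_mul]
      exact hgen (mrg I) 0 _ (Ideal.mul_mem_mul hy (h.hb 1))
    · intro hy
      change _ * phi r (a 0) (b 1) (MvPolynomial.X 1) ∈ multiReesAlgebra (mrg I)
      rw [phi_X1, ← mul_assoc, ← map_mul, mul_comm y]
      exact hgen (mrg I) 0 _ (Ideal.mul_mem_mul (h.ha 0) hy)
    · intro hy
      rw [phi_X2]
      exact hgen (mrg I) i.succ _ hy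
  · refine Algebra.adjoin_le fun z hz => ?_
    obtain ⟨i, y, hy, rfl⟩ := Set.mem_iUnion.1 hz
    change MvPolynomial.C y * MvPolynomial.X i ∈ (multiReesAlgebra I).map (phi r (a 0) (b 1))
    revert hy
    refine Fin.cases ?_ (fun i => ?_) i
    · intro hy
      obtain ⟨x, hx, d, hd, he⟩ := lemL (K := K) (I 0) (I 1) (a 0) (b 0) (b 1)
        (h.ha 0) (h.hb 0) (h.hb 1) (h.ha0 0) (h.hb0 0) (h.hb0 1)
        (h.sq 0) (h.vc 0) (by simpa using h.vc 1 1) (fun V hV => (h.cov V hV).imp (fun h => h 0)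
          (fun h => ⟨h 1, h 0⟩)) (algebraMap A K y) (fun V hV => inV_of_mem hy)
      rw [hinj he]
      refine ⟨MvPolynomial.C x * MvPolynomial.X 1 + MvPolynomial.C d * MvPolynomial.X 0,
        Subalgebra.add_mem _ (hgen I 1 x hx) (hgen I 0 d hd), ?_⟩
      change phi r (a 0) (b 1) _ = _
      rw [map_add, map_mul, map_mul, phi_C, phi_C, phi_X0, phi_X1, map_add, map_mul, map_mul]
      ring
    · intro hy
      refine ⟨_, hgen I i.succ.succ y hy, ?_⟩
      change phi r (a 0) (b 1) _ = _
      rw [map_mul, phi_C, phi_X2]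

lemma good_mr (hinj : Function.Injective (algebraMap A K)) {s : ℕ}
    {I : Fin s → Ideal A} {a b : Fin s → A} (h : Good K I a b) (g : MvPolynomial (Fin s) K)
    (hg : ∀ V : ValuationSubring K, Over A V → ∀ n, InV V (∏ l, I l ^ n l) (MvPolynomial.coeff n g)) :
    ∃ g' ∈ multiReesAlgebra I, MvPolynomial.map (algebraMap A K) g' = g := by
  have h1 : ∀ n : Fin s →₀ ℕ, ∃ y ∈ ∏ l, I l ^ n l, algebraMap A K y = MvPolynomial.coeff n g :=
    fun n => h.vc_prod Finset.univ n _ fun V hV => hg V hV n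
  have h2 : g ∈ Set.range (MvPolynomial.map (σ := Fin s) (algebraMap A K)) := by
    rw [MvPolynomial.mem_range_map_iff_coeffs_subset]
    intro c hc
    obtain ⟨n, _, rfl⟩ := MvPolynomial.mem_coeffs_iff.1 hc
    obtain ⟨y, _, hy⟩ := h1 n
    exact ⟨y, hy⟩
  obtain ⟨g', rfl⟩ := h2
  refine ⟨g', ?_, rfl⟩
  rw [mem_mr]
  intro n
  obtain ⟨y, hy, he⟩ := h1 n
  rw [MvPolynomial.coeff_map] at he
  rwa [← hinj he]

lemma mr_ker (hinj : Function.Injective (algebraMap A K))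
    {I : Fin (r + 2) → Ideal A} {a b : Fin (r + 2) → A} (h : Good K I a b)
    (f : MvPolynomial (Fin (r + 2)) A) (hf : f ∈ multiReesAlgebra I)
    (h0 : phi r (a 0) (b 1) f = 0) : ∃ g ∈ multiReesAlgebra I, f =
      (MvPolynomial.C (a 0) * MvPolynomial.X 0 - MvPolynomial.C (b 1) * MvPolynomial.X 1) * g := by
  have h1 := phi_map (K := K) (a 0) (b 1) f
  rw [h0, map_zero] at h1
  obtain ⟨g, hg⟩ := phi_ker _ _ (h.ha0 0) _ h1.symm
  obtain ⟨g', hg', rfl⟩ := good_mr hinj h g (by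
    intro V hV n
    have hfV : ∀ n, InV V (∏ l, I l ^ n l)
        (MvPolynomial.coeff n (MvPolynomial.map (algebraMap A K) f)) := by
      intro n
      rw [MvPolynomial.coeff_map]
      exact inV_of_mem ((mem_mr I f).1 hf n)
    rcases h.cov V hV with hD | hD
    · exact coef_bound V hV I a hD 0 1 (by simp) (h.ha0 0) (b 1) (h.hb 1) _ g hg hfV n
    · refine coef_bound V hV I b hD 1 0 (by simp) (h.hb0 1) (a 0) (h.ha 0)
        (-MvPolynomial.map (algebraMap A K) f) g (by rw [hg]; ring) ?_ n
      intro n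
      obtain ⟨y, hy, hle⟩ := hfV n
      exact ⟨y, hy, by rwa [MvPolynomial.coeff_neg, Valuation.map_neg]⟩)
  refine ⟨g', hg', MvPolynomial.map_injective _ hinj ?_⟩
  rw [hg]
  simp

theorem mr_step [IsLocalRing A] (hinj : Function.Injective (algebraMap A K))
    {I : Fin (r + 2) → Ideal A} {a b : Fin (r + 2) → A} (h : Good K I a b)
    (rs : List (multiReesAlgebra (mrg I))) (hrs : ∀ z ∈ rs, z ∈ Mid (mrg I))
    (hw : IsWeaklyRegular (multiReesAlgebra (mrg I)) rs) :
    ∃ ts : List (multiReesAlgebra I), (∀ z ∈ ts, z ∈ Mid I) ∧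
      IsWeaklyRegular (multiReesAlgebra I) ts ∧ ts.length = rs.length + 1 := by
  have him := phi_image hinj h
  let f : multiReesAlgebra I →+* multiReesAlgebra (mrg I) :=
    ((phi r (a 0) (b 1)).toRingHom.comp (multiReesAlgebra I).val.toRingHom).codRestrict
      (multiReesAlgebra (mrg I)) (fun z => him ▸ ⟨z.1, z.2, rfl⟩)
  have hfv : ∀ z, (f z : MvPolynomial (Fin (r + 1)) A) = phi r (a 0) (b 1) z := fun z => rfl
  have hfs : Function.Surjective f := by
    rintro ⟨z, hz⟩
    rw [← him] at hz
    obtain ⟨y, hy, rfl⟩ := hz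
    exact ⟨⟨y, hy⟩, rfl⟩
  have hfM : ∀ z, z ∈ Mid I ↔ f z ∈ Mid (mrg I) := by
    intro z
    rw [mem_Mid, mem_Mid, hfv, phi_const]
  let x : multiReesAlgebra I :=
    ⟨MvPolynomial.C (a 0) * MvPolynomial.X 0 - MvPolynomial.C (b 1) * MvPolynomial.X 1,
      Subalgebra.sub_mem _ (Algebra.subset_adjoin (Set.mem_iUnion.2 ⟨0, a 0, h.ha 0, rfl⟩))
        (Algebra.subset_adjoin (Set.mem_iUnion.2 ⟨1, b 1, h.hb 1, rfl⟩))⟩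
  have hxv : (x : MvPolynomial (Fin (r + 2)) A) =
    MvPolynomial.C (a 0) * MvPolynomial.X 0 - MvPolynomial.C (b 1) * MvPolynomial.X 1 := rfl
  have hx0 : x ≠ 0 := by
    intro h0
    have h1 : (x : MvPolynomial (Fin (r + 2)) A) = 0 := by rw [h0]; rfl
    rw [hxv] at h1
    have h2 := congrArg (MvPolynomial.coeff (Finsupp.single 0 1)) h1
    rw [MvPolynomial.coeff_sub, MvPolynomial.coeff_C_mul, MvPolynomial.coeff_C_mul,
      MvPolynomial.coeff_X', MvPolynomial.coeff_X', if_pos rfl, if_neg (by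
        rw [Finsupp.single_left_inj (by simp)]; simp)] at h2
    apply h.ha0 0
    have : a 0 = 0 := by simpa using h2
    rw [this, map_zero]
  have hxM : x ∈ Mid I := by
    rw [mem_Mid, hxv]; simp
  choose g hg using hfs
  refine ⟨x :: rs.map g, ?_, ?_, by simp⟩
  · intro z hz
    rcases List.mem_cons.1 hz with rfl | hz
    · exact hxM
    · obtain ⟨y, hy, rfl⟩ := List.mem_map.1 hz
      rw [hfM, hg]
      exact hrs y hy
  · refine wr_lift f (fun y => ⟨g y, hg y⟩) x ?_ ?_ _ ?_
    · intro w hw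
      exact (mul_eq_zero.1 hw).resolve_left hx0
    · apply le_antisymm
      · intro z hz
        have hz' : phi r (a 0) (b 1) z = 0 := congrArg Subtype.val hz
        obtain ⟨y, hy, he⟩ := mr_ker hinj h z z.2 hz'
        exact Ideal.mem_span_singleton.2 ⟨⟨y, hy⟩, Subtype.ext he⟩
      · rw [Ideal.span_singleton_le_iff_mem, RingHom.mem_ker]
        apply Subtype.ext
        rw [hfv, hxv, map_sub, map_mul, map_mul, phi_C, phi_C, phi_X0, phi_X1]
        simp only [ZeroMemClass.coe_zero]
        ring
    · rw [List.map_map]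
      have : (f ∘ g) = id := funext hg
      rwa [this, List.map_id]

end step
end MR

namespace MR

universe u
open IsLocalRing RingTheory.Sequence

section base
variable {A : Type u} [CommRing A] [IsDomain A]

lemma mo_coeff_mul_zero (I : Ideal A) (b : A) (hb : b ∈ I ^ 1) (u : reesAlgebra I) :
    ((mo I 1 b hb * u : reesAlgebra I) : Polynomial A).coeff 0 = 0 := by
  change (Polynomial.monomial 1 b * (u : Polynomial A)).coeff 0 = 0
  rw [Polynomial.mul_coeff_zero, Polynomial.coeff_monomial]; simp

lemma mo_coeff_mul_succ (I : Ideal A) (b : A) (hb : b ∈ I ^ 1) (u : reesAlgebra I) (n : ℕ) :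
    ((mo I 1 b hb * u : reesAlgebra I) : Polynomial A).coeff (n + 1) =
      b * (u : Polynomial A).coeff n :=
  Polynomial.coeff_monomial_mul _ _ _ _

lemma alg_coeff_mul (I : Ideal A) (a : A) (u : reesAlgebra I) (n : ℕ) :
    ((algebraMap A (reesAlgebra I) a * u : reesAlgebra I) : Polynomial A).coeff n =
      a * (u : Polynomial A).coeff n :=
  Polynomial.coeff_C_mul _

lemma mo_add (I : Ideal A) (n : ℕ) (y z : A) (hy : y ∈ I ^ n) (hz : z ∈ I ^ n) :
    mo I n (y + z) (Ideal.add_mem _ hy hz) = mo I n y hy + mo I n z hz :=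
  Subtype.ext (map_add _ _ _)

lemma mo_mul (I : Ideal A) (n : ℕ) (b c : A) (hb : b ∈ I ^ 1) (hc : c ∈ I ^ n)
    (h : b * c ∈ I ^ (n + 1)) :
    mo I (n + 1) (b * c) h = mo I 1 b hb * mo I n c hc := by
  apply Subtype.ext
  change Polynomial.monomial (n + 1) (b * c) = Polynomial.monomial 1 b * Polynomial.monomial n c
  rw [Polynomial.monomial_mul_monomial, add_comm]

lemma mo_alg (I : Ideal A) (n : ℕ) (a c : A) (hc : c ∈ I ^ n) (h : a * c ∈ I ^ n) :
    mo I n (a * c) h = algebraMap A _ a * mo I n c hc := by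
  apply Subtype.ext
  change Polynomial.monomial n (a * c) = Polynomial.C a * Polynomial.monomial n c
  rw [Polynomial.C_mul_monomial]

lemma mo_zero (I : Ideal A) (c : A) (h : c ∈ I ^ 0) :
    mo I 0 c h = algebraMap A _ c := rfl

lemma mo_ne (I : Ideal A) (n : ℕ) (b : A) (hb : b ∈ I ^ n) (h0 : b ≠ 0) : mo I n b hb ≠ 0 := by
  intro h
  have h1 : Polynomial.monomial n b = 0 := congrArg Subtype.val h
  exact h0 ((Polynomial.monomial_eq_zero_iff _ _).1 h1)

lemma pow_colon (I : Ideal A) (a b : A) (ha : a ∈ I) (hb : b ∈ I)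
    (hb0 : b ≠ 0) (hs : ∀ p q, a * p = b * q → b ∣ p)
    (hpow : ∀ n, I ^ (n + 2) ≤ Ideal.span {a} * I ^ (n + 1) ⊔ Ideal.span {b} * I ^ (n + 1))
    (n : ℕ) : ∀ c, b * c ∈ I ^ (n + 1) → c ∈ I ^ n := by
  induction n with
  | zero => intro c _; simp
  | succ n ih =>
    intro c hc
    obtain ⟨u, hu, v, hv, he⟩ := Submodule.mem_sup.1 (hpow n hc)
    obtain ⟨y, hy, rfl⟩ := Ideal.mem_span_singleton_mul.1 hu
    obtain ⟨z, hz, rfl⟩ := Ideal.mem_span_singleton_mul.1 hv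
    obtain ⟨y', rfl⟩ := hs y (c - z) (by linear_combination he)
    have h1 := ih y' hy
    have h2 : c = z + a * y' := by
      apply mul_left_cancel₀ hb0
      linear_combination -he
    rw [h2]
    refine Ideal.add_mem _ hz ?_
    rw [pow_succ']
    exact Ideal.mul_mem_mul ha h1

lemma base_wr (I : Ideal A) (a b : A) (ha : a ∈ I) (hb : b ∈ I) (ha0 : a ≠ 0)
    (hb0 : b ≠ 0) (hs : ∀ p q, a * p = b * q → b ∣ p) (hs' : ∀ p q, b * p = a * q → a ∣ p)
    (hsq : I ^ 2 ≤ Ideal.span {a} * I ⊔ Ideal.span {b} * I) :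
    IsWeaklyRegular (reesAlgebra I) [mo I 1 b (by simpa using hb), algebraMap A _ a,
      mo I 1 a (by simpa using ha) - algebraMap A _ b] := by
  have hpow : ∀ n, I ^ (n + 2) ≤ Ideal.span {a} * I ^ (n + 1) ⊔ Ideal.span {b} * I ^ (n + 1) := by
    intro n
    calc I ^ (n + 2) = I ^ 2 * I ^ n := by ring
      _ ≤ (Ideal.span {a} * I ⊔ Ideal.span {b} * I) * I ^ n := Ideal.mul_mono_left hsq
      _ = _ := by rw [Ideal.sup_mul, pow_succ', mul_assoc, mul_assoc]
  have hcol := pow_colon I a b ha hb hb0 hs hpow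
  set B := mo I 1 b (by simpa using hb) with hB
  have h1 : IsWeaklyRegular (reesAlgebra I) ([] ++ [B]) := by
    rw [wr_snoc]
    refine ⟨IsWeaklyRegular.nil _ _, fun w hw => ?_⟩
    rw [Ideal.ofList_nil, Ideal.mem_bot] at hw ⊢
    exact (mul_eq_zero.1 hw).resolve_left (mo_ne I 1 b _ hb0)
  have h2 : IsWeaklyRegular (reesAlgebra I) ([B] ++ [algebraMap A _ a]) := by
    rw [wr_snoc]
    refine ⟨h1, fun w hw => ?_⟩
    rw [Ideal.ofList_singleton] at hw ⊢
    obtain ⟨u, hu⟩ := Ideal.mem_span_singleton.1 hw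
    have hc : ∀ n, a * (w : Polynomial A).coeff n =
        ((B * u : reesAlgebra I) : Polynomial A).coeff n := by
      intro n; rw [← hu, alg_coeff_mul]
    rw [rees_sum I w]
    refine Ideal.add_mem _ ?_ (Ideal.sum_mem _ fun i _ => ?_)
    · have h3 := hc 0
      rw [mo_coeff_mul_zero] at h3
      rw [(mul_eq_zero.1 h3).resolve_left ha0, map_zero]
      exact zero_mem _
    · have h3 := hc (i + 1)
      rw [mo_coeff_mul_succ] at h3
      have hmem := (mem_reesAlgebra_iff I _).1 w.2 (i + 1)
      obtain ⟨c, hcc⟩ := hs _ _ h3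
      have hcI : c ∈ I ^ i := hcol i c (hcc ▸ hmem)
      refine Ideal.mem_span_singleton.2 ⟨mo I i c hcI, ?_⟩
      rw [hB, ← mo_mul I i b c _ hcI (hcc ▸ hmem)]
      congr 1
  have h3 : IsWeaklyRegular (reesAlgebra I) ([B, algebraMap A _ a] ++
      [mo I 1 a (by simpa using ha) - algebraMap A _ b]) := by
    rw [wr_snoc]
    refine ⟨h2, ?_⟩
    set Q := Ideal.ofList [B, algebraMap A (reesAlgebra I) a] with hQ
    have hBQ : B ∈ Q := Ideal.subset_span (by simp)
    have haQ : algebraMap A (reesAlgebra I) a ∈ Q := Ideal.subset_span (by simp)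
    have hQe : ∀ z ∈ Q, ∃ u v : reesAlgebra I, z = B * u + algebraMap A _ a * v := by
      intro z hz
      rw [hQ, Ideal.ofList_cons, Ideal.ofList_singleton] at hz
      obtain ⟨_, hu, _, hv, rfl⟩ := Submodule.mem_sup.1 hz
      obtain ⟨u, rfl⟩ := Ideal.mem_span_singleton.1 hu
      obtain ⟨v, rfl⟩ := Ideal.mem_span_singleton.1 hv
      exact ⟨u, v, rfl⟩
    suffices H : ∀ N, ∀ w : reesAlgebra I, (∀ n, N < n → (w : Polynomial A).coeff n = 0) →
        (mo I 1 a (by simpa using ha) - algebraMap A _ b) * w ∈ Q → w ∈ Q from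
      fun w hw => H (w : Polynomial A).natDegree w
        (fun n hn => Polynomial.coeff_eq_zero_of_natDegree_lt hn) hw
    intro N
    induction N with
    | zero =>
      intro w hwN hw
      obtain ⟨u, v, he⟩ := hQe _ hw
      have h4 := congrArg (fun z : reesAlgebra I => (z : Polynomial A).coeff 0) he
      simp only [sub_mul, Subalgebra.coe_sub, Subalgebra.coe_add, Polynomial.coeff_sub,
        Polynomial.coeff_add] at h4
      rw [mo_coeff_mul_zero, mo_coeff_mul_zero, alg_coeff_mul, alg_coeff_mul] at h4
      obtain ⟨c, hc⟩ := hs' ((w : Polynomial A).coeff 0) (-(v : Polynomial A).coeff 0)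
        (by linear_combination -h4)
      have hwe : w = algebraMap A (reesAlgebra I) a * algebraMap A _ c := by
        apply Subtype.ext
        rw [← map_mul, ← hc]
        change _ = Polynomial.C _
        apply Polynomial.eq_C_of_natDegree_eq_zero
        rw [← Nat.le_zero, Polynomial.natDegree_le_iff_coeff_eq_zero]
        exact hwN
      rw [hwe]
      exact Ideal.mul_mem_right _ _ haQ
    | succ N ih =>
      intro w hwN hw
      have hmem := (mem_reesAlgebra_iff I _).1 w.2 (N + 1)
      have htop : mo I (N + 1) _ hmem ∈ Q := by
        obtain ⟨u, v, he⟩ := hQe _ hw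
        have h4 := congrArg (fun z : reesAlgebra I => (z : Polynomial A).coeff (N + 2)) he
        simp only [sub_mul, Subalgebra.coe_sub, Subalgebra.coe_add, Polynomial.coeff_sub,
          Polynomial.coeff_add] at h4
        rw [mo_coeff_mul_succ, mo_coeff_mul_succ, alg_coeff_mul, alg_coeff_mul,
          hwN (N + 2) (by omega)] at h4
        have hv := (mem_reesAlgebra_iff I _).1 v.2 (N + 2)
        obtain ⟨c, hc⟩ := hs ((w : Polynomial A).coeff (N + 1) - (v : Polynomial A).coeff (N + 2))
          ((u : Polynomial A).coeff (N + 1)) (by linear_combination h4)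
        have hcI : c ∈ I ^ N := by
          apply hcol
          rw [← hc]
          exact Ideal.sub_mem _ hmem (Ideal.pow_le_pow_right (by omega) hv)
        obtain ⟨_, hu', _, hv', he'⟩ := Submodule.mem_sup.1 (hpow N hv)
        obtain ⟨y, hy, rfl⟩ := Ideal.mem_span_singleton_mul.1 hu'
        obtain ⟨z, hz, rfl⟩ := Ideal.mem_span_singleton_mul.1 hv'
        have hzN : z + c ∈ I ^ N := Ideal.add_mem _ (Ideal.pow_le_pow_right (by omega) hz) hcI
        have hb1 : b * (z + c) ∈ I ^ (N + 1) := by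
          rw [pow_succ']; exact Ideal.mul_mem_mul hb hzN
        have e : (w : Polynomial A).coeff (N + 1) = a * y + b * (z + c) := by
          linear_combination hc - he'
        have e2 : mo I (N + 1) _ hmem = algebraMap A _ a * mo I (N + 1) y hy +
            B * mo I N (z + c) hzN := by
          rw [hB, ← mo_mul I N b (z + c) _ hzN hb1,
            ← mo_alg I (N + 1) a y hy (Ideal.mul_mem_left _ _ hy), ← mo_add]
          congr 1
        rw [e2]
        exact Ideal.add_mem _ (Ideal.mul_mem_right _ _ haQ) (Ideal.mul_mem_right _ _ hBQ)
      have h5 := ih (w - mo I (N + 1) _ hmem) (by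
        intro n hn
        change ((w : Polynomial A) - Polynomial.monomial (N + 1) _).coeff n = 0
        rw [Polynomial.coeff_sub, Polynomial.coeff_monomial]
        split_ifs with hnN
        · rw [hnN, sub_self]
        · rw [hwN n (by omega), sub_zero]) (by
        rw [mul_sub]
        exact Ideal.sub_mem _ hw (Ideal.mul_mem_left _ _ htop))
      have := Ideal.add_mem _ h5 htop
      rwa [sub_add_cancel] at this
  exact h3

lemma base_top (x y : A) (hx0 : x ≠ 0) (hs : ∀ p q, y * p = x * q → x ∣ p) :
    IsWeaklyRegular (reesAlgebra (⊤ : Ideal A)) [mo (⊤ : Ideal A) 1 (1 : A) (by simp), algebraMap A _ x,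
      algebraMap A _ y] := by
  set B := mo (⊤ : Ideal A) 1 1 (by simp) with hB
  have h1 : IsWeaklyRegular (reesAlgebra (⊤ : Ideal A)) ([] ++ [B]) := by
    rw [wr_snoc]
    refine ⟨IsWeaklyRegular.nil _ _, fun w hw => ?_⟩
    rw [Ideal.ofList_nil, Ideal.mem_bot] at hw ⊢
    exact (mul_eq_zero.1 hw).resolve_left (mo_ne _ 1 1 _ one_ne_zero)
  have hpos : ∀ i c h, mo (⊤ : Ideal A) (i + 1) c h ∈ Ideal.span {B} := by
    intro i c h
    refine Ideal.mem_span_singleton.2 ⟨mo ⊤ i c (by simp [Ideal.top_pow]), ?_⟩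
    rw [hB, ← mo_mul ⊤ i 1 c _ _ (by simp [Ideal.top_pow])]
    congr 1
    rw [one_mul]
  have h2 : IsWeaklyRegular (reesAlgebra (⊤ : Ideal A)) ([B] ++ [algebraMap A _ x]) := by
    rw [wr_snoc]
    refine ⟨h1, fun w hw => ?_⟩
    rw [Ideal.ofList_singleton] at hw ⊢
    obtain ⟨u, hu⟩ := Ideal.mem_span_singleton.1 hw
    rw [rees_sum ⊤ w]
    refine Ideal.add_mem _ ?_ (Ideal.sum_mem _ fun i _ => hpos _ _ _)
    have h3 := congrArg (fun z : reesAlgebra (⊤ : Ideal A) => (z : Polynomial A).coeff 0) hu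
    rw [alg_coeff_mul, mo_coeff_mul_zero] at h3
    rw [(mul_eq_zero.1 h3).resolve_left hx0, map_zero]
    exact zero_mem _
  have h3 : IsWeaklyRegular (reesAlgebra (⊤ : Ideal A)) ([B, algebraMap A _ x] ++
      [algebraMap A _ y]) := by
    rw [wr_snoc]
    refine ⟨h2, fun w hw => ?_⟩
    rw [Ideal.ofList_cons, Ideal.ofList_singleton] at hw ⊢
    obtain ⟨_, hu, _, hv, he⟩ := Submodule.mem_sup.1 hw
    obtain ⟨u, rfl⟩ := Ideal.mem_span_singleton.1 hu
    obtain ⟨v, rfl⟩ := Ideal.mem_span_singleton.1 hv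
    have h4 := congrArg (fun z : reesAlgebra (⊤ : Ideal A) => (z : Polynomial A).coeff 0) he
    simp only [Subalgebra.coe_add, Polynomial.coeff_add] at h4
    rw [alg_coeff_mul, alg_coeff_mul, mo_coeff_mul_zero, zero_add] at h4
    obtain ⟨c, hc⟩ := hs _ _ h4.symm
    rw [rees_sum ⊤ w]
    refine Ideal.add_mem _ ?_ (Ideal.sum_mem _ fun i _ => Ideal.mem_sup_left (hpos _ _ _))
    rw [hc, map_mul]
    exact Ideal.mem_sup_right (Ideal.mul_mem_right _ _ (Ideal.mem_span_singleton_self _))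
  exact h3

end base
end MR

namespace MR

universe u
open IsLocalRing RingTheory.Sequence

section fin
variable {A : Type u} [CommRing A] [IsDomain A] [IsNoetherianRing A] [IsLocalRing A]

lemma dim_closure {C D : Type*} [CommRing C] [IsNoetherianRing C] [CommRing D] [IsDomain D]
    (g : C →+* D) (hg : Function.Injective g) (s : Finset D)
    (hs : ∀ y ∈ s, ∃ p q : C, g q ≠ 0 ∧ g q * y = g p) (E : Subring D)
    (hE : E = Subring.closure (Set.range g ∪ s)) : ringKrullDim E ≤ ringKrullDim C := by
  letI := g.toAlgebra
  have h := dim_adjoin (C := C) (D := D) hg s hs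
  have h2 : (Algebra.adjoin C (s : Set D)).toSubring = E := by
    rw [hE, Algebra.adjoin_eq_ring_closure]; rfl
  subst h2
  exact h

lemma scale_inj {r : ℕ} (a : Fin r → A) (ha : ∀ i, a i ≠ 0) :
    Function.Injective (MvPolynomial.aeval (R := A)
      (fun i => MvPolynomial.C (a i) * MvPolynomial.X i : Fin r → MvPolynomial (Fin r) A)) := by
  rw [injective_iff_map_eq_zero]
  intro f hf
  apply MvPolynomial.map_injective _ (IsFractionRing.injective A (FractionRing A))
  rw [map_zero]
  ext n
  have h1 := coeff_scale (K := FractionRing A) (fun i => algebraMap A _ (a i))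
    (MvPolynomial.map (algebraMap A _) f) n
  have h2 : ∀ f : MvPolynomial (Fin r) A,
      MvPolynomial.aeval (R := FractionRing A)
        (fun i => MvPolynomial.C (algebraMap A (FractionRing A) (a i)) *
          MvPolynomial.X i) (MvPolynomial.map (algebraMap A (FractionRing A)) f) =
      MvPolynomial.map (algebraMap A (FractionRing A)) (MvPolynomial.aeval (R := A)
      (fun i => MvPolynomial.C (a i) * MvPolynomial.X i : Fin r → MvPolynomial (Fin r) A) f) := by
    intro f
    induction f using MvPolynomial.induction_on with
    | C a => simp
    | add p q hp hq => simp only [map_add, hp, hq]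
    | mul_X p i hp => simp only [map_mul, hp]; simp
  rw [h2, hf, map_zero, MvPolynomial.coeff_zero] at h1
  rw [MvPolynomial.coeff_zero]
  refine (mul_eq_zero.1 h1.symm).resolve_left ?_
  refine Finset.prod_ne_zero_iff.2 fun i _ => pow_ne_zero _ ?_
  rw [Ne, FaithfulSMul.algebraMap_eq_zero_iff]
  exact ha i

lemma mr_dim {r : ℕ} (I : Fin r → Ideal A) (hI : ∀ i, I i ≠ ⊥) :
    ringKrullDim (multiReesAlgebra I) ≤ ringKrullDim A + r := by
  classical
  choose a ha ha0 using fun i => Submodule.exists_mem_ne_zero_of_ne_bot (hI i)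
  choose G hG using fun i => (isNoetherianRing_iff_ideal_fg A).1 inferInstance (I i)
  set s := Finset.univ.biUnion fun i => (G i).image fun a =>
    (MvPolynomial.C a * MvPolynomial.X i : MvPolynomial (Fin r) A) with hs
  have hsm : ∀ i, ∀ c ∈ G i, MvPolynomial.C c * MvPolynomial.X i ∈ s := by
    intro i c hc
    exact Finset.mem_biUnion.2 ⟨i, by simp, Finset.mem_image.2 ⟨c, hc, rfl⟩⟩
  set g := MvPolynomial.aeval (R := A)
      (fun i => MvPolynomial.C (a i) * MvPolynomial.X i : Fin r → MvPolynomial (Fin r) A) with hg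
  have hgC : ∀ c, g (MvPolynomial.C c) = MvPolynomial.C c := by intro c; simp [hg]
  have hmem : ∀ i, ∀ c ∈ I i, MvPolynomial.C c * MvPolynomial.X i ∈ multiReesAlgebra I :=
    fun i c hc => Algebra.subset_adjoin (Set.mem_iUnion.2 ⟨i, c, hc, rfl⟩)
  have := dim_closure g.toRingHom (scale_inj a ha0) s (by
    intro y hy
    obtain ⟨i, _, hy⟩ := Finset.mem_biUnion.1 hy
    obtain ⟨c, hc, rfl⟩ := Finset.mem_image.1 hy
    refine ⟨MvPolynomial.C c * MvPolynomial.X i, MvPolynomial.C (a i), ?_, ?_⟩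
    · change g _ ≠ 0
      rw [hgC]
      simpa using ha0 i
    · change g _ * _ = g _
      rw [map_mul, hgC, hgC, hg, MvPolynomial.aeval_X]
      ring) (multiReesAlgebra I).toSubring (by
    apply le_antisymm
    · let E : Subalgebra A (MvPolynomial (Fin r) A) :=
        { Subring.closure (Set.range g.toRingHom ∪ (s : Set (MvPolynomial (Fin r) A))) with
          algebraMap_mem' := fun c => Subring.subset_closure (Or.inl ⟨MvPolynomial.C c, hgC c⟩) }
      have hE : multiReesAlgebra I ≤ E := by
        apply Algebra.adjoin_le
        intro x hx
        obtain ⟨i, c, hc, rfl⟩ := Set.mem_iUnion.1 hx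
        rw [← hG i] at hc
        refine Submodule.span_induction (p := fun a _ => MvPolynomial.C a * MvPolynomial.X i ∈
          E) ?_ ?_ ?_ ?_ hc
        · intro c hc
          exact Subring.subset_closure (Or.inr (hsm i c hc))
        · simp
        · intro x y _ _ hx hy
          rw [map_add, add_mul]; exact add_mem hx hy
        · intro c x _ hx
          rw [smul_eq_mul, map_mul, mul_assoc]
          exact mul_mem (Subalgebra.algebraMap_mem E c) hx
      exact hE
    · rw [Subring.closure_le]
      rintro x (⟨f, rfl⟩ | hx)
      · change g f ∈ multiReesAlgebra I
        induction f using MvPolynomial.induction_on with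
        | C c => rw [hgC]; exact Subalgebra.algebraMap_mem _ c
        | add p q hp hq => rw [map_add]; exact add_mem hp hq
        | mul_X p i hp =>
          rw [map_mul]
          refine mul_mem hp ?_
          rw [hg, MvPolynomial.aeval_X]
          exact hmem i _ (ha i)
      · obtain ⟨i, _, hy⟩ := Finset.mem_biUnion.1 hx
        obtain ⟨c, hc, rfl⟩ := Finset.mem_image.1 hy
        refine hmem i c ?_
        rw [← hG]; exact Ideal.subset_span hc)
  rw [MvPolynomial.ringKrullDim_of_isNoetherianRing] at this
  rw [Nat.card_eq_fintype_card, Fintype.card_fin] at this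
  exact this

lemma base_transfer (I : Fin 1 → Ideal A) (rs : List (reesAlgebra (I 0)))
    (hm : ∀ z ∈ rs, (z : Polynomial A).coeff 0 ∈ maximalIdeal A)
    (hw : IsWeaklyRegular (reesAlgebra (I 0)) rs) :
    ∃ ts : List (multiReesAlgebra I), (∀ z ∈ ts, z ∈ Mid I) ∧
      IsWeaklyRegular (multiReesAlgebra I) ts ∧ ts.length = rs.length := by
  let ε : MvPolynomial (Fin 1) A →ₐ[A] Polynomial A := MvPolynomial.aeval (fun _ => Polynomial.X)
  have hε : Function.Injective ε := by
    refine Function.LeftInverse.injective (g := Polynomial.aeval (MvPolynomial.X 0 :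
      MvPolynomial (Fin 1) A)) fun f => ?_
    have : ((Polynomial.aeval (MvPolynomial.X 0 : MvPolynomial (Fin 1) A)).comp ε) =
        AlgHom.id A _ := by
      apply MvPolynomial.algHom_ext
      intro i
      simp [ε, Subsingleton.elim i 0]
    exact congrArg (fun h => h f) this
  have him : (multiReesAlgebra I).map ε = reesAlgebra (I 0) := by
    rw [multiReesAlgebra, AlgHom.map_adjoin, ← adjoin_monomial_eq_reesAlgebra]
    congr 1
    ext y
    simp only [Set.mem_image, Set.mem_iUnion, Submodule.map_coe]
    constructor
    · rintro ⟨_, ⟨i, c, hc, rfl⟩, rfl⟩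
      rw [Subsingleton.elim i 0] at hc
      exact ⟨c, hc, by simp [ε, Polynomial.C_mul_X_eq_monomial]⟩
    · rintro ⟨c, hc, rfl⟩
      exact ⟨_, ⟨0, c, hc, rfl⟩, by simp [ε, Polynomial.C_mul_X_eq_monomial]⟩
  let f : multiReesAlgebra I →+* reesAlgebra (I 0) :=
    (ε.toRingHom.comp (multiReesAlgebra I).val.toRingHom).codRestrict
      (reesAlgebra (I 0)) (fun z => him ▸ ⟨z.1, z.2, rfl⟩)
  have hfv : ∀ z, (f z : Polynomial A) = ε z := fun z => rfl
  have hfs : Function.Surjective f := by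
    rintro ⟨z, hz⟩
    have hz' := hz
    rw [← him] at hz'
    obtain ⟨y, hy, he⟩ := hz'
    exact ⟨⟨y, hy⟩, Subtype.ext he⟩
  have hfi : Function.Injective f := by
    intro y z h
    exact Subtype.ext (hε (congrArg Subtype.val h))
  have hfM : ∀ z, z ∈ Mid I ↔ (f z : Polynomial A).coeff 0 ∈ maximalIdeal A := by
    intro z
    rw [mem_Mid, hfv]
    have : ∀ p : MvPolynomial (Fin 1) A, (ε p).coeff 0 = MvPolynomial.constantCoeff p := by
      intro p
      have : (Polynomial.constantCoeff.comp ε.toRingHom) =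
          (MvPolynomial.constantCoeff : MvPolynomial (Fin 1) A →+* A) := by
        apply MvPolynomial.ringHom_ext
        · intro c; simp [ε]
        · intro i; simp [ε]
      exact congrArg (fun h => h p) this
    rw [this]
  choose g hg using hfs
  refine ⟨rs.map g, ?_, ?_, by simp⟩
  · intro z hz
    obtain ⟨y, hy, rfl⟩ := List.mem_map.1 hz
    rw [hfM, hg]
    exact hm y hy
  · refine wr_equiv f ⟨hfi, fun y => ⟨g y, hg y⟩⟩ _ ?_
    rw [List.map_map]
    have : (f ∘ g) = id := funext hg
    rwa [this, List.map_id]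

variable {K : Type u} [Field K] [Algebra A K] [IsFractionRing A K] [IsIntegrallyClosed A]

/-- Existence of a system of parameters of length two. -/
lemma exists_sop (k : Type*) [Field k] [Infinite k] [Algebra k A] (hdim : ringKrullDim A = 2) :
    ∃ x y : A, x ∈ maximalIdeal A ∧ y ∈ maximalIdeal A ∧ x ≠ 0 ∧ y ≠ 0 ∧
      (∀ p q, y * p = x * q → x ∣ p) := by
  obtain ⟨a, b, ha, hb, ha0, hb0, _, h⟩ := gen_elems k (K := FractionRing A) hdim
    (fun _ : Unit => maximalIdeal A) (fun _ => ⟨1, by simp⟩)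
  simp only [Finset.univ_unique, Finset.prod_singleton] at ha0 hb0 h
  exact ⟨_, _, hb _, ha _, hb0, ha0, fun p q e => s2 hdim hb0 h e⟩

lemma mr_base (k : Type*) [Field k] [Infinite k] [Algebra k A] (hdim : ringKrullDim A = 2)
    (I : Fin 1 → Ideal A) (a b : Fin 1 → A) (h : Good K I a b)
    (hp : ∀ p : Ideal A, p.IsPrime → ∏ i, a i ∈ p → ∏ i, b i ∈ p → p = maximalIdeal A) :
    ∃ ts : List (multiReesAlgebra I), (∀ z ∈ ts, z ∈ Mid I) ∧
      IsWeaklyRegular (multiReesAlgebra I) ts ∧ ts.length = 3 := by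
  simp only [Finset.univ_unique, Finset.prod_singleton, Fin.default_eq_zero] at hp
  have ha0 : a 0 ≠ 0 := fun e => h.ha0 0 (by rw [e, map_zero])
  have hb0 : b 0 ≠ 0 := fun e => h.hb0 0 (by rw [e, map_zero])
  by_cases hT : I 0 = ⊤
  · obtain ⟨x, y, hx, hy, hx0, hy0, hs⟩ := exists_sop (A := A) k hdim
    have hI : I = fun _ => ⊤ := by ext1 i; rw [Subsingleton.elim i 0, hT]
    subst hI
    refine base_transfer (fun _ => (⊤ : Ideal A)) _ ?_ (base_top x y hx0 hs)
    intro z hz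
    simp only [List.mem_cons, List.not_mem_nil, or_false] at hz
    rcases hz with rfl | rfl | rfl
    · change (Polynomial.monomial 1 (1 : A)).coeff 0 ∈ _
      rw [Polynomial.coeff_monomial]; simp
    · change (Polynomial.C x).coeff 0 ∈ _
      simpa using hx
    · change (Polynomial.C y).coeff 0 ∈ _
      simpa using hy
  · have hle := le_maximalIdeal hT
    refine base_transfer _ _ ?_ (base_wr (I 0) (a 0) (b 0) (h.ha 0) (h.hb 0) ha0 hb0
      (fun p q e => s2 hdim hb0 hp e)
      (fun p q e => s2 hdim ha0 (fun p hp1 h1 h2 => hp p hp1 h2 h1) e) (h.sq 0))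
    intro z hz
    simp only [List.mem_cons, List.not_mem_nil, or_false] at hz
    rcases hz with rfl | rfl | rfl
    · change (Polynomial.monomial 1 (b 0)).coeff 0 ∈ _
      rw [Polynomial.coeff_monomial]; simp
    · change (Polynomial.C (a 0)).coeff 0 ∈ _
      simpa using hle (h.ha 0)
    · change (Polynomial.monomial 1 (a 0) - Polynomial.C (b 0)).coeff 0 ∈ _
      rw [Polynomial.coeff_sub, Polynomial.coeff_monomial]
      simpa using hle (h.hb 0)

lemma mr_ind (k : Type*) [Field k] [Infinite k] [Algebra k A] (hdim : ringKrullDim A = 2) (r : ℕ) :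
    ∀ (I : Fin (r + 1) → Ideal A) (a b : Fin (r + 1) → A) (_ : Good K I a b)
    (_ : ∀ p : Ideal A, p.IsPrime → ∏ i, a i ∈ p → ∏ i, b i ∈ p → p = maximalIdeal A),
    ∃ ts : List (multiReesAlgebra I), (∀ z ∈ ts, z ∈ Mid I) ∧
      IsWeaklyRegular (multiReesAlgebra I) ts ∧ ts.length = r + 3 := by
  induction r with
  | zero => exact fun I a b h hp => mr_base k hdim I a b h hp
  | succ r ih =>
    intro I a b h hp
    have hinj := IsFractionRing.injective A K
    obtain ⟨rs, h1, h2, h3⟩ := ih (mrg I) (mrg a) (mrg b) (h.merge hinj)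
      (by rw [mrg_prod, mrg_prod]; exact hp)
    obtain ⟨ts, h4, h5, h6⟩ := mr_step hinj h rs h1 h2
    exact ⟨ts, h4, h5, by rw [h6, h3]⟩

lemma mr_zero (k : Type*) [Field k] [Infinite k] [Algebra k A] (hdim : ringKrullDim A = 2)
    (I : Fin 0 → Ideal A) :
    ∃ ts : List (multiReesAlgebra I), (∀ z ∈ ts, z ∈ Mid I) ∧
      IsWeaklyRegular (multiReesAlgebra I) ts ∧ ts.length = 2 := by
  obtain ⟨x, y, hx, hy, hx0, hy0, hs⟩ := exists_sop (A := A) k hdim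
  have hax : ∀ c, aug I (algebraMap A _ c) = c := by
    intro c
    rw [aug_apply]
    exact MvPolynomial.constantCoeff_C _ c
  have hinj : Function.Injective (aug I) := by
    intro f g h
    rw [aug_apply, aug_apply] at h
    apply Subtype.ext
    rw [MvPolynomial.eq_C_of_isEmpty (f : MvPolynomial (Fin 0) A),
      MvPolynomial.eq_C_of_isEmpty (g : MvPolynomial (Fin 0) A)]
    exact congrArg _ h
  refine ⟨[algebraMap A _ x, algebraMap A _ y], ?_, ?_, rfl⟩
  · intro z hz
    simp only [List.mem_cons, List.not_mem_nil, or_false] at hz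
    rcases hz with rfl | rfl
    · change aug I _ ∈ maximalIdeal A
      rwa [hax]
    · change aug I _ ∈ maximalIdeal A
      rwa [hax]
  · refine wr_equiv (aug I) ⟨hinj, fun c => ⟨_, hax c⟩⟩ _ ?_
    simp only [List.map_cons, List.map_nil, hax]
    have h1 : IsWeaklyRegular A ([] ++ [x]) := by
      rw [wr_snoc]
      refine ⟨IsWeaklyRegular.nil _ _, fun w hw => ?_⟩
      rw [Ideal.ofList_nil, Ideal.mem_bot] at hw ⊢
      exact (mul_eq_zero.1 hw).resolve_left hx0
    have h2 : IsWeaklyRegular A ([x] ++ [y]) := by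
      rw [wr_snoc]
      refine ⟨h1, fun w hw => ?_⟩
      rw [Ideal.ofList_singleton, Ideal.mem_span_singleton] at hw ⊢
      obtain ⟨q, hq⟩ := hw
      exact hs _ _ hq
    exact h2

theorem main (k : Type*) [Field k] [Infinite k] [Algebra k A] (hdim : ringKrullDim A = 2) (r : ℕ)
    (I : Fin r → Ideal A) (hprim : ∀ i, ∃ n : ℕ, maximalIdeal A ^ n ≤ I i)
    (hrees : ∀ i, IsCMNormalDomain (reesAlgebra (I i))) : IsCMNormalDomain (multiReesAlgebra I) := by
  have hm0 : maximalIdeal A ≠ ⊥ := by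
    intro h
    have := (isField_iff_maximalIdeal_eq.2 h)
    rw [ringKrullDim_eq_zero_of_isField this] at hdim
    exact absurd hdim (by norm_num)
  have hI : ∀ i, I i ≠ ⊥ := by
    intro i h
    obtain ⟨n, hn⟩ := hprim i
    rw [h, le_bot_iff] at hn
    exact pow_ne_zero n hm0 hn
  obtain ⟨a, b, h, hp⟩ := good_exists k (K := FractionRing A) hdim I hprim hI hrees
  have hreg : ∃ ts : List (multiReesAlgebra I), (∀ z ∈ ts, z ∈ Mid I) ∧
      IsWeaklyRegular (multiReesAlgebra I) ts ∧ ts.length = r + 2 := by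
    cases r with
    | zero => exact mr_zero k hdim I
    | succ r => exact mr_ind k hdim r I a b h hp
  obtain ⟨ts, h1, h2, h3⟩ := hreg
  have hcm : IsCohenMacaulayLocalRing (Localization.AtPrime (Mid I)) := by
    refine cm_of_regular (ts.map (algebraMap _ (Localization.AtPrime (Mid I)))) ?_
      (h2.of_isLocalization _ (Mid I).primeCompl) ?_
    · intro z hz
      obtain ⟨z, hz', rfl⟩ := List.mem_map.1 hz
      exact (IsLocalization.AtPrime.to_map_mem_maximal_iff _ (Mid I) z).2 (h1 z hz')
    · rw [IsLocalization.AtPrime.ringKrullDim_eq_height (Mid I)]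
      refine (Ideal.height_le_ringKrullDim_of_ne_top Ideal.IsPrime.ne_top').trans ?_
      refine (mr_dim I hI).trans ?_
      rw [hdim, List.length_map, h3]
      push_cast
      rw [add_comm]
  refine ⟨⟨inferInstance, fun P hP => mr_cm I hcm P⟩, inferInstance, ?_⟩
  exact mr_normal (K := FractionRing A) I hI (fun n => h.vc_prod Finset.univ n)

end fin
end MR

/-- If `I₁, …, I_r` are `𝔪`-primary ideals of a two-dimensional
excellent normal local domain over an algebraically closed field whose Rees algebras
are all Cohen–Macaulay normal domains, then the multi-Rees algebra
`A[I₁t₁, …, I_r t_r]` is a Cohen–Macaulay normal domain. -/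
theorem stmt9 (k : Type*) [Field k] [IsAlgClosed k]
    (A : Type*) [CommRing A] [IsDomain A] [IsNoetherianRing A] [IsLocalRing A]
    [Algebra k A] [IsIntegrallyClosed A]
    (hdim : ringKrullDim A = 2)
    (r : ℕ) (I : Fin r → Ideal A)
    (hprim : ∀ i, ∃ n : ℕ, IsLocalRing.maximalIdeal A ^ n ≤ I i)
    (hrees : ∀ i, IsCMNormalDomain (reesAlgebra (I i))) :
    IsCMNormalDomain (multiReesAlgebra I) := by
  have : Infinite k := inferInstance
  exact MR.main k hdim r I hprim hrees
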